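/- There exists a positive integer N such that for every non-Brjuno number α ∈ Irr_N, the forward orbit of the critical point of P_α accumulates at the fixed point 0; that is, 0 is a cluster point of the sequence (P_α^{∘n}(cp_α))_{n≥1}, where cp_α = −e^{2πiα}/2. -/

import Mathlib

open MeasureTheory Filter

/-- The quadratic polynomial `P_α(z) = e^{2πiα} z + z²`. -/
noncomputable def Pa (α : ℝ) (z : ℂ) : ℂ :=
  Complex.exp (2 * Real.pi * Complex.I * α) * z + z ^ 2

/-- The critical point `cp_α = -e^{2πiα}/2` of `P_α`. -/
noncomputable def cpa (α : ℝ) : ℂ := -Complex.exp (2 * Real.pi * Complex.I * α) / 2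

/-- The post-critical set of `P_α`: the closure of the forward orbit of the critical point. -/
noncomputable def postCritical (α : ℝ) : Set ℂ :=
  closure {w : ℂ | ∃ n : ℕ, 1 ≤ n ∧ (Pa α)^[n] (cpa α) = w}

/-- The Gauss map orbit of `α`: `x₀ = α`, `x_{n+1} = {1/x_n}`. -/
noncomputable def gaussIter (α : ℝ) : ℕ → ℝ
  | 0 => α
  | n + 1 => Int.fract (1 / gaussIter α n)

/-- `cfa α n` is the partial quotient `a_{n+1}` of the regular continued fraction of `α`. -/
noncomputable def cfa (α : ℝ) (n : ℕ) : ℤ := ⌊1 / gaussIter α n⌋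

/-- `cfq α n = qₙ`, the denominator of the `n`-th convergent of the regular continued
fraction of `α`: `q₀ = 1`, `q₁ = a₁`, `q_{n+1} = a_{n+1} qₙ + q_{n-1}`. -/
noncomputable def cfq (α : ℝ) : ℕ → ℤ
  | 0 => 1
  | 1 => cfa α 0
  | n + 2 => cfa α (n + 1) * cfq α (n + 1) + cfq α n

/-- `α` is a Brjuno number if `∑ (log q_{n+1})/qₙ` converges. -/
def IsBrjuno (α : ℝ) : Prop :=
  Summable fun n : ℕ => Real.log ((cfq α (n + 1) : ℝ)) / ((cfq α n : ℝ))

/-- `Irr_N`: irrational numbers in `(0,1)` whose partial quotients are all at least `N`. -/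
def IrrN (N : ℕ) : Set ℝ :=
  {α | α ∈ Set.Ioo (0 : ℝ) 1 ∧ Irrational α ∧ ∀ n : ℕ, (N : ℤ) ≤ cfa α n}

/-!
This is Yoccoz's renormalisation by inverse sectors, carried out for an arbitrary critical orbit
that stays away from `0`. Call a holomorphic map of the unit disc a near-rotation of angle `α` if
it is `e ^ (2πiα) z` up to `‖z‖ ^ 2 / 20`, and let `ρ` be a stability radius for `α` if no orbit of
such a map leaves the disc when it starts within `ρ` of `0`.

If the critical orbit of `P_α` does not accumulate at `0`, then perturbing `P_α` produces a
stability radius for `α`. If `α` is small and has the stability radius `ρ`, then the fractional part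
of `1 / α` has the stability radius `(ρ / (4000 α)) ^ (1 / α)`: given, up to complex conjugation, a
near-rotation of that angle, glue the two sides of a sector of the rotation flow of period `1 / α`
by its lift to the universal cover of the punctured disc. The time-one map of the glued flow is a
near-rotation of angle `α` whose return map to the sector is the given one. Along the Gauss orbit
of `α` all radii are at most `1`, and the logarithms of the recursion telescope to a bound for the
Brjuno sum.
-/

section ContinuedFractions

variable {N : ℕ} {α : ℝ}

/-- `gaussProd α n = x₀ x₁ ⋯ x_{n-1}`, where `xᵢ` is the Gauss map orbit of `α`; this is the
usual `β_{n-1} = |q_{n-1} α - p_{n-1}|`. -/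
noncomputable def gaussProd (α : ℝ) (n : ℕ) : ℝ := ∏ i ∈ Finset.range n, gaussIter α i

theorem gaussProd_succ (α : ℝ) (n : ℕ) : gaussProd α (n + 1) = gaussProd α n * gaussIter α n :=
  Finset.prod_range_succ _ _

theorem le_one_div_gaussIter (h : α ∈ IrrN N) (n : ℕ) : (N : ℝ) ≤ 1 / gaussIter α n := by
  exact_mod_cast Int.le_floor.1 (h.2.2 n)

theorem gaussIter_pos [NeZero N] (h : α ∈ IrrN N) (n : ℕ) : 0 < gaussIter α n :=
  one_div_pos.1 ((Nat.cast_pos.2 (NeZero.pos N)).trans_le (le_one_div_gaussIter h n))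

theorem gaussIter_le_one_div [NeZero N] (h : α ∈ IrrN N) (n : ℕ) : gaussIter α n ≤ 1 / N :=
  (le_one_div (gaussIter_pos h n) (Nat.cast_pos.2 (NeZero.pos N))).2 (le_one_div_gaussIter h n)

theorem gaussProd_pos [NeZero N] (h : α ∈ IrrN N) (n : ℕ) : 0 < gaussProd α n :=
  Finset.prod_pos fun i _ => gaussIter_pos h i

theorem gaussProd_le_pow [NeZero N] (h : α ∈ IrrN N) (n : ℕ) : gaussProd α n ≤ (1 / N) ^ n := by
  calc gaussProd α n ≤ ∏ _i ∈ Finset.range n, (1 / N : ℝ) :=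
        Finset.prod_le_prod (fun i _ => (gaussIter_pos h i).le) fun i _ => gaussIter_le_one_div h i
    _ = (1 / N) ^ n := by rw [Finset.prod_const, Finset.card_range]

theorem gaussIter_mul_cfa_add [NeZero N] (h : α ∈ IrrN N) (n : ℕ) :
    gaussIter α n * (cfa α n + gaussIter α (n + 1)) = 1 := by
  have : (cfa α n + gaussIter α (n + 1) : ℝ) = 1 / gaussIter α n := Int.floor_add_fract _
  rw [this, mul_one_div_cancel (gaussIter_pos h n).ne']

theorem cfq_add_two (α : ℝ) (n : ℕ) :
    (cfq α (n + 2) : ℝ) = cfa α (n + 1) * cfq α (n + 1) + cfq α n := by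
  simp only [cfq, Int.cast_add, Int.cast_mul]

theorem cfq_pos_and_mul_le [NeZero N] (h : α ∈ IrrN N) (n : ℕ) :
    0 < cfq α n ∧ N * cfq α n ≤ cfq α (n + 1) := by
  induction n with
  | zero => simpa only [cfq, zero_lt_one, mul_one, true_and] using h.2.2 0
  | succ n ih =>
    have hN : (0 : ℤ) < N := Nat.cast_pos.2 (NeZero.pos N)
    have hpos : 0 < cfq α (n + 1) := (mul_pos hN ih.1).trans_le ih.2
    exact ⟨hpos, (mul_le_mul_of_nonneg_right (h.2.2 (n + 1)) hpos.le).trans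
      (le_add_of_nonneg_right ih.1.le)⟩

theorem cfq_pos [NeZero N] (h : α ∈ IrrN N) (n : ℕ) : (0 : ℝ) < cfq α n := by
  exact_mod_cast (cfq_pos_and_mul_le h n).1

theorem mul_cfq_le_cfq_succ [NeZero N] (h : α ∈ IrrN N) (n : ℕ) :
    (N * cfq α n : ℝ) ≤ cfq α (n + 1) := by
  exact_mod_cast (cfq_pos_and_mul_le h n).2

theorem pow_le_cfq [NeZero N] (h : α ∈ IrrN N) (n : ℕ) : (N : ℝ) ^ n ≤ cfq α n := by
  induction n with
  | zero => simp [cfq]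
  | succ n ih =>
    rw [pow_succ']
    exact (mul_le_mul_of_nonneg_left ih (Nat.cast_nonneg N)).trans (mul_cfq_le_cfq_succ h n)

theorem cfq_mul_gaussProd_add [NeZero N] (h : α ∈ IrrN N) (n : ℕ) :
    cfq α (n + 1) * gaussProd α (n + 1) + cfq α n * gaussProd α (n + 2) = 1 := by
  induction n with
  | zero =>
    simp only [gaussProd, Finset.prod_range_succ, Finset.range_zero, Finset.prod_empty, cfq]
    linear_combination gaussIter_mul_cfa_add h 0
  | succ n ih =>
    rw [gaussProd_succ α (n + 1)] at ih
    rw [cfq_add_two, gaussProd_succ α (n + 2), gaussProd_succ α (n + 1)]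
    linear_combination ih +
      gaussProd α (n + 1) * cfq α (n + 1) * gaussIter_mul_cfa_add h (n + 1)

theorem one_div_cfq_le [NeZero N] (h : α ∈ IrrN N) (n : ℕ) :
    1 / (cfq α n : ℝ) ≤ 2 * gaussProd α n := by
  rw [div_le_iff₀ (cfq_pos h n)]
  cases n with
  | zero => simp [gaussProd, cfq]
  | succ n =>
    have hN : (1 : ℝ) ≤ N := by exact_mod_cast NeZero.one_le
    have hx : gaussIter α (n + 1) ≤ 1 :=
      (gaussIter_le_one_div h (n + 1)).trans (div_le_one_of_le₀ hN (by positivity))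
    have hq : (cfq α n : ℝ) ≤ cfq α (n + 1) :=
      (le_mul_of_one_le_left (cfq_pos h n).le hN).trans (mul_cfq_le_cfq_succ h n)
    have hprod : cfq α n * gaussProd α (n + 2) ≤ cfq α (n + 1) * gaussProd α (n + 1) := by
      rw [gaussProd_succ α (n + 1)]
      have hp := (gaussProd_pos h (n + 1)).le
      exact mul_le_mul hq (mul_le_of_le_one_right hp hx)
        (mul_nonneg hp (gaussIter_pos h (n + 1)).le) (cfq_pos h (n + 1)).le
    linarith [cfq_mul_gaussProd_add h n]

theorem cfa_le_one_div_gaussIter (α : ℝ) (n : ℕ) : (cfa α n : ℝ) ≤ 1 / gaussIter α n :=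
  Int.floor_le _

theorem cfq_succ_le [NeZero N] (h : α ∈ IrrN N) (n : ℕ) :
    (cfq α (n + 1) : ℝ) ≤ 2 * (1 / gaussIter α n) * cfq α n := by
  have hN : (1 : ℝ) ≤ N := by exact_mod_cast NeZero.one_le
  have hinv := hN.trans (le_one_div_gaussIter h n)
  have hfloor := cfa_le_one_div_gaussIter α n
  cases n with
  | zero =>
    simp only [cfq, Int.cast_one] at hfloor ⊢
    linarith
  | succ n =>
    have hq : (cfq α n : ℝ) ≤ cfq α (n + 1) :=
      (le_mul_of_one_le_left (cfq_pos h n).le hN).trans (mul_cfq_le_cfq_succ h n)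
    have hpos := cfq_pos h (n + 1)
    calc (cfq α (n + 2) : ℝ)
        = cfa α (n + 1) * cfq α (n + 1) + cfq α n := cfq_add_two α n
      _ ≤ 1 / gaussIter α (n + 1) * cfq α (n + 1)
          + 1 / gaussIter α (n + 1) * cfq α (n + 1) :=
        add_le_add (mul_le_mul_of_nonneg_right hfloor hpos.le)
          (hq.trans (le_mul_of_one_le_left hpos.le hinv))
      _ = 2 * (1 / gaussIter α (n + 1)) * cfq α (n + 1) := by ring

theorem log_div_self_le {x : ℝ} (hx : 0 < x) : Real.log x / x ≤ 2 / √x := by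
  have hs : 0 < √x := Real.sqrt_pos.2 hx
  have hlog : Real.log x / 2 ≤ √x :=
    (Real.log_sqrt hx.le).symm.trans_le (Real.log_le_self hs.le)
  calc Real.log x / x = 2 * (Real.log x / 2) / (√x * √x) := by
        rw [Real.mul_self_sqrt hx.le]; ring
    _ ≤ 2 * √x / (√x * √x) := by gcongr
    _ = 2 / √x := by field_simp

theorem summable_log_cfq_div_cfq (h : α ∈ IrrN 2) :
    Summable fun n => Real.log (cfq α n) / cfq α n := by
  have hgeom : Summable fun n : ℕ => 2 * (1 / √2 : ℝ) ^ n := by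
    refine (summable_geometric_of_lt_one (by positivity) ?_).mul_left 2
    rw [div_lt_one (by positivity)]
    exact Real.lt_sqrt_of_sq_lt (by norm_num)
  refine Summable.of_nonneg_of_le (fun n => ?_) (fun n => ?_) hgeom
  · have hq : (1 : ℝ) ≤ cfq α n := (one_le_pow₀ (by norm_num)).trans (pow_le_cfq h n)
    exact div_nonneg (Real.log_nonneg hq) (by positivity)
  · have hsqrt : (√2 : ℝ) ^ n ≤ √(cfq α n) := by
      refine Real.le_sqrt_of_sq_le ?_
      rw [pow_right_comm, Real.sq_sqrt zero_le_two]
      exact pow_le_cfq h n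
    calc Real.log (cfq α n) / cfq α n ≤ 2 / √(cfq α n) := log_div_self_le (cfq_pos h n)
      _ ≤ 2 / √2 ^ n := by gcongr
      _ = 2 * (1 / √2) ^ n := by rw [one_div, inv_pow, div_eq_mul_inv]

theorem summable_gaussProd (h : α ∈ IrrN 2) : Summable (gaussProd α) :=
  Summable.of_nonneg_of_le (fun n => (gaussProd_pos h n).le) (gaussProd_le_pow h)
    (by simpa only [Nat.cast_ofNat] using summable_geometric_two)

theorem log_one_div_gaussIter_nonneg [NeZero N] (h : α ∈ IrrN N) (n : ℕ) :
    0 ≤ Real.log (1 / gaussIter α n) :=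
  Real.log_nonneg ((Nat.one_le_cast.2 NeZero.one_le).trans (le_one_div_gaussIter h n))

theorem isBrjuno_of_summable (h : α ∈ IrrN 2)
    (hs : Summable fun n => gaussProd α n * Real.log (1 / gaussIter α n)) : IsBrjuno α := by
  refine Summable.of_nonneg_of_le (fun n => ?_) (fun n => ?_)
    (((hs.mul_left 2).add ((summable_gaussProd h).mul_left (2 * Real.log 2))).add
      (summable_log_cfq_div_cfq h))
  · have hq : (1 : ℝ) ≤ cfq α (n + 1) := (one_le_pow₀ (by norm_num)).trans (pow_le_cfq h _)
    exact div_nonneg (Real.log_nonneg hq) (cfq_pos h n).le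
  · have hx := gaussIter_pos h n
    have hq := cfq_pos h n
    have hlog : Real.log (cfq α (n + 1)) ≤
        Real.log 2 + Real.log (1 / gaussIter α n) + Real.log (cfq α n) := by
      rw [← Real.log_mul two_ne_zero (by positivity), ← Real.log_mul (by positivity) hq.ne']
      exact Real.log_le_log (cfq_pos h (n + 1)) (cfq_succ_le h n)
    have hlog₀ : 0 ≤ Real.log 2 + Real.log (1 / gaussIter α n) :=
      add_nonneg (Real.log_nonneg one_le_two) (log_one_div_gaussIter_nonneg h n)
    calc Real.log (cfq α (n + 1)) / cfq α n
        ≤ (Real.log 2 + Real.log (1 / gaussIter α n) + Real.log (cfq α n)) / cfq α n := by gcongr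
      _ = (Real.log 2 + Real.log (1 / gaussIter α n)) * (1 / cfq α n)
          + Real.log (cfq α n) / cfq α n := by ring
      _ ≤ (Real.log 2 + Real.log (1 / gaussIter α n)) * (2 * gaussProd α n)
          + Real.log (cfq α n) / cfq α n := by
        gcongr
        exact one_div_cfq_le h n
      _ = _ := by ring

theorem sum_gaussProd_mul_log_eq [NeZero N] (h : α ∈ IrrN N) {C : ℝ} (hC : 0 < C) {r : ℕ → ℝ}
    (hr : ∀ n, 0 < r n)
    (hrec : ∀ n, r (n + 1) = (r n / (C * gaussIter α n)) ^ (1 / gaussIter α n)) (n : ℕ) :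
    ∑ j ∈ Finset.range n, gaussProd α j * (Real.log (1 / gaussIter α j) - Real.log C) =
      gaussProd α n * Real.log (r n) - Real.log (r 0) := by
  induction n with
  | zero => simp [gaussProd]
  | succ n ih =>
    have hx := gaussIter_pos h n
    have hlog : gaussIter α n * Real.log (r (n + 1)) =
        Real.log (r n) - Real.log C + Real.log (1 / gaussIter α n) := by
      rw [hrec, Real.log_rpow (div_pos (hr n) (mul_pos hC hx)),
        Real.log_div (hr n).ne' (mul_pos hC hx).ne', Real.log_mul hC.ne' hx.ne', one_div,
        Real.log_inv]
      field_simp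
      ring
    rw [Finset.sum_range_succ, ih, gaussProd_succ]
    linear_combination -gaussProd α n * hlog

theorem isBrjuno_of_radius_recursion (h : α ∈ IrrN 2) {C : ℝ} (hC : 1 ≤ C) {r : ℕ → ℝ}
    (hr : ∀ n, 0 < r n) (hr₁ : ∀ n, r n ≤ 1)
    (hrec : ∀ n, r (n + 1) = (r n / (C * gaussIter α n)) ^ (1 / gaussIter α n)) :
    IsBrjuno α := by
  have hpos (n : ℕ) : 0 ≤ gaussProd α n := (gaussProd_pos h n).le
  refine isBrjuno_of_summable h (summable_of_sum_range_le (c := -Real.log (r 0) +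
      (∑' j, gaussProd α j) * Real.log C)
    (fun n => mul_nonneg (hpos n) (log_one_div_gaussIter_nonneg h n)) fun n => ?_)
  have hsum := sum_gaussProd_mul_log_eq h (zero_lt_one.trans_le hC) hr hrec n
  simp only [mul_sub, Finset.sum_sub_distrib, ← Finset.sum_mul] at hsum
  have hlast : gaussProd α n * Real.log (r n) ≤ 0 :=
    mul_nonpos_of_nonneg_of_nonpos (hpos n) (Real.log_nonpos (hr n).le (hr₁ n))
  have htail : (∑ j ∈ Finset.range n, gaussProd α j) * Real.log C ≤
      (∑' j, gaussProd α j) * Real.log C :=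
    mul_le_mul_of_nonneg_right ((summable_gaussProd h).sum_le_tsum _ fun j _ => hpos j)
      (Real.log_nonneg hC)
  linarith

end ContinuedFractions

section ComplexAnalysis

open Metric Set
open scoped NNReal Topology

theorem exists_pos_forall_lt_le {f : ℕ → ℝ} {N : ℕ} (hf : ∀ k < N, 0 < f k) :
    ∃ r > 0, r ≤ 1 ∧ ∀ k < N, r ≤ f k := by
  have h : ∀ᶠ r : ℝ in 𝓝 0, r ≤ 1 ∧ ∀ k ∈ Iio N, r ≤ f k :=
    (eventually_le_nhds one_pos).and <|
      (finite_Iio N).eventually_all.2 fun k hk ↦ eventually_le_nhds (hf k hk)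
  obtain ⟨r, hr, hr₀⟩ := ((h.filter_mono nhdsWithin_le_nhds).and self_mem_nhdsWithin :
    ∀ᶠ r : ℝ in 𝓝[>] 0, _).exists
  exact ⟨r, hr₀, hr⟩

variable {F : Type*} [NormedAddCommGroup F] [NormedSpace ℂ F]

/-- The functions holomorphic on `U` and bounded there by `r`. -/
def boundedHolomorphicOn (F : Type*) [NormedAddCommGroup F] [NormedSpace ℂ F] (U : Set ℂ) (r : ℝ) :
    Set (ℂ → F) :=
  {φ | DifferentiableOn ℂ φ U ∧ ∀ x ∈ U, ‖φ x‖ ≤ r}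

theorem exists_norm_iterate_sub_le_of_contracting [CompleteSpace F] {U : Set ℂ} {r K : ℝ}
    (hr : 0 ≤ r) (hK₀ : 0 ≤ K) (hK : K < 1) {T : (ℂ → F) → ℂ → F}
    (hT : MapsTo T (boundedHolomorphicOn F U r) (boundedHolomorphicOn F U r))
    (hTK : ∀ φ ∈ boundedHolomorphicOn F U r, ∀ ψ ∈ boundedHolomorphicOn F U r, ∀ D ≥ 0,
      (∀ x ∈ U, ‖φ x - ψ x‖ ≤ D) → ∀ x ∈ U, ‖T φ x - T ψ x‖ ≤ K * D) :
    ∃ φ : ℂ → F, ∀ x ∈ U, ∀ n, ‖T^[n] 0 x - φ x‖ ≤ r / (1 - K) * K ^ n := by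
  have h₀ : (0 : ℂ → F) ∈ boundedHolomorphicOn F U r :=
    ⟨differentiableOn_const 0, fun x _ ↦ by simpa using hr⟩
  have hstep : ∀ n, ∀ x ∈ U, ‖T^[n] 0 x - T^[n + 1] 0 x‖ ≤ r * K ^ n := by
    intro n
    induction n with
    | zero => simpa using (hT h₀).2
    | succ n ih =>
      rw [Function.iterate_succ_apply' T (n + 1), pow_succ', mul_left_comm]
      conv in T^[n + 1] 0 => rw [Function.iterate_succ_apply' T n]
      exact hTK _ (hT.iterate n h₀) _ (hT.iterate (n + 1) h₀) _ (by positivity) ih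
  have hlim : ∀ x ∈ U, ∃ l, Tendsto (fun n ↦ T^[n] 0 x) atTop (𝓝 l) := fun x hx ↦
    cauchySeq_tendsto_of_complete (cauchySeq_of_le_geometric K r hK fun n ↦ by
      rw [dist_eq_norm]
      exact hstep n x hx)
  choose! φ hφ using hlim
  refine ⟨φ, fun x hx n ↦ ?_⟩
  have := dist_le_of_le_geometric_of_tendsto K r hK
    (fun n ↦ (dist_eq_norm _ _).trans_le (hstep n x hx)) (hφ x hx) n
  rwa [dist_eq_norm, mul_div_right_comm] at this

theorem exists_fixedPoint_boundedHolomorphicOn [CompleteSpace F] {U : Set ℂ} (hU : IsOpen U)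
    {r K : ℝ} (hr : 0 ≤ r) (hK₀ : 0 ≤ K) (hK : K < 1) {T : (ℂ → F) → ℂ → F}
    (hT : MapsTo T (boundedHolomorphicOn F U r) (boundedHolomorphicOn F U r))
    (hTK : ∀ φ ∈ boundedHolomorphicOn F U r, ∀ ψ ∈ boundedHolomorphicOn F U r, ∀ D ≥ 0,
      (∀ x ∈ U, ‖φ x - ψ x‖ ≤ D) → ∀ x ∈ U, ‖T φ x - T ψ x‖ ≤ K * D) :
    ∃ φ ∈ boundedHolomorphicOn F U r, EqOn (T φ) φ U := by
  obtain ⟨φ, hφ⟩ := exists_norm_iterate_sub_le_of_contracting hr hK₀ hK hT hTK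
  have hmem : ∀ n, T^[n] 0 ∈ boundedHolomorphicOn F U r := fun n ↦
    hT.iterate n ⟨differentiableOn_const 0, fun x _ ↦ by simpa using hr⟩
  have hgeom : Tendsto (fun n : ℕ ↦ r / (1 - K) * K ^ n) atTop (𝓝 0) := by
    simpa using (tendsto_pow_atTop_nhds_zero_of_lt_one hK₀ hK).const_mul (r / (1 - K))
  have hunif : TendstoUniformlyOn (fun n ↦ T^[n] 0) φ atTop U := by
    rw [Metric.tendstoUniformlyOn_iff]
    intro ε hε
    filter_upwards [hgeom.eventually (gt_mem_nhds hε)] with n hn x hx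
    rw [dist_comm, dist_eq_norm]
    exact (hφ x hx n).trans_lt hn
  have hφmem : φ ∈ boundedHolomorphicOn F U r :=
    ⟨hunif.tendstoLocallyUniformlyOn.differentiableOn (.of_forall fun n ↦ (hmem n).1) hU,
      fun x hx ↦ le_of_tendsto (hunif.tendsto_at hx).norm (.of_forall fun n ↦ (hmem n).2 x hx)⟩
  refine ⟨φ, hφmem, fun x hx ↦ tendsto_nhds_unique ?_
    ((hunif.tendsto_at hx).comp (tendsto_add_atTop_nat 1))⟩
  rw [tendsto_iff_norm_sub_tendsto_zero]
  refine squeeze_zero (fun n ↦ norm_nonneg _) (fun n ↦ ?_) (by simpa using hgeom.const_mul K)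
  rw [Function.comp_apply, Function.iterate_succ_apply']
  have : 0 < 1 - K := sub_pos.2 hK
  exact hTK _ (hmem n) _ hφmem _ (by positivity) (fun x hx ↦ hφ x hx n) x hx

theorem exists_differentiableOn_fixedPoint [CompleteSpace F] {U : Set ℂ} (hU : IsOpen U)
    {h : ℂ → F → F} {r : ℝ} (hr : 0 ≤ r) {K : ℝ≥0} (hK : K < 1)
    (hm : ∀ x ∈ U, MapsTo (h x) (closedBall 0 r) (closedBall 0 r))
    (hl : ∀ x ∈ U, LipschitzOnWith K (h x) (closedBall 0 r))
    (hd : ∀ y : ℂ → F, DifferentiableOn ℂ y U → (∀ x ∈ U, ‖y x‖ ≤ r) →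
      DifferentiableOn ℂ (fun x ↦ h x (y x)) U) :
    ∃ y : ℂ → F, DifferentiableOn ℂ y U ∧ ∀ x ∈ U, ‖y x‖ ≤ r ∧ h x (y x) = y x := by
  obtain ⟨y, hy, hfix⟩ := exists_fixedPoint_boundedHolomorphicOn hU hr K.2 (NNReal.coe_lt_one.2 hK)
    (T := fun y x ↦ h x (y x))
    (fun y hy ↦ ⟨hd y hy.1 hy.2, fun x hx ↦
      mem_closedBall_zero_iff.1 (hm x hx (mem_closedBall_zero_iff.2 (hy.2 x hx)))⟩)
    (fun y hy z hz D _ hD x hx ↦ by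
      have := (hl x hx).norm_sub_le (mem_closedBall_zero_iff.2 (hy.2 x hx))
        (mem_closedBall_zero_iff.2 (hz.2 x hx))
      exact this.trans (mul_le_mul_of_nonneg_left (hD x hx) K.2))
  exact ⟨y, hy.1, fun x hx ↦ ⟨hy.2 x hx, hfix hx⟩⟩

theorem integral_add_mul_I_eq {E : Type*} [NormedAddCommGroup E] [NormedSpace ℂ E] {h : ℂ → E}
    {a b : ℝ} (hab : a ≤ b) (hh : DifferentiableOn ℂ h {z | z.im ∈ Icc a b}) {k : ℝ → ℝ}
    (hk : Integrable k) (hk_top : Tendsto k atTop (𝓝 0)) (hk_bot : Tendsto k atBot (𝓝 0))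
    (hhk : ∀ z : ℂ, z.im ∈ Icc a b → ‖h z‖ ≤ k z.re) :
    ∫ x : ℝ, h (x + a * Complex.I) = ∫ x : ℝ, h (x + b * Complex.I) := by
  have him : ∀ x y : ℝ, (x + y * Complex.I : ℂ).im = y := fun x y ↦ by simp
  have hre : ∀ x y : ℝ, (x + y * Complex.I : ℂ).re = x := fun x y ↦ by simp
  have hint : ∀ y ∈ Icc a b, Integrable fun x : ℝ ↦ h (x + y * Complex.I) := fun y hy ↦ by
    refine hk.mono' (hh.continuousOn.comp_continuous (by fun_prop) fun x ↦ ?_).aestronglyMeasurable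
      (.of_forall fun x ↦ (hhk _ ?_).trans_eq (by rw [hre]))
    all_goals simpa only [mem_ofPred_eq, him]
  have hside : ∀ {u : ℕ → ℝ}, Tendsto (fun n ↦ k (u n)) atTop (𝓝 0) →
      Tendsto (fun n ↦ Complex.I • ∫ y in a..b, h (u n + y * Complex.I)) atTop (𝓝 0) := by
    intro u hu
    rw [← smul_zero Complex.I]
    refine (squeeze_zero_norm (fun n ↦ intervalIntegral.norm_integral_le_of_norm_le_const
      (C := k (u n)) fun y hy ↦ ?_) (by simpa using hu.mul_const |b - a|)).const_smul _
    rw [uIoc_of_le hab] at hy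
    simpa only [hre] using hhk (u n + y * Complex.I)
      (by simpa only [him] using Ioc_subset_Icc_self hy)
  have hrect : ∀ n : ℕ, (∫ x in (-n : ℝ)..n, h (x + a * Complex.I)) -
      (∫ x in (-n : ℝ)..n, h (x + b * Complex.I)) =
      Complex.I • (∫ y in a..b, h ((-n : ℝ) + y * Complex.I)) -
        Complex.I • ∫ y in a..b, h ((n : ℝ) + y * Complex.I) := fun n ↦ by
    have := Complex.integral_boundary_rect_eq_zero_of_differentiableOn h ⟨-n, a⟩ ⟨n, b⟩
      (hh.mono fun z hz ↦ uIcc_of_le hab ▸ hz.2)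
    rw [← sub_eq_zero, ← this]
    abel
  have hn_top : Tendsto (fun n : ℕ ↦ (n : ℝ)) atTop atTop := tendsto_natCast_atTop_atTop
  have hn_bot : Tendsto (fun n : ℕ ↦ -(n : ℝ)) atTop atBot := tendsto_neg_atTop_atBot.comp hn_top
  have hlim := (intervalIntegral_tendsto_integral (hint a (left_mem_Icc.2 hab)) hn_bot hn_top).sub
    (intervalIntegral_tendsto_integral (hint b (right_mem_Icc.2 hab)) hn_bot hn_top)
  have hzero := (hside (hk_bot.comp hn_bot)).sub (hside (hk_top.comp hn_top))
  rw [sub_zero] at hzero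
  exact sub_eq_zero.1 (tendsto_nhds_unique hlim (hzero.congr fun n ↦ (hrect n).symm))

theorem exists_differentiableOn_exp_eq {c : ℂ} {r : ℝ} {g : ℂ → ℂ}
    (hg : DifferentiableOn ℂ g (ball c r)) (hg₀ : ∀ z ∈ ball c r, g z ≠ 0) :
    ∃ L : ℂ → ℂ, DifferentiableOn ℂ L (ball c r) ∧ ∀ z ∈ ball c r, Complex.exp (L z) = g z := by
  obtain ⟨L, hLc, hL⟩ := ((hg.deriv isOpen_ball).div hg hg₀).isExactOn_ball.with_val_at c
    (Complex.log (g c))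
  refine ⟨L, fun z hz ↦ (hL z hz).differentiableAt.differentiableWithinAt, fun z hz ↦ ?_⟩
  have hc : c ∈ ball c r := mem_ball_self (pos_of_mem_ball hz)
  have hD : ∀ w ∈ ball c r, HasDerivAt (fun z ↦ Complex.exp (-L z) * g z) 0 w := fun w hw ↦ by
    refine ((hL w hw).neg.cexp.mul
      (hg.differentiableAt (isOpen_ball.mem_nhds hw)).hasDerivAt).congr_deriv ?_
    have := hg₀ w hw
    simp only [Pi.neg_apply, Pi.div_apply]
    field_simp
    ring
  have hconst : Complex.exp (-L z) * g z = Complex.exp (-L c) * g c :=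
    isOpen_ball.is_const_of_deriv_eq_zero (convex_ball c r).isPreconnected
      (fun w hw ↦ (hD w hw).differentiableAt.differentiableWithinAt)
      (fun w hw ↦ (hD w hw).deriv) hz hc
  rw [hLc, Complex.exp_neg, Complex.exp_neg, Complex.exp_log (hg₀ c hc),
    inv_mul_cancel₀ (hg₀ c hc), inv_mul_eq_one₀ (Complex.exp_ne_zero _)] at hconst
  exact hconst

theorem exists_differentiableOn_sq_eq {c : ℂ} {r : ℝ} {g : ℂ → ℂ}
    (hg : DifferentiableOn ℂ g (ball c r)) (hg₀ : ∀ z ∈ ball c r, g z ≠ 0) {t₁ s₁ : ℂ}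
    (ht₁ : t₁ ∈ ball c r) (hs₁ : s₁ ^ 2 = g t₁) :
    ∃ s : ℂ → ℂ, DifferentiableOn ℂ s (ball c r) ∧ (∀ z ∈ ball c r, s z ^ 2 = g z) ∧
      s t₁ = s₁ := by
  obtain ⟨L, hL, hLg⟩ := exists_differentiableOn_exp_eq hg hg₀
  have hd : DifferentiableOn ℂ (fun z ↦ Complex.exp (L z / 2)) (ball c r) := by fun_prop
  have hsq : ∀ z ∈ ball c r, Complex.exp (L z / 2) ^ 2 = g z := fun z hz ↦ by
    rw [← hLg z hz, ← Complex.exp_nat_mul]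
    congr 1
    push_cast
    ring
  rcases sq_eq_sq_iff_eq_or_eq_neg.1 ((hsq t₁ ht₁).trans hs₁.symm) with h | h
  · exact ⟨_, hd, hsq, h⟩
  · exact ⟨_, hd.neg, fun z hz ↦ (neg_sq _).trans (hsq z hz), neg_eq_iff_eq_neg.2 h⟩

theorem norm_image_sub_le_div_mul_of_norm_le {f : ℂ → F} {c : ℂ} {R d M : ℝ} (hd : 0 < d)
    (hf : DiffContOnCl ℂ f (ball c (R + d))) (hM : ∀ z ∈ closedBall c (R + d), ‖f z‖ ≤ M) {x y : ℂ}
    (hx : x ∈ closedBall c R) (hy : y ∈ closedBall c R) : ‖f x - f y‖ ≤ M / d * ‖x - y‖ := by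
  have hsub : ∀ z ∈ closedBall c R, dist z c + d ≤ R + d := fun z hz ↦ by gcongr; exact hz
  refine (convex_closedBall c R).norm_image_sub_le_of_norm_deriv_le (𝕜 := ℂ) (fun z hz ↦ ?_)
    (fun z hz ↦ ?_) hy hx
  · exact hf.differentiableAt isOpen_ball (mem_ball.2 (by linarith [hsub z hz]))
  · exact Complex.norm_deriv_le_of_forall_mem_sphere_norm_le hd
      (hf.mono (ball_subset_ball' (by linarith [hsub z hz])))
      fun w hw ↦ hM w (closedBall_subset_closedBall' (by linarith [hsub z hz])
        (sphere_subset_closedBall hw))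

-- Borel–Carathéodory for a logarithm of `u`.
theorem norm_mul_div_sq_le_norm_of_ne_zero {u : ℂ → ℂ} {R A s : ℝ} (hR : 0 < R)
    (hu : DifferentiableOn ℂ u (ball 0 R)) (hu₀ : ∀ t ∈ ball 0 R, u t ≠ 0)
    (hA : ∀ t ∈ ball 0 R, ‖u t‖ ≤ A) (hs : 0 < s) (hsA : s < A) (hsu : s ≤ ‖u 0‖) {τ : ℂ}
    (hτ : ‖τ‖ ≤ R / 2) : ‖u 0‖ * (s / A) ^ 2 ≤ ‖u τ‖ := by
  have h₀ : (0 : ℂ) ∈ ball 0 R := mem_ball_self hR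
  have hτR : τ ∈ ball 0 R := by rw [mem_ball_zero_iff]; linarith
  have hA₀ : 0 < A := hs.trans hsA
  obtain ⟨L, hL, hLu⟩ := exists_differentiableOn_exp_eq hu hu₀
  have hexp : ∀ t ∈ ball 0 R, Real.exp (L t - L 0).re = ‖u t‖ / ‖u 0‖ := fun t ht ↦ by
    rw [← hLu t ht, ← hLu 0 h₀, Complex.norm_exp, Complex.norm_exp, Complex.sub_re, Real.exp_sub]
  have hM₀ : 0 < Real.log (A / s) := Real.log_pos ((one_lt_div hs).2 hsA)
  have hbc : ‖L τ - L 0‖ ≤ 2 * Real.log (A / s) * ‖τ‖ / (R - ‖τ‖) :=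
    Complex.borelCaratheodory_zero hM₀ (hL.sub_const _) (fun t ht ↦ by
      change (L t - L 0).re ≤ _
      rw [Real.le_log_iff_exp_le (div_pos hA₀ hs), hexp t ht]
      exact div_le_div₀ hA₀.le (hA t ht) hs hsu) hR hτR (sub_self _)
  have hnorm : ‖L τ - L 0‖ ≤ 2 * Real.log (A / s) := by
    refine hbc.trans ((div_le_iff₀ (by linarith)).2 ?_)
    gcongr
    linarith
  have hre : -(2 * Real.log (A / s)) ≤ (L τ - L 0).re :=
    (neg_le_neg hnorm).trans (neg_le_of_abs_le (Complex.abs_re_le_norm _))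
  have hsq : Real.exp (-(2 * Real.log (A / s))) = (s / A) ^ 2 := by
    rw [← mul_neg, ← Real.log_inv, inv_div, two_mul, Real.exp_add, Real.exp_log (by positivity), sq]
  rw [← Real.exp_le_exp, hsq, hexp τ hτR, le_div_iff₀ (hs.trans_le hsu)] at hre
  linarith

theorem norm_sub_mul_le_of_hasDerivAt_zero {g : ℂ → ℂ} {r M : ℝ} {d : ℂ}
    (hg : DifferentiableOn ℂ g (ball 0 r)) (hg₀ : g 0 = 0) (hd : HasDerivAt g d 0)
    (hM : ∀ w ∈ ball (0 : ℂ) r, ‖g w‖ ≤ M) {w : ℂ} (hw : w ∈ ball 0 r) :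
    ‖g w - d * w‖ ≤ (M + ‖d‖ * r) * (‖w‖ / r) ^ 2 := by
  have hmaps : MapsTo (fun w ↦ g w - d * w) (ball 0 r)
      (closedBall (g 0 - d * 0) (M + ‖d‖ * r)) := fun x hx ↦ by
    rw [hg₀, mul_zero, sub_zero, mem_closedBall_zero_iff]
    refine (norm_sub_le _ _).trans (add_le_add (hM x hx) ?_)
    rw [norm_mul]
    gcongr
    exact (mem_ball_zero_iff.1 hx).le
  have hlittle : (fun w ↦ (g w - d * w) - (g 0 - d * 0)) =o[𝓝 0] fun w ↦ ‖w - 0‖ ^ 1 := by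
    simpa only [hg₀, mul_zero, sub_zero, smul_eq_mul, mul_comm _ d, pow_one] using
      hd.isLittleO.norm_right
  have := Complex.dist_le_mul_div_pow_of_mapsTo_ball_of_isLittleO (n := 1)
    (hg.sub (differentiableOn_id.const_mul d)) hmaps hlittle hw
  simpa [hg₀, dist_eq_norm] using this

theorem ball_subset_image_ball_of_norm_deriv_eq_one {g : ℂ → ℂ} {r : ℝ} {d : ℂ} (hr : 0 < r)
    (hr₁ : r ≤ 1) (hg : DifferentiableOn ℂ g (ball 0 r)) (hg₀ : g 0 = 0) (hd : HasDerivAt g d 0)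
    (hd₁ : ‖d‖ = 1) (hb : ∀ w ∈ ball (0 : ℂ) r, ‖g w‖ ≤ 3) :
    ball 0 (r ^ 2 / 32) ⊆ g '' ball 0 r := by
  have hs : 0 < r ^ 2 / 8 := by positivity
  have hsr : r ^ 2 / 8 < r := by nlinarith
  have hdc : DiffContOnCl ℂ g (ball 0 (r ^ 2 / 8)) :=
    hg.diffContOnCl_ball (closedBall_subset_ball hsr)
  have hsphere : ∀ w ∈ sphere (0 : ℂ) (r ^ 2 / 8), r ^ 2 / 16 ≤ ‖g w - g 0‖ := fun w hw ↦ by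
    rw [mem_sphere_zero_iff_norm] at hw
    have h1 := norm_sub_mul_le_of_hasDerivAt_zero hg hg₀ hd hb
      (mem_ball_zero_iff.2 (hw.trans_lt hsr))
    have h2 : (3 + ‖d‖ * r) * (‖w‖ / r) ^ 2 ≤ r ^ 2 / 16 := by
      rw [hd₁, hw, show (r ^ 2 / 8 / r) ^ 2 = r ^ 2 / 64 by field_simp; norm_num]
      nlinarith [sq_nonneg r]
    have h3 : ‖d * w‖ = r ^ 2 / 8 := by rw [norm_mul, hd₁, hw, one_mul]
    have h4 := norm_sub_norm_le (d * w) (g w)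
    rw [norm_sub_rev] at h4
    rw [hg₀, sub_zero]
    linarith
  have hne : ∃ᶠ z in 𝓝 (0 : ℂ), g z ≠ g 0 := by
    have hd₀ : d ≠ 0 := norm_pos_iff.1 (hd₁ ▸ one_pos)
    exact (hd.eventually_ne hd₀).frequently.filter_mono nhdsWithin_le_nhds
  have himg := hdc.ball_subset_image_closedBall hs hsphere hne
  rw [hg₀, div_div, show (16 : ℝ) * 2 = 32 by norm_num] at himg
  exact himg.trans (image_mono (closedBall_subset_ball hsr))

end ComplexAnalysis

section UniformStability

open Metric

/-- The multiplier `e^{2πiα}` of a fixed point of rotation number `α`. -/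
noncomputable def multiplier (α : ℝ) : ℂ := Complex.exp (2 * Real.pi * Complex.I * α)

theorem norm_multiplier (α : ℝ) : ‖multiplier α‖ = 1 := by
  rw [multiplier, show (2 * Real.pi * Complex.I * α : ℂ) = (2 * Real.pi * α : ℝ) * Complex.I by
    push_cast; ring, Complex.norm_exp_ofReal_mul_I]

theorem multiplier_ne_zero (α : ℝ) : multiplier α ≠ 0 := Complex.exp_ne_zero _

theorem conj_multiplier (α : ℝ) : (starRingEnd ℂ) (multiplier α) = multiplier (-α) := by
  rw [multiplier, multiplier, ← Complex.exp_conj]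
  simp [Complex.conj_ofNat]

/-- `f` is holomorphic on the unit disc and quadratically close there to the rotation of
multiplier `multiplier α`. -/
structure IsNearRotation (α : ℝ) (f : ℂ → ℂ) : Prop where
  differentiableOn : DifferentiableOn ℂ f (ball 0 1)
  norm_sub_le : ∀ z ∈ ball (0 : ℂ) 1, ‖f z - multiplier α * z‖ ≤ 1 / 20 * ‖z‖ ^ 2

theorem IsNearRotation.map_zero {α : ℝ} {f : ℂ → ℂ} (hf : IsNearRotation α f) : f 0 = 0 := by
  simpa using hf.norm_sub_le 0 (mem_ball_self one_pos)

theorem IsNearRotation.conj {α : ℝ} {f : ℂ → ℂ} (hf : IsNearRotation α f) :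
    IsNearRotation (-α) fun z ↦ (starRingEnd ℂ) (f ((starRingEnd ℂ) z)) where
  differentiableOn x hx := by
    have hx' : (starRingEnd ℂ) x ∈ ball (0 : ℂ) 1 := by simpa using hx
    have h := (hf.differentiableOn.differentiableAt (isOpen_ball.mem_nhds hx')).conj_conj
    rw [Complex.conj_conj] at h
    exact h.differentiableWithinAt
  norm_sub_le x hx := by
    rw [← conj_multiplier, ← Complex.norm_conj]
    simpa using hf.norm_sub_le _ (show (starRingEnd ℂ) x ∈ ball (0 : ℂ) 1 by simpa using hx)

/-- The disc of radius `ρ` never leaves the unit disc under iteration of any near-rotation of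
rotation number `α`. The radius is the same for the whole class, which is what makes the notion
renormalisable. -/
def UniformlyStable (α ρ : ℝ) : Prop :=
  ∀ f, IsNearRotation α f → ∀ z : ℂ, ‖z‖ < ρ → ∀ n : ℕ, f^[n] z ∈ ball (0 : ℂ) 1

theorem UniformlyStable.le_one {α ρ : ℝ} (h : UniformlyStable α ρ) : ρ ≤ 1 := by
  by_contra! hρ
  have hrot : IsNearRotation α (multiplier α * ·) := ⟨by fun_prop, fun z _ ↦ by simp⟩
  simpa using h _ hrot 1 (by simpa using hρ) 0

theorem UniformlyStable.of_neg {α ρ : ℝ} (h : UniformlyStable (-α) ρ) : UniformlyStable α ρ := by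
  intro f hf z hz n
  have hsemi : Function.Semiconj (starRingEnd ℂ) f
      fun z ↦ (starRingEnd ℂ) (f ((starRingEnd ℂ) z)) := fun z ↦ by simp
  have := h _ hf.conj ((starRingEnd ℂ) z) (by simpa using hz) n
  rw [← (hsemi.iterate_right n).eq] at this
  simpa using this

end UniformStability

section PerturbedQuadratic

open Metric

/-- The outer factor `y ↦ m y + τ E y` of the family `perturbedQuad`. -/
noncomputable def outerMap (E : ℂ → ℂ) (m τ y : ℂ) : ℂ := m * y + τ * E y

/-- A two-parameter family interpolating between the quadratic polynomial `m (z + b z²)`, at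
`τ = 0`, and the map `m z + E z`, at `(b, τ) = (0, 1)`. -/
noncomputable def perturbedQuad (E : ℂ → ℂ) (m b τ z : ℂ) : ℂ := outerMap E m τ (z + b * z ^ 2)

/-- The orbit of the critical value of `perturbedQuad`, the critical point being `-1/(2b)`. -/
noncomputable def critOrbit (E : ℂ → ℂ) (m b τ : ℂ) (n : ℕ) : ℂ :=
  (perturbedQuad E m b τ)^[n] (outerMap E m τ (-1 / (4 * b)))

/-- The admissible perturbations in the family `perturbedQuad`. -/
structure IsSmallPerturbation (E : ℂ → ℂ) : Prop where
  differentiableOn : DifferentiableOn ℂ E (ball 0 32)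
  norm_le : ∀ y ∈ ball (0 : ℂ) 32, ‖E y‖ ≤ 1 / 640 * ‖y‖ ^ 2

variable {E : ℂ → ℂ} {m b τ : ℂ}

namespace IsSmallPerturbation

theorem norm_sub_le (hE : IsSmallPerturbation E) {x y : ℂ} (hx : ‖x‖ ≤ 21) (hy : ‖y‖ ≤ 21) :
    ‖E x - E y‖ ≤ 107 / 500 * ‖x - y‖ := by
  have := norm_image_sub_le_div_mul_of_norm_le (c := 0) (R := 21) (d := 5) (M := 107 / 100)
    (by norm_num)
    (hE.differentiableOn.diffContOnCl_ball (closedBall_subset_ball (by norm_num)))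
    (fun z hz ↦ by
      rw [mem_closedBall_zero_iff] at hz
      have := hE.norm_le z (mem_ball_zero_iff.2 (by linarith))
      nlinarith [norm_nonneg z])
    (mem_closedBall_zero_iff.2 hx) (mem_closedBall_zero_iff.2 hy)
  linarith

theorem map_zero (hE : IsSmallPerturbation E) : E 0 = 0 := by
  simpa using hE.norm_le 0 (by simp)

theorem continuousAt (hE : IsSmallPerturbation E) {y : ℂ} (hy : ‖y‖ < 32) : ContinuousAt E y :=
  hE.differentiableOn.continuousOn.continuousAt (isOpen_ball.mem_nhds (mem_ball_zero_iff.2 hy))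

theorem hasDerivAt_zero (hE : IsSmallPerturbation E) : HasDerivAt E 0 0 := by
  have hO : E =O[nhds 0] fun h : ℂ ↦ h ^ 2 := by
    refine .of_bound (1 / 640) ?_
    filter_upwards [ball_mem_nhds (0 : ℂ) (by norm_num : (0 : ℝ) < 32)] with h hh
    simpa using hE.norm_le h hh
  rw [hasDerivAt_iff_isLittleO_nhds_zero]
  simpa [hE.map_zero] using hO.trans_isLittleO (Asymptotics.isLittleO_pow_id (by norm_num))

theorem perturbedQuad_zero (hE : IsSmallPerturbation E) (m b τ : ℂ) :
    perturbedQuad E m b τ 0 = 0 := by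
  simp [perturbedQuad, outerMap, hE.map_zero]

theorem iterate_perturbedQuad_zero (hE : IsSmallPerturbation E) (m b τ : ℂ) (n : ℕ) :
    (perturbedQuad E m b τ)^[n] 0 = 0 :=
  Function.iterate_fixed (hE.perturbedQuad_zero m b τ) n

theorem hasDerivAt_perturbedQuad (hE : IsSmallPerturbation E) (m b τ : ℂ) :
    HasDerivAt (perturbedQuad E m b τ) m 0 := by
  have hin : HasDerivAt (fun z : ℂ ↦ z + b * z ^ 2) 1 0 :=
    ((hasDerivAt_id (0 : ℂ)).add (((hasDerivAt_id (0 : ℂ)).pow 2).const_mul b)).congr_deriv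
      (by simp)
  have hout : HasDerivAt (outerMap E m τ) m 0 :=
    (((hasDerivAt_id (0 : ℂ)).const_mul m).add (hE.hasDerivAt_zero.const_mul τ)).congr_deriv
      (by simp)
  rw [show (0 : ℂ) = 0 + b * 0 ^ 2 by ring] at hout
  exact (HasDerivAt.comp (0 : ℂ) hout hin).congr_deriv (mul_one m)

theorem outerMap_injOn (hE : IsSmallPerturbation E) (hm : 9 / 10 ≤ ‖m‖) (hτ : ‖τ‖ ≤ 2) :
    Set.InjOn (outerMap E m τ) (closedBall 0 21) := by
  intro x hx y hy h
  rw [mem_closedBall_zero_iff] at hx hy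
  have heq : m * (x - y) = -(τ * (E x - E y)) := by
    simp only [outerMap] at h
    linear_combination h
  have hnorm := congrArg norm heq
  rw [norm_neg, norm_mul, norm_mul] at hnorm
  have h1 : ‖τ‖ * ‖E x - E y‖ ≤ 2 * (107 / 500 * ‖x - y‖) := by
    gcongr
    exact hE.norm_sub_le hx hy
  have h2 : 9 / 10 * ‖x - y‖ ≤ ‖m‖ * ‖x - y‖ := by gcongr
  rw [← sub_eq_zero, ← norm_le_zero_iff]
  linarith

theorem exists_outerMap_eq (hE : IsSmallPerturbation E) (hm : 9 / 10 ≤ ‖m‖) {U : Set ℂ}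
    (hU : IsOpen U) {u τ : ℂ → ℂ} (hu : DifferentiableOn ℂ u U) (hτ : DifferentiableOn ℂ τ U)
    (hu17 : ∀ t ∈ U, ‖u t‖ ≤ 17) (hτ2 : ∀ t ∈ U, ‖τ t‖ ≤ 2) :
    ∃ y : ℂ → ℂ, DifferentiableOn ℂ y U ∧ ∀ t ∈ U, ‖y t‖ ≤ 21 ∧ outerMap E m (τ t) (y t) = u t := by
  have hm₀ : 0 < ‖m‖ := by linarith
  have hmem : ∀ y ∈ closedBall (0 : ℂ) 21, ‖y‖ ≤ 21 := fun y ↦ mem_closedBall_zero_iff.1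
  obtain ⟨y, hy, hfix⟩ := exists_differentiableOn_fixedPoint hU (r := 21) (K := 1 / 2)
    (h := fun t y ↦ (u t - τ t * E y) / m) (by norm_num) (by norm_num)
    (fun t ht y hy ↦ by
      have hEy : ‖E y‖ ≤ 441 / 640 := by
        have := hE.norm_le y (mem_ball_zero_iff.2 (by linarith [hmem y hy]))
        nlinarith [norm_nonneg y, hmem y hy]
      have hτE : ‖τ t * E y‖ ≤ 2 * (441 / 640) := by
        rw [norm_mul]
        gcongr
        exact hτ2 t ht
      rw [mem_closedBall_zero_iff, norm_div, div_le_iff₀ hm₀]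
      linarith [_root_.norm_sub_le (u t) (τ t * E y), hu17 t ht])
    (fun t ht ↦ LipschitzOnWith.of_dist_le_mul fun y hy y' hy' ↦ by
      have hτE : ‖τ t‖ * ‖E y - E y'‖ ≤ 2 * (107 / 500 * ‖y - y'‖) := by
        gcongr
        exacts [hτ2 t ht, hE.norm_sub_le (hmem y hy) (hmem y' hy')]
      rw [dist_eq_norm, dist_eq_norm, ← sub_div, norm_div, div_le_iff₀ hm₀,
        sub_sub_sub_cancel_left, ← mul_sub, norm_mul, norm_sub_rev]
      push_cast
      nlinarith [norm_nonneg (y - y')])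
    (fun y hy hy21 ↦ (hu.sub (hτ.mul (hE.differentiableOn.comp hy fun x hx ↦
      mem_ball_zero_iff.2 (by linarith [hy21 x hx])))).div_const m)
  refine ⟨y, hy, fun t ht ↦ ⟨(hfix t ht).1, ?_⟩⟩
  have := (hfix t ht).2
  rw [div_eq_iff (norm_pos_iff.1 hm₀)] at this
  simp only [outerMap]
  linear_combination -this

theorem norm_le_five_of_outerMap (hE : IsSmallPerturbation E) (hm : 9 / 10 ≤ ‖m‖) (hτ : ‖τ‖ ≤ 2)
    {y : ℂ} (hy : ‖y‖ ≤ 21) (h : ‖outerMap E m τ y‖ ≤ 4) : ‖y‖ ≤ 5 := by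
  have hτE : ‖τ * E y‖ ≤ 2 * (1 / 640 * ‖y‖ ^ 2) := by
    rw [norm_mul]
    gcongr
    exact hE.norm_le y (mem_ball_zero_iff.2 (by linarith))
  have hmy : 9 / 10 * ‖y‖ ≤ ‖m * y‖ := by
    rw [norm_mul]
    gcongr
  have := norm_sub_norm_le (m * y) (-(τ * E y))
  rw [sub_neg_eq_add, norm_neg] at this
  simp only [outerMap] at h
  nlinarith [norm_nonneg y]

end IsSmallPerturbation

theorem exists_add_mul_sq_eq (hb : b ≠ 0) {c : ℂ} {r : ℝ} {y : ℂ → ℂ}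
    (hy : DifferentiableOn ℂ y (ball c r)) (hcrit : ∀ t ∈ ball c r, y t ≠ -1 / (4 * b)) {t₁ z₁ : ℂ}
    (ht₁ : t₁ ∈ ball c r) (hz₁ : z₁ + b * z₁ ^ 2 = y t₁) :
    ∃ z : ℂ → ℂ, DifferentiableOn ℂ z (ball c r) ∧ z t₁ = z₁ ∧
      ∀ t ∈ ball c r, z t + b * z t ^ 2 = y t := by
  obtain ⟨s, hs, hsq, hst⟩ := exists_differentiableOn_sq_eq (g := fun t ↦ 1 + 4 * b * y t)
    (by fun_prop) (fun t ht h ↦ hcrit t ht ((eq_div_iff (by simpa using hb)).2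
      (by linear_combination h))) (s₁ := 2 * b * z₁ + 1) ht₁ (by rw [← hz₁]; ring)
  refine ⟨fun t ↦ (s t - 1) / (2 * b), by fun_prop, ?_, fun t ht ↦ ?_⟩
  · simp only [hst]
    field_simp
    ring
  · have := hsq t ht
    field_simp
    linear_combination this

theorem IsSmallPerturbation.exists_perturbedQuad_eq (hE : IsSmallPerturbation E)
    (hm : 9 / 10 ≤ ‖m‖) (hb : ‖b‖ = 1) {c : ℂ} {r : ℝ} {u τ : ℂ → ℂ}
    (hu : DifferentiableOn ℂ u (ball c r)) (hτ : DifferentiableOn ℂ τ (ball c r))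
    (hu17 : ∀ t ∈ ball c r, ‖u t‖ ≤ 17) (hτ2 : ∀ t ∈ ball c r, ‖τ t‖ ≤ 2)
    (hcrit : ∀ t ∈ ball c r, u t ≠ critOrbit E m b (τ t) 0) {t₁ z₁ : ℂ} (ht₁ : t₁ ∈ ball c r)
    (hz₁ : ‖z₁‖ ≤ 7 / 2) (hzu : perturbedQuad E m b (τ t₁) z₁ = u t₁) :
    ∃ z : ℂ → ℂ, DifferentiableOn ℂ z (ball c r) ∧ z t₁ = z₁ ∧ ∀ t ∈ ball c r,
      perturbedQuad E m b (τ t) (z t) = u t ∧ ‖z t‖ ≤ 6 ∧ (‖u t‖ ≤ 4 → ‖z t‖ ≤ 3) := by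
  have hb₀ : b ≠ 0 := norm_pos_iff.1 (hb ▸ one_pos)
  obtain ⟨y, hy, hyu⟩ := hE.exists_outerMap_eq hm isOpen_ball hu hτ hu17 hτ2
  have hy₁ : z₁ + b * z₁ ^ 2 = y t₁ := by
    refine hE.outerMap_injOn hm (hτ2 t₁ ht₁) (mem_closedBall_zero_iff.2 ?_)
      (mem_closedBall_zero_iff.2 (hyu t₁ ht₁).1) (hzu.trans (hyu t₁ ht₁).2.symm)
    refine (norm_add_le _ _).trans ?_
    rw [norm_mul, hb, norm_pow]
    nlinarith [norm_nonneg z₁]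
  obtain ⟨z, hz, hzt, hzy⟩ := exists_add_mul_sq_eq hb₀ hy
    (fun t ht h ↦ hcrit t ht (by rw [← (hyu t ht).2, h]; rfl)) ht₁ hy₁
  have hzn : ∀ t ∈ ball c r, ‖z t‖ ^ 2 - ‖z t‖ ≤ ‖y t‖ := fun t ht ↦ by
    have := norm_sub_norm_le (b * z t ^ 2) (-z t)
    rwa [norm_mul, hb, norm_pow, norm_neg, one_mul, sub_neg_eq_add, add_comm, hzy t ht] at this
  refine ⟨z, hz, hzt, fun t ht ↦ ⟨?_, ?_, fun hu4 ↦ ?_⟩⟩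
  · rw [perturbedQuad, hzy t ht, (hyu t ht).2]
  · nlinarith [hzn t ht, (hyu t ht).1]
  · have := hE.norm_le_five_of_outerMap hm (hτ2 t ht) (hyu t ht).1 ((hyu t ht).2 ▸ hu4)
    nlinarith [hzn t ht]

theorem IsSmallPerturbation.exists_iterate_perturbedQuad_eq (hE : IsSmallPerturbation E)
    (hm : 9 / 10 ≤ ‖m‖) (hb : ‖b‖ = 1) (hτ : ‖τ‖ ≤ 2) {r : ℝ} (hr : 0 < r) (hr₁ : r ≤ 1)
    (hcrit : ∀ n, (∀ k ≤ n, ‖critOrbit E m b τ k‖ ≤ 3) → r ≤ ‖critOrbit E m b τ n‖) (n : ℕ) :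
    ∃ g : ℂ → ℂ, DifferentiableOn ℂ g (ball 0 r) ∧ g 0 = 0 ∧ HasDerivAt g (m⁻¹ ^ n) 0 ∧
      ∀ w ∈ ball (0 : ℂ) r, (perturbedQuad E m b τ)^[n] (g w) = w ∧
        ∀ k ≤ n, ‖(perturbedQuad E m b τ)^[k] (g w)‖ ≤ 3 := by
  have hm₀ : m ≠ 0 := norm_pos_iff.1 (by linarith)
  induction n with
  | zero =>
    refine ⟨id, differentiableOn_id, rfl, by simpa using hasDerivAt_id (0 : ℂ), fun w hw ↦
      ⟨rfl, fun k hk ↦ ?_⟩⟩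
    rw [mem_ball_zero_iff] at hw
    rw [Nat.le_zero.1 hk, Function.iterate_zero_apply, id]
    linarith
  | succ n ih =>
    obtain ⟨g, hg, hg₀, hg', hgw⟩ := ih
    have hg3 : ∀ w ∈ ball 0 r, ‖g w‖ ≤ 3 := fun w hw ↦ (hgw w hw).2 0 n.zero_le
    obtain ⟨z, hz, hz₀, hzg⟩ := hE.exists_perturbedQuad_eq hm hb hg (differentiableOn_const τ)
      (fun t ht ↦ by linarith [hg3 t ht]) (fun _ _ ↦ hτ)
      (fun t ht h ↦ by
        have hgt := hgw t ht
        rw [h] at hgt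
        have := hcrit n hgt.2
        rw [show critOrbit E m b τ n = t from hgt.1] at this
        linarith [mem_ball_zero_iff.1 ht])
      (mem_ball_self hr) (z₁ := 0) (by norm_num) (by rw [hE.perturbedQuad_zero, hg₀])
    refine ⟨z, hz, hz₀, ?_, fun w hw ↦ ⟨?_, fun k hk ↦ ?_⟩⟩
    · have hz' := (hz.differentiableAt (ball_mem_nhds 0 hr)).hasDerivAt
      have hcomp : HasDerivAt g (m * deriv z 0) 0 :=
        (HasDerivAt.comp (0 : ℂ) (hz₀.symm ▸ hE.hasDerivAt_perturbedQuad m b τ)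
          hz').congr_of_eventuallyEq (by
            filter_upwards [ball_mem_nhds (0 : ℂ) hr] with w hw using (hzg w hw).1.symm)
      rwa [pow_succ', ← hcomp.unique hg', inv_mul_cancel_left₀ hm₀]
    · rw [Function.iterate_succ_apply, (hzg w hw).1, (hgw w hw).1]
    · cases k with
      | zero => exact (hzg w hw).2.2 (by linarith [hg3 w hw])
      | succ k =>
        rw [Function.iterate_succ_apply, (hzg w hw).1]
        exact (hgw w hw).2 k (by omega)

-- Fatou: otherwise all inverse branches at the attracting point `0` live on a common disc.
theorem IsSmallPerturbation.norm_critOrbit_le_of_norm_lt_one (hE : IsSmallPerturbation E)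
    (hm : 9 / 10 ≤ ‖m‖) (hm₁ : ‖m‖ < 1) (hb : ‖b‖ = 1) (hτ : ‖τ‖ ≤ 2) (n : ℕ) :
    ‖critOrbit E m b τ n‖ ≤ 3 := by
  by_contra hn
  have hpos : ∀ k < n, 0 < ‖critOrbit E m b τ k‖ := fun k hk ↦ by
    refine norm_pos_iff.2 fun hzero ↦ hn ?_
    rw [critOrbit, ← Nat.sub_add_cancel hk.le, Function.iterate_add_apply,
      show (perturbedQuad E m b τ)^[k] _ = 0 from hzero, hE.iterate_perturbedQuad_zero, norm_zero]
    norm_num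
  obtain ⟨r, hr, hr₁, hrk⟩ := exists_pos_forall_lt_le hpos
  have hbranch := hE.exists_iterate_perturbedQuad_eq hm hb hτ hr hr₁ fun k hle ↦ by
    by_cases hkn : k < n
    · exact hrk k hkn
    · exact absurd (hle n (not_lt.1 hkn)) hn
  have hbound : ∀ n : ℕ, ‖m‖⁻¹ ^ n ≤ 3 / r := fun n ↦ by
    obtain ⟨g, hg, hg₀, hg', hgw⟩ := hbranch n
    have := Complex.norm_deriv_le_div_of_mapsTo_ball (R₂ := 3) hg (fun w hw ↦ by
      rw [hg₀, mem_closedBall_zero_iff]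
      exact (hgw w hw).2 0 n.zero_le) hr
    rwa [hg'.deriv, norm_pow, norm_inv] at this
  obtain ⟨n, hn⟩ := pow_unbounded_of_one_lt (3 / r) ((one_lt_inv₀ (by linarith)).2 hm₁)
  exact hn.not_ge (hbound n)

theorem IsSmallPerturbation.tendsto_critOrbit (hE : IsSmallPerturbation E) {ι : Type*}
    {l : Filter ι} [l.NeBot] {M : ι → ℂ} (hM : Tendsto M l (nhds m)) (hb : ‖b‖ = 1)
    (hbdd : ∀ᶠ j in l, ∀ n, ‖critOrbit E (M j) b τ n‖ ≤ 3) (n : ℕ) :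
    Tendsto (fun j ↦ critOrbit E (M j) b τ n) l (nhds (critOrbit E m b τ n)) := by
  induction n with
  | zero => exact (hM.mul_const _).add_const _
  | succ n ih =>
    have hle : ‖critOrbit E m b τ n‖ ≤ 3 := le_of_tendsto ih.norm (hbdd.mono fun j hj ↦ hj n)
    have hy := ih.add ((ih.pow 2).const_mul b)
    simp only [critOrbit, Function.iterate_succ_apply'] at hy hle ⊢
    refine (hM.mul hy).add (((hE.continuousAt ?_).tendsto.comp hy).const_mul _)
    refine (norm_add_le _ _).trans_lt ?_
    rw [norm_mul, hb, norm_pow, one_mul]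
    nlinarith [norm_nonneg ((perturbedQuad E m b τ)^[n] (outerMap E m τ (-1 / (4 * b))))]

theorem IsSmallPerturbation.norm_critOrbit_le (hE : IsSmallPerturbation E) (hm : ‖m‖ = 1)
    (hb : ‖b‖ = 1) (hτ : ‖τ‖ ≤ 2) (n : ℕ) : ‖critOrbit E m b τ n‖ ≤ 3 := by
  have hM : Tendsto (fun t : ℝ ↦ (t : ℂ) * m) (nhdsWithin 1 (Set.Iio 1)) (nhds m) := by
    have : Tendsto (fun t : ℝ ↦ (t : ℂ) * m) (nhds 1) (nhds ((1 : ℝ) * m)) :=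
      (Complex.continuous_ofReal.mul continuous_const).tendsto _
    simpa using this.mono_left nhdsWithin_le_nhds
  have hbdd : ∀ᶠ t : ℝ in nhdsWithin 1 (Set.Iio 1), ∀ n, ‖critOrbit E (t * m) b τ n‖ ≤ 3 := by
    filter_upwards [Ioo_mem_nhdsLT (by norm_num : (9 / 10 : ℝ) < 1)] with t ht n
    have hnorm : ‖(t : ℂ) * m‖ = t := by
      rw [norm_mul, hm, mul_one, Complex.norm_real, Real.norm_of_nonneg (by linarith [ht.1])]
    exact hE.norm_critOrbit_le_of_norm_lt_one (by rw [hnorm]; exact ht.1.le)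
      (by rw [hnorm]; exact ht.2) hb hτ n
  exact le_of_tendsto (hE.tendsto_critOrbit hM hb hbdd n).norm (hbdd.mono fun t ht ↦ ht n)

theorem IsSmallPerturbation.norm_iterate_perturbedQuad_zero_le (hE : IsSmallPerturbation E)
    (hm : ‖m‖ = 1) (hb : ‖b‖ = 1) {r : ℝ} (hr : 0 < r) (hr₁ : r ≤ 1)
    (hcrit : ∀ n, r ≤ ‖critOrbit E m b 0 n‖) {z : ℂ} (hz : ‖z‖ < r ^ 2 / 32) (n : ℕ) :
    ‖(perturbedQuad E m b 0)^[n] z‖ ≤ 3 := by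
  obtain ⟨g, hg, hg₀, hg', hgw⟩ := hE.exists_iterate_perturbedQuad_eq (τ := 0)
    (by rw [hm]; norm_num) hb (by norm_num) hr hr₁ (fun n _ ↦ hcrit n) n
  obtain ⟨w, hw, rfl⟩ := ball_subset_image_ball_of_norm_deriv_eq_one hr hr₁ hg hg₀ hg'
    (by simp [hm]) (fun w hw ↦ (hgw w hw).2 0 n.zero_le) (mem_ball_zero_iff.2 hz)
  exact (hgw w hw).2 n le_rfl

theorem norm_add_mul_sq_le (hb : ‖b‖ ≤ 1) {z : ℂ} (hz : ‖z‖ ≤ 7 / 2) : ‖z + b * z ^ 2‖ ≤ 16 := by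
  have : ‖b‖ * ‖z‖ ^ 2 ≤ 1 * (7 / 2) ^ 2 := by gcongr
  refine (norm_add_le _ _).trans ?_
  rw [norm_mul, norm_pow]
  linarith

theorem IsSmallPerturbation.norm_perturbedQuad_le (hE : IsSmallPerturbation E) (hm : ‖m‖ = 1)
    (hb : ‖b‖ ≤ 1) (hτ : ‖τ‖ ≤ 1) {z : ℂ} (hz : ‖z‖ ≤ 7 / 2) : ‖perturbedQuad E m b τ z‖ ≤ 17 := by
  have h16 := norm_add_mul_sq_le hb hz
  have hEz : ‖E (z + b * z ^ 2)‖ ≤ 1 := by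
    have := hE.norm_le (z + b * z ^ 2) (mem_ball_zero_iff.2 (by linarith))
    nlinarith [norm_nonneg (z + b * z ^ 2)]
  have hτE : ‖τ‖ * ‖E (z + b * z ^ 2)‖ ≤ 1 * 1 := by gcongr
  refine (norm_add_le _ _).trans ?_
  rw [norm_mul, hm, norm_mul]
  linarith

theorem IsSmallPerturbation.exists_backward_orbit (hE : IsSmallPerturbation E) (hm : ‖m‖ = 1)
    (hb : ‖b‖ = 1) (hτ : ‖τ‖ < 2) {n : ℕ} {z : ℂ}
    (hlt : ∀ k < n, ‖(perturbedQuad E m b τ)^[k] z‖ ≤ 7 / 2)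
    (h3 : 3 < ‖(perturbedQuad E m b τ)^[n] z‖) (h17 : ‖(perturbedQuad E m b τ)^[n] z‖ ≤ 17) :
    ∃ u : ℂ → ℂ, DifferentiableOn ℂ u (ball 0 2) ∧ u τ = z ∧ ∀ t ∈ ball (0 : ℂ) 2,
      (perturbedQuad E m b t)^[n] (u t) = (perturbedQuad E m b τ)^[n] z ∧ ‖u t‖ ≤ 17 := by
  induction n generalizing z with
  | zero => exact ⟨fun _ ↦ z, differentiableOn_const z, rfl, fun t _ ↦ ⟨rfl, h17⟩⟩
  | succ n ih =>
    obtain ⟨u, hu, huτ, hut⟩ := ih (z := perturbedQuad E m b τ z)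
      (fun k hk ↦ hlt (k + 1) (Nat.succ_lt_succ hk)) h3 h17
    obtain ⟨y, hy, hyτ, hyt⟩ := hE.exists_perturbedQuad_eq (by rw [hm]; norm_num) hb hu
      differentiableOn_id (fun t ht ↦ (hut t ht).2) (fun t ht ↦ (mem_ball_zero_iff.1 ht).le)
      (fun t ht h ↦ by
        have horb : critOrbit E m b t n = _ := h ▸ (hut t ht).1
        have := hE.norm_critOrbit_le hm hb (mem_ball_zero_iff.1 ht).le n
        rw [horb] at this
        exact this.not_gt h3)
      (mem_ball_zero_iff.2 hτ) (hlt 0 n.succ_pos) huτ.symm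
    refine ⟨y, hy, hyτ, fun t ht ↦ ⟨?_, by linarith [(hyt t ht).2.1]⟩⟩
    exact (congrArg _ (hyt t ht).1).trans (hut t ht).1

theorem IsSmallPerturbation.norm_iterate_perturbedQuad_lt (hE : IsSmallPerturbation E)
    (hm : ‖m‖ = 1) (hb : ‖b‖ = 1) {s : ℝ} (hs : 0 < s) (hs₁ : s ≤ 1)
    (hstab : ∀ z : ℂ, ‖z‖ < s → ∀ n, ‖(perturbedQuad E m b 0)^[n] z‖ ≤ 3) (hτ : ‖τ‖ ≤ 1) {z : ℂ}
    (hz : ‖z‖ < s * (s / 17) ^ 2) (n : ℕ) : ‖(perturbedQuad E m b τ)^[n] z‖ < 7 / 2 := by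
  induction n using Nat.strong_induction_on with | _ n ih
  by_contra! hn
  have h17 : ‖(perturbedQuad E m b τ)^[n] z‖ ≤ 17 := by
    cases n with
    | zero =>
      have : s * (s / 17) ^ 2 ≤ 1 * (1 / 17) ^ 2 := by gcongr
      rw [Function.iterate_zero_apply]
      linarith
    | succ n =>
      rw [Function.iterate_succ_apply']
      exact hE.norm_perturbedQuad_le hm hb.le hτ (ih n n.lt_succ_self).le
  obtain ⟨u, hu, rfl, hut⟩ := hE.exists_backward_orbit hm hb (by linarith)
    (fun k hk ↦ (ih k hk).le) (by linarith) h17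
  have hu₀ : ∀ t ∈ ball (0 : ℂ) 2, u t ≠ 0 := fun t ht h ↦ by
    rw [← (hut t ht).1, h, hE.iterate_perturbedQuad_zero, norm_zero] at hn
    norm_num at hn
  have hsu : s ≤ ‖u 0‖ := by
    by_contra! hlt
    have := hstab (u 0) hlt n
    rw [(hut 0 (mem_ball_self two_pos)).1] at this
    linarith
  have hharnack := norm_mul_div_sq_le_norm_of_ne_zero two_pos hu hu₀ (fun t ht ↦ (hut t ht).2) hs
    (by linarith) hsu (by linarith : ‖τ‖ ≤ 2 / 2)
  have : s * (s / 17) ^ 2 ≤ ‖u 0‖ * (s / 17) ^ 2 := by gcongr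
  linarith

theorem IsSmallPerturbation.diffContOnCl_perturbedQuad (hE : IsSmallPerturbation E) {ζ : ℂ → ℂ}
    (hζ : DiffContOnCl ℂ ζ (ball 0 1)) (hbdd : ∀ b : ℂ, ‖b‖ ≤ 1 → ‖ζ b‖ ≤ 7 / 2) :
    DiffContOnCl ℂ (fun b ↦ perturbedQuad E m b τ (ζ b)) (ball 0 1) := by
  have hy : DiffContOnCl ℂ (fun b ↦ ζ b + b * ζ b ^ 2) (ball 0 1) :=
    ⟨hζ.1.add (differentiableOn_id.mul (hζ.1.pow 2)), hζ.2.add (continuousOn_id.mul (hζ.2.pow 2))⟩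
  have h32 : ∀ b : ℂ, ‖b‖ ≤ 1 → ζ b + b * ζ b ^ 2 ∈ ball (0 : ℂ) 32 := fun b hb ↦
    mem_ball_zero_iff.2 (by linarith [norm_add_mul_sq_le hb (hbdd b hb)])
  refine ⟨?_, ?_⟩
  · exact (hy.1.const_mul m).add ((hE.differentiableOn.comp hy.1 fun b hb ↦
      h32 b (mem_ball_zero_iff.1 hb).le).const_mul τ)
  · refine (hy.2.const_mul m).add ((hE.differentiableOn.continuousOn.comp hy.2 fun b hb ↦
      h32 b ?_).const_mul τ)
    rwa [closure_ball _ one_ne_zero, mem_closedBall_zero_iff] at hb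

theorem IsSmallPerturbation.norm_iterate_perturbedQuad_le (hE : IsSmallPerturbation E)
    {z : ℂ} (hsphere : ∀ b : ℂ, ‖b‖ = 1 → ∀ n, ‖(perturbedQuad E m b τ)^[n] z‖ ≤ 7 / 2) (n : ℕ) :
    ∀ b : ℂ, ‖b‖ ≤ 1 → ‖(perturbedQuad E m b τ)^[n] z‖ ≤ 7 / 2 := by
  have hmax : ∀ n, DiffContOnCl ℂ (fun b ↦ (perturbedQuad E m b τ)^[n] z) (ball 0 1) →
      ∀ b : ℂ, ‖b‖ ≤ 1 → ‖(perturbedQuad E m b τ)^[n] z‖ ≤ 7 / 2 := fun n hd b hb ↦ by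
    refine Complex.norm_le_of_forall_mem_frontier_norm_le isBounded_ball hd (fun b hb ↦ ?_) ?_
    · rw [frontier_ball _ one_ne_zero, mem_sphere_zero_iff_norm] at hb
      exact hsphere b hb n
    · rwa [closure_ball _ one_ne_zero, mem_closedBall_zero_iff]
  refine hmax n ?_
  induction n with
  | zero => exact diffContOnCl_const
  | succ n ih =>
    simp only [Function.iterate_succ_apply']
    exact hE.diffContOnCl_perturbedQuad ih (hmax n ih)

end PerturbedQuadratic

section Stability

open Metric

variable {α : ℝ}

theorem pa_eq (α : ℝ) (z : ℂ) : Pa α z = multiplier α * z + z ^ 2 := rfl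

theorem cpa_eq (α : ℝ) : cpa α = -multiplier α / 2 := rfl

theorem exists_pos_le_norm_iterate_pa
    (h : ¬ MapClusterPt (0 : ℂ) atTop (fun n : ℕ ↦ (Pa α)^[n + 1] (cpa α))) :
    ∃ r > 0, r ≤ 1 ∧ ∀ n : ℕ, r ≤ ‖(Pa α)^[n + 1] (cpa α)‖ := by
  have hne : ∀ n : ℕ, (Pa α)^[n + 1] (cpa α) ≠ 0 := fun n hn ↦ by
    refine h (Tendsto.mapClusterPt (tendsto_const_nhds.congr' ?_))
    filter_upwards [eventually_ge_atTop n] with k hk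
    rw [show k + 1 = (k - n) + (n + 1) by omega, Function.iterate_add_apply, hn,
      Function.iterate_fixed (by simp [pa_eq])]
  rw [mapClusterPt_iff_frequently] at h
  push Not at h
  obtain ⟨s, hs, h⟩ := h
  obtain ⟨e, he, hes⟩ := Metric.mem_nhds_iff.1 hs
  obtain ⟨M, hM⟩ := eventually_atTop.1 h
  obtain ⟨r, hr, hr₁, hrM⟩ := exists_pos_forall_lt_le fun k (_ : k < M) ↦ norm_pos_iff.2 (hne k)
  refine ⟨min r e, lt_min hr he, (min_le_left _ _).trans hr₁, fun n ↦ ?_⟩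
  rcases lt_or_ge n M with hn | hn
  · exact (min_le_left _ _).trans (hrM n hn)
  · refine (min_le_right _ _).trans (not_lt.1 fun hlt ↦ hM n hn (hes (mem_ball_zero_iff.2 hlt)))

theorem critOrbit_eq_iterate_pa (E : ℂ → ℂ) {b : ℂ} (hb : b ≠ 0) (n : ℕ) :
    critOrbit E (multiplier α) b 0 n = 1 / (multiplier α * b) * (Pa α)^[n + 1] (cpa α) := by
  have hm := multiplier_ne_zero α
  have hconj : Function.Semiconj (fun z ↦ 1 / (multiplier α * b) * z) (Pa α)
      (perturbedQuad E (multiplier α) b 0) := fun z ↦ by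
    simp only [perturbedQuad, outerMap, pa_eq]
    field_simp
    ring
  rw [Function.iterate_succ_apply, (hconj.iterate_right n).eq, critOrbit]
  congr 1
  simp only [outerMap, pa_eq, cpa_eq]
  field_simp
  ring

theorem IsNearRotation.isSmallPerturbation {f : ℂ → ℂ} (hf : IsNearRotation α f) :
    IsSmallPerturbation fun y ↦ 32 * f (y / 32) - multiplier α * y := by
  have hmem : ∀ y ∈ ball (0 : ℂ) 32, y / 32 ∈ ball (0 : ℂ) 1 := fun y hy ↦ by
    rw [mem_ball_zero_iff] at hy ⊢
    rw [norm_div, Complex.norm_ofNat]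
    linarith
  refine ⟨?_, fun y hy ↦ ?_⟩
  · exact ((hf.differentiableOn.comp (by fun_prop) hmem).const_mul 32).sub (by fun_prop)
  · have h := hf.norm_sub_le _ (hmem y hy)
    rw [norm_div, Complex.norm_ofNat] at h
    rw [show 32 * f (y / 32) - multiplier α * y = 32 * (f (y / 32) - multiplier α * (y / 32)) by
      ring, norm_mul, Complex.norm_ofNat]
    linarith

theorem exists_uniformlyStable_of_not_mapClusterPt
    (h : ¬ MapClusterPt (0 : ℂ) atTop (fun n : ℕ ↦ (Pa α)^[n + 1] (cpa α))) :
    ∃ ρ : ℝ, 0 < ρ ∧ UniformlyStable α ρ := by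
  obtain ⟨r, hr, hr₁, hrn⟩ := exists_pos_le_norm_iterate_pa h
  have hs₁ : r ^ 2 / 32 ≤ 1 := by nlinarith
  set s : ℝ := r ^ 2 / 32
  have hs₀ : 0 < s := by positivity
  refine ⟨s * (s / 17) ^ 2 / 32, by positivity, fun f hf z hz n ↦ ?_⟩
  have hm := norm_multiplier α
  have hE := hf.isSmallPerturbation
  set E : ℂ → ℂ := fun y ↦ 32 * f (y / 32) - multiplier α * y with hEdef
  have hquad : ∀ b : ℂ, ‖b‖ = 1 → ∀ z : ℂ, ‖z‖ < s → ∀ n,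
      ‖(perturbedQuad E (multiplier α) b 0)^[n] z‖ ≤ 3 := fun b hb z hz n ↦ by
    refine hE.norm_iterate_perturbedQuad_zero_le hm hb hr hr₁ (fun n ↦ ?_) hz n
    rw [critOrbit_eq_iterate_pa E (norm_pos_iff.1 (hb ▸ one_pos)), norm_mul, norm_div, norm_mul,
      hm, hb]
    simpa using hrn n
  have hz' : ‖32 * z‖ < s * (s / 17) ^ 2 := by
    rw [norm_mul, Complex.norm_ofNat]
    linarith
  have hlin : ‖(perturbedQuad E (multiplier α) 0 1)^[n] (32 * z)‖ ≤ 7 / 2 :=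
    hE.norm_iterate_perturbedQuad_le (fun b hb n ↦ (hE.norm_iterate_perturbedQuad_lt hm hb hs₀ hs₁
      (hquad b hb) (by simp) hz' n).le) n 0 (by simp)
  have hconj : Function.Semiconj (fun z ↦ 32 * z) f (perturbedQuad E (multiplier α) 0 1) :=
    fun z ↦ by simp [perturbedQuad, outerMap, hEdef]
  rw [← (hconj.iterate_right n).eq, norm_mul, Complex.norm_ofNat] at hlin
  rw [mem_ball_zero_iff]
  linarith

end Stability

section LogisticDensity

open Real Topology

/-- The logistic probability density `eˣ / (1 + eˣ)²`, the derivative of the sigmoid. It dominates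
all integrands along rays below, in the parametrization of a ray by the logarithm of the modulus. -/
noncomputable def logisticDensity (x : ℝ) : ℝ := sigmoid x * (1 - sigmoid x)

theorem sigmoid_eq_exp_div (x : ℝ) : sigmoid x = exp x / (1 + exp x) := by
  rw [sigmoid_def, exp_neg]
  field

theorem logisticDensity_eq (x : ℝ) : logisticDensity x = exp x / (1 + exp x) ^ 2 := by
  rw [logisticDensity, sigmoid_eq_exp_div]
  field

theorem logisticDensity_nonneg (x : ℝ) : 0 ≤ logisticDensity x :=
  mul_nonneg (sigmoid_nonneg x) (sub_nonneg.2 (sigmoid_le_one x))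

theorem continuous_logisticDensity : Continuous logisticDensity :=
  continuous_sigmoid.mul (continuous_const.sub continuous_sigmoid)

theorem hasDerivAt_sigmoid_logisticDensity (x : ℝ) : HasDerivAt sigmoid (logisticDensity x) x :=
  hasDerivAt_sigmoid x

theorem integrable_logisticDensity : Integrable logisticDensity := by
  refine integrable_of_intervalIntegral_norm_bounded (l := atTop) (a := fun n : ℕ ↦ -(n : ℝ))
    (b := fun n : ℕ ↦ (n : ℝ)) 1 (fun _ ↦ continuous_logisticDensity.integrableOn_Ioc)
    (tendsto_neg_atTop_atBot.comp tendsto_natCast_atTop_atTop)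
    tendsto_natCast_atTop_atTop (.of_forall fun n ↦ ?_)
  simp_rw [norm_of_nonneg (logisticDensity_nonneg _)]
  rw [intervalIntegral.integral_eq_sub_of_hasDerivAt
    (fun x _ ↦ hasDerivAt_sigmoid_logisticDensity x)
    (continuous_logisticDensity.intervalIntegrable _ _)]
  linarith [sigmoid_nonneg (-n), sigmoid_le_one n]

theorem integral_logisticDensity : ∫ x, logisticDensity x = 1 := by
  simpa using integral_of_hasDerivAt_of_tendsto hasDerivAt_sigmoid_logisticDensity
    integrable_logisticDensity tendsto_sigmoid_atBot tendsto_sigmoid_atTop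

theorem tendsto_logisticDensity_atTop : Tendsto logisticDensity atTop (𝓝 0) := by
  have := tendsto_sigmoid_atTop.mul (tendsto_sigmoid_atTop.const_sub 1)
  rwa [sub_self, mul_zero] at this

theorem tendsto_logisticDensity_atBot : Tendsto logisticDensity atBot (𝓝 0) := by
  have := tendsto_sigmoid_atBot.mul (tendsto_sigmoid_atBot.const_sub 1)
  rwa [zero_mul] at this

end LogisticDensity

section ExpKernel

open Complex Topology

/-- The odd combination of the Cauchy kernels at `w` and `-w` along the positive axis, which is
parametrized by `x ↦ eˣ`. -/
noncomputable def expKernel (w : ℂ) (x : ℝ) : ℂ :=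
  Real.exp x / (Real.exp x - w) - Real.exp x / (Real.exp x + w)

theorem expKernel_neg (w : ℂ) (x : ℝ) : expKernel (-w) x = -expKernel w x := by
  rw [expKernel, expKernel, sub_neg_eq_add, ← sub_eq_add_neg, neg_sub]

theorem one_add_norm_le_mul_norm_sub {E : Type*} [SeminormedAddCommGroup E] {s w : E} {η : ℝ}
    (hη : 0 < η) (h : η ≤ ‖s - w‖) : 1 + ‖s‖ ≤ ((1 + ‖w‖) / η + 1) * ‖s - w‖ := by
  have h₁ : ‖s‖ ≤ ‖s - w‖ + ‖w‖ := norm_le_norm_sub_add s w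
  have h₂ : 1 + ‖w‖ ≤ (1 + ‖w‖) / η * ‖s - w‖ := by
    rw [div_mul_eq_mul_div, le_div_iff₀ hη]
    gcongr
  linarith

theorem abs_im_le_norm_ofReal_sub (r : ℝ) (w : ℂ) : |w.im| ≤ ‖(r : ℂ) - w‖ := by
  simpa using abs_im_le_norm (r - w)

theorem ofReal_sub_ne_zero {w : ℂ} (hw : w.im ≠ 0) (r : ℝ) : (r : ℂ) - w ≠ 0 :=
  norm_pos_iff.1 ((abs_pos.2 hw).trans_le (abs_im_le_norm_ofReal_sub r w))

theorem ofReal_add_ne_zero {w : ℂ} (hw : w.im ≠ 0) (r : ℝ) : (r : ℂ) + w ≠ 0 := by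
  simpa using ofReal_sub_ne_zero (w := -w) (by simpa using hw) r

theorem integrable_expKernel {w : ℂ} (hw : w.im ≠ 0) : Integrable (expKernel w) := by
  have hm := ofReal_sub_ne_zero hw
  have hp := ofReal_add_ne_zero hw
  have hcont : Continuous (expKernel w) := by
    have : Continuous fun x : ℝ ↦ (Real.exp x : ℂ) := by fun_prop
    exact (this.div (by fun_prop) fun x ↦ hm _).sub (this.div (by fun_prop) fun x ↦ hp _)
  set A := (1 + ‖w‖) / |w.im| + 1
  refine (integrable_logisticDensity.const_mul (2 * ‖w‖ * A ^ 2)).mono'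
    hcont.aestronglyMeasurable (.of_forall fun x ↦ ?_)
  have hA : ∀ v : ℂ, ‖v‖ = ‖w‖ → |v.im| = |w.im| →
      1 + Real.exp x ≤ A * ‖(Real.exp x : ℂ) - v‖ := fun v hv hv' ↦ by
    have h := one_add_norm_le_mul_norm_sub (abs_pos.2 hw)
      (hv' ▸ abs_im_le_norm_ofReal_sub (Real.exp x) v)
    rwa [hv, norm_real, Real.norm_of_nonneg (Real.exp_pos x).le] at h
  have hAm := hA w rfl rfl
  have hAp := hA (-w) (norm_neg w) (by rw [neg_im, abs_neg])
  rw [sub_neg_eq_add] at hAp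
  have hkernel : expKernel w x =
      2 * w * Real.exp x / ((Real.exp x - w) * (Real.exp x + w)) := by
    rw [expKernel, div_sub_div _ _ (hm _) (hp _)]
    ring
  have hden := mul_pos (norm_pos_iff.2 (hm (Real.exp x))) (norm_pos_iff.2 (hp (Real.exp x)))
  rw [hkernel, norm_div, norm_mul (_ - _), div_le_iff₀ hden, norm_mul, norm_mul, norm_real,
    Real.norm_of_nonneg (Real.exp_pos x).le, Complex.norm_two, logisticDensity_eq]
  calc 2 * ‖w‖ * Real.exp x
      = 2 * ‖w‖ * Real.exp x / (1 + Real.exp x) ^ 2 * ((1 + Real.exp x) * (1 + Real.exp x)) := by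
        field
    _ ≤ 2 * ‖w‖ * Real.exp x / (1 + Real.exp x) ^ 2 *
        (A * ‖(Real.exp x : ℂ) - w‖ * (A * ‖(Real.exp x : ℂ) + w‖)) := by gcongr
    _ = _ := by ring

theorem im_exp_sub_div_exp_add_neg {w : ℂ} (hw : 0 < w.im) (x : ℝ) :
    (((Real.exp x : ℂ) - w) / (Real.exp x + w)).im < 0 := by
  have hpos : 0 < normSq (Real.exp x + w) := normSq_pos.2 (ofReal_add_ne_zero hw.ne' _)
  have him : (((Real.exp x : ℂ) - w) / (Real.exp x + w)).im =
      -(2 * Real.exp x * w.im) / normSq (Real.exp x + w) := by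
    rw [div_im]
    simp only [sub_re, sub_im, add_re, add_im, ofReal_re, ofReal_im]
    ring
  rw [him]
  exact div_neg_of_neg_of_pos (neg_lt_zero.2 (by positivity)) hpos

theorem hasDerivAt_log_exp_sub_div_exp_add {w : ℂ} (hw : 0 < w.im) (x : ℝ) :
    HasDerivAt (fun x : ℝ ↦ log (((Real.exp x : ℂ) - w) / (Real.exp x + w))) (expKernel w x) x := by
  have hm := ofReal_sub_ne_zero hw.ne' (Real.exp x)
  have hp := ofReal_add_ne_zero hw.ne' (Real.exp x)
  have hexp : HasDerivAt (fun x : ℝ ↦ (Real.exp x : ℂ)) (Real.exp x) x :=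
    (Real.hasDerivAt_exp x).ofReal_comp
  refine (((hexp.sub_const w).div (hexp.add_const w) hp).clog_real
    (mem_slitPlane_iff.2 (.inr (im_exp_sub_div_exp_add_neg hw x).ne))).congr_deriv ?_
  rw [expKernel, Pi.div_apply]
  field

theorem integral_expKernel_of_im_pos {w : ℂ} (hw : 0 < w.im) :
    ∫ x, expKernel w x = Real.pi * I := by
  have hw₀ : w ≠ 0 := by
    rintro rfl
    exact hw.ne rfl
  have hexp_bot : Tendsto (fun x : ℝ ↦ (Real.exp x : ℂ)) atBot (𝓝 0) := by
    rw [← ofReal_zero]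
    exact (continuous_ofReal.tendsto 0).comp Real.tendsto_exp_atBot
  have hratio_bot : Tendsto (fun x : ℝ ↦ ((Real.exp x : ℂ) - w) / (Real.exp x + w)) atBot
      (𝓝 (-1)) := by
    have := (hexp_bot.sub_const w).div (hexp_bot.add_const w) (by simpa)
    rwa [zero_sub, zero_add, neg_div, div_self hw₀] at this
  have hratio_top : Tendsto (fun x : ℝ ↦ ((Real.exp x : ℂ) - w) / (Real.exp x + w)) atTop
      (𝓝 1) := by
    have hmul : Tendsto (fun x : ℝ ↦ w / (Real.exp x : ℂ)) atTop (𝓝 0) := by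
      rw [tendsto_zero_iff_norm_tendsto_zero]
      simp_rw [norm_div, norm_real, Real.norm_of_nonneg (Real.exp_pos _).le]
      exact Real.tendsto_exp_atTop.const_div_atTop _
    have := (hmul.const_sub 1).div (hmul.const_add 1) (by simp)
    rw [sub_zero, add_zero, div_one] at this
    refine this.congr fun x ↦ ?_
    have hexp : (Real.exp x : ℂ) ≠ 0 := ofReal_ne_zero.2 (Real.exp_pos x).ne'
    rw [Pi.div_apply, one_sub_div hexp, one_add_div hexp, div_div_div_cancel_right₀ hexp]
  have hlog_bot := (tendsto_log_nhdsWithin_im_neg_of_re_neg_of_im_zero (z := -1) (by simp)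
    (by simp)).comp (tendsto_nhdsWithin_iff.2
      ⟨hratio_bot, .of_forall (im_exp_sub_div_exp_add_neg hw)⟩)
  have hlog_top := (continuousAt_clog one_mem_slitPlane).tendsto.comp hratio_top
  simpa using integral_of_hasDerivAt_of_tendsto (hasDerivAt_log_exp_sub_div_exp_add hw)
    (integrable_expKernel hw.ne') hlog_bot hlog_top

theorem integral_expKernel_of_im_neg {w : ℂ} (hw : w.im < 0) :
    ∫ x, expKernel w x = -(Real.pi * I) := by
  rw [← integral_expKernel_of_im_pos (w := -w) (by simpa), ← integral_neg]
  simp_rw [expKernel_neg, neg_neg]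

end ExpKernel

section Cones

open Complex Set Topology

/-- The open sector about the positive imaginary axis on which the Cousin problem is posed. -/
def wideCone : Set ℂ := {Q | ‖Q‖ < 2 * Q.im}

/-- The closed sector, with its vertex removed, bounded by the rays through `rightDir` and
`leftDir`. -/
def narrowCone : Set ℂ := {Q | Q ≠ 0 ∧ 4 / 5 * ‖Q‖ ≤ Q.im}

/-- The open sector complementary to `narrowCone`. -/
def outerSector : Set ℂ := {Q | Q.im < 4 / 5 * ‖Q‖}

theorem isOpen_wideCone : IsOpen wideCone := isOpen_lt (by fun_prop) (by fun_prop)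

theorem im_pos_of_mem_wideCone {Q : ℂ} (hQ : Q ∈ wideCone) : 0 < Q.im := by
  linarith [norm_nonneg Q, show ‖Q‖ < 2 * Q.im from hQ]

theorem narrowCone_subset_wideCone : narrowCone ⊆ wideCone := fun Q ⟨hQ, hQ'⟩ ↦ by
  change ‖Q‖ < 2 * Q.im
  linarith [norm_pos_iff.2 hQ]

theorem mem_wideCone_of_abs_re_lt {Q : ℂ} (h : 4 * |Q.re| < 3 * Q.im) : Q ∈ wideCone := by
  have him : 0 < Q.im := by linarith [abs_nonneg Q.re]
  change ‖Q‖ < 2 * Q.im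
  linarith [norm_le_abs_re_add_abs_im Q, abs_of_pos him]

theorem mul_sub_le_norm_sub_of_mem_narrowCone {s : ℂ} (hs : s ∈ narrowCone) (Q : ℂ) :
    5 / 9 * (4 / 5 * ‖Q‖ - Q.im) ≤ ‖s - Q‖ := by
  have him : s.im - Q.im ≤ ‖s - Q‖ := sub_im s Q ▸ (le_abs_self _).trans (abs_im_le_norm _)
  have hnorm : ‖Q‖ - ‖s‖ ≤ ‖s - Q‖ := norm_sub_rev s Q ▸ norm_sub_norm_le Q s
  linarith [hs.2]

/-- The direction of the right edge of `narrowCone`. -/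
noncomputable def rightDir : ℂ := ⟨3 / 5, 4 / 5⟩

/-- The direction of the left edge of `narrowCone`. -/
noncomputable def leftDir : ℂ := ⟨-3 / 5, 4 / 5⟩

/-- The unit vectors along the two edges of `narrowCone`, that is `rightDir` and `leftDir`. -/
structure IsConeDir (d : ℂ) : Prop where
  norm_eq : ‖d‖ = 1
  im_eq : d.im = 4 / 5

theorem isConeDir_rightDir : IsConeDir rightDir := by
  refine ⟨?_, rfl⟩
  rw [norm_eq_sqrt_sq_add_sq, Real.sqrt_eq_one]
  norm_num [rightDir]

theorem isConeDir_leftDir : IsConeDir leftDir := by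
  refine ⟨?_, rfl⟩
  rw [norm_eq_sqrt_sq_add_sq, Real.sqrt_eq_one]
  norm_num [leftDir]

/-- The logarithmic parametrization of the ray through `d`. -/
noncomputable def rayPoint (d : ℂ) (x : ℝ) : ℂ := Real.exp x * d

theorem continuous_rayPoint (d : ℂ) : Continuous (rayPoint d) := by
  unfold rayPoint
  fun_prop

theorem rayPoint_re (d : ℂ) (x : ℝ) : (rayPoint d x).re = Real.exp x * d.re := re_ofReal_mul _ _

theorem rayPoint_im (d : ℂ) (x : ℝ) : (rayPoint d x).im = Real.exp x * d.im := im_ofReal_mul _ _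

namespace IsConeDir

variable {d : ℂ}

theorem ne_zero (hd : IsConeDir d) : d ≠ 0 := norm_pos_iff.1 (hd.norm_eq ▸ one_pos)

theorem norm_rayPoint (hd : IsConeDir d) (x : ℝ) : ‖rayPoint d x‖ = Real.exp x := by
  rw [rayPoint, norm_mul, hd.norm_eq, mul_one, norm_real, Real.norm_of_nonneg (Real.exp_pos x).le]

theorem rayPoint_mem (hd : IsConeDir d) (x : ℝ) : rayPoint d x ∈ narrowCone := by
  refine ⟨norm_pos_iff.1 (hd.norm_rayPoint x ▸ Real.exp_pos x), ?_⟩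
  rw [hd.norm_rayPoint, rayPoint_im, hd.im_eq, mul_comm]

theorem abs_im_div_le_norm_rayPoint_sub (hd : IsConeDir d) (Q : ℂ) (x : ℝ) :
    |(Q / d).im| ≤ ‖rayPoint d x - Q‖ := by
  calc |(Q / d).im| ≤ ‖(Real.exp x : ℂ) - Q / d‖ := abs_im_le_norm_ofReal_sub _ _
    _ = ‖((Real.exp x : ℂ) - Q / d) * d‖ := by rw [norm_mul, hd.norm_eq, mul_one]
    _ = ‖rayPoint d x - Q‖ := by rw [sub_mul, div_mul_cancel₀ _ hd.ne_zero, rayPoint]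

theorem expKernel_div (hd : IsConeDir d) (Q : ℂ) (x : ℝ) : expKernel (Q / d) x =
    rayPoint d x / (rayPoint d x - Q) - rayPoint d x / (rayPoint d x + Q) := by
  have := hd.ne_zero
  rw [expKernel, rayPoint, ← mul_div_mul_right _ ((Real.exp x : ℂ) - Q / d) this, sub_mul,
    ← mul_div_mul_right _ ((Real.exp x : ℂ) + Q / d) this, add_mul, div_mul_cancel₀ _ this]

end IsConeDir

theorem div_rightDir_im (Q : ℂ) : (Q / rightDir).im = (3 * Q.im - 4 * Q.re) / 5 := by
  simp only [rightDir, div_im, normSq_mk]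
  ring

theorem div_leftDir_im (Q : ℂ) : (Q / leftDir).im = -(3 * Q.im + 4 * Q.re) / 5 := by
  simp only [leftDir, div_im, normSq_mk]
  ring

theorem norm_I_mul_exp (ζ : ℂ) : ‖I * exp ζ‖ = Real.exp ζ.re := by
  rw [norm_mul, norm_I, one_mul, norm_exp]

theorem I_mul_exp_mem_narrowCone {ζ : ℂ} (hζ : |ζ.im| ≤ Real.arccos (4 / 5)) :
    I * exp ζ ∈ narrowCone := by
  refine ⟨mul_ne_zero I_ne_zero (exp_ne_zero _), ?_⟩
  have hcos : 4 / 5 ≤ Real.cos ζ.im := by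
    rw [← Real.cos_abs, ← Real.cos_arccos (x := 4 / 5) (by norm_num) (by norm_num)]
    exact Real.cos_le_cos_of_nonneg_of_le_pi (abs_nonneg _) (Real.arccos_le_pi _) hζ
  rw [norm_I_mul_exp, I_mul_im, exp_re, mul_comm]
  gcongr

theorem sin_arccos_four_fifths : Real.sin (Real.arccos (4 / 5)) = 3 / 5 := by
  rw [Real.sin_arccos, Real.sqrt_eq_iff_mul_self_eq (by norm_num) (by norm_num)]
  norm_num

theorem rayPoint_rightDir (x : ℝ) :
    rayPoint rightDir x = I * exp (x + (-Real.arccos (4 / 5) : ℝ) * I) := by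
  have hcos := Real.cos_arccos (x := 4 / 5) (by norm_num) (by norm_num)
  apply Complex.ext
  · rw [I_mul_re, exp_im, rayPoint_re]
    simp [sin_arccos_four_fifths, rightDir]
  · rw [I_mul_im, exp_re, rayPoint_im]
    simp [hcos, rightDir]

theorem rayPoint_leftDir (x : ℝ) :
    rayPoint leftDir x = I * exp (x + Real.arccos (4 / 5) * I) := by
  have hcos := Real.cos_arccos (x := 4 / 5) (by norm_num) (by norm_num)
  apply Complex.ext
  · rw [I_mul_re, exp_im, rayPoint_re]
    simp [sin_arccos_four_fifths, leftDir, neg_div]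
  · rw [I_mul_im, exp_re, rayPoint_im]
    simp [hcos, leftDir]

theorem integral_rayPoint_rightDir_eq_leftDir {q : ℂ → ℂ} {c : ℝ}
    (hq : DifferentiableOn ℂ q narrowCone)
    (hqc : ∀ s ∈ narrowCone, ‖q s‖ ≤ c / (1 + ‖s‖) ^ 2) :
    ∫ x, rayPoint rightDir x * q (rayPoint rightDir x) =
      ∫ x, rayPoint leftDir x * q (rayPoint leftDir x) := by
  set t := Real.arccos (4 / 5)
  have ht : 0 ≤ t := Real.arccos_nonneg _
  have hmaps : MapsTo (fun ζ ↦ I * exp ζ) {ζ | ζ.im ∈ Icc (-t) t} narrowCone :=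
    fun ζ hζ ↦ I_mul_exp_mem_narrowCone (abs_le.2 hζ)
  simp_rw [rayPoint_rightDir, rayPoint_leftDir]
  refine integral_add_mul_I_eq (h := fun ζ ↦ I * exp ζ * q (I * exp ζ)) (by linarith : -t ≤ t)
    (DifferentiableOn.mul (by fun_prop) (hq.comp (by fun_prop) hmaps))
    (integrable_logisticDensity.const_mul c) ?_ ?_ fun ζ hζ ↦ ?_
  · simpa using tendsto_logisticDensity_atTop.const_mul c
  · simpa using tendsto_logisticDensity_atBot.const_mul c
  · have := hqc _ (hmaps hζ)
    rw [norm_I_mul_exp] at this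
    rw [norm_mul, norm_I_mul_exp, logisticDensity_eq, mul_div_left_comm]
    gcongr

end Cones

section RayCauchy

open Complex Metric Set Topology

/-- `J` is holomorphic on `wideCone`, of size `M ‖Q‖` at the vertex and `M ‖Q‖⁻²` at infinity. -/
structure ConeDecay (M : ℝ) (J : ℂ → ℂ) : Prop where
  nonneg : 0 ≤ M
  differentiableOn : DifferentiableOn ℂ J wideCone
  norm_le : ∀ Q ∈ wideCone, ‖J Q‖ ≤ M * (‖Q‖ / (1 + ‖Q‖) ^ 3)

/-- The Cauchy integral of `J` along the ray through `d`. -/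
noncomputable def rayCauchy (d : ℂ) (J : ℂ → ℂ) (Q : ℂ) : ℂ :=
  (2 * Real.pi * I)⁻¹ * ∫ x, J (rayPoint d x) * rayPoint d x / (rayPoint d x - Q)

namespace ConeDecay

variable {M : ℝ} {J : ℂ → ℂ} {d Q : ℂ} {η : ℝ}

theorem norm_mul_one_add_sq_le (hJ : ConeDecay M J) (hQ : Q ∈ wideCone) :
    ‖J Q‖ * (1 + ‖Q‖) ^ 2 ≤ M := by
  have : 0 ≤ M := hJ.nonneg
  calc ‖J Q‖ * (1 + ‖Q‖) ^ 2 ≤ M * (‖Q‖ / (1 + ‖Q‖) ^ 3) * (1 + ‖Q‖) ^ 2 := by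
        gcongr
        exact hJ.norm_le Q hQ
    _ = M * (‖Q‖ / (1 + ‖Q‖)) := by field
    _ ≤ M * 1 := by
        gcongr
        exact div_le_one_of_le₀ (by linarith) (by positivity)
    _ = M := mul_one M

theorem norm_mul_one_add_le (hJ : ConeDecay M J) (hQ : Q ∈ wideCone) :
    ‖J Q‖ * (1 + ‖Q‖) ≤ M := by
  refine le_trans ?_ (hJ.norm_mul_one_add_sq_le hQ)
  gcongr
  exact le_self_pow₀ (by linarith [norm_nonneg Q]) two_ne_zero

theorem norm_apply_mul_rayPoint_le (hJ : ConeDecay M J) (hd : IsConeDir d) (x : ℝ) :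
    ‖J (rayPoint d x) * rayPoint d x‖ ≤ M * logisticDensity x * Real.sigmoid x := by
  have := hJ.norm_le _ (narrowCone_subset_wideCone (hd.rayPoint_mem x))
  rw [hd.norm_rayPoint] at this
  rw [norm_mul, hd.norm_rayPoint]
  calc _ ≤ M * (Real.exp x / (1 + Real.exp x) ^ 3) * Real.exp x := by gcongr
    _ = M * logisticDensity x * Real.sigmoid x := by
        rw [logisticDensity_eq, sigmoid_eq_exp_div]
        field

theorem norm_apply_mul_rayPoint_le' (hJ : ConeDecay M J) (hd : IsConeDir d) (x : ℝ) :
    ‖J (rayPoint d x) * rayPoint d x‖ ≤ M * logisticDensity x :=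
  (hJ.norm_apply_mul_rayPoint_le hd x).trans <| mul_le_of_le_one_right
    (mul_nonneg hJ.nonneg (logisticDensity_nonneg x)) (Real.sigmoid_le_one x)

theorem continuous_apply_mul_rayPoint (hJ : ConeDecay M J) (hd : IsConeDir d) :
    Continuous fun x ↦ J (rayPoint d x) * rayPoint d x :=
  (hJ.differentiableOn.continuousOn.comp_continuous (continuous_rayPoint d)
    fun x ↦ narrowCone_subset_wideCone (hd.rayPoint_mem x)).mul (continuous_rayPoint d)

theorem aestronglyMeasurable_div_pow (hJ : ConeDecay M J) (hd : IsConeDir d) (Q : ℂ) (n : ℕ) :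
    AEStronglyMeasurable fun x ↦ J (rayPoint d x) * rayPoint d x / (rayPoint d x - Q) ^ n :=
  ((hJ.continuous_apply_mul_rayPoint hd).measurable.div
    (((continuous_rayPoint d).measurable.sub_const Q).pow_const n)).aestronglyMeasurable

theorem norm_div_pow_le (hJ : ConeDecay M J) (hd : IsConeDir d) (hη : 0 < η) (n : ℕ) {x : ℝ}
    (h : η ≤ ‖rayPoint d x - Q‖) :
    ‖J (rayPoint d x) * rayPoint d x / (rayPoint d x - Q) ^ n‖ ≤ M / η ^ n * logisticDensity x := by
  rw [norm_div, norm_pow, div_mul_eq_mul_div]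
  have := (norm_nonneg _).trans (hJ.norm_apply_mul_rayPoint_le' hd x)
  gcongr
  exact hJ.norm_apply_mul_rayPoint_le' hd x

theorem integrable_rayCauchy (hJ : ConeDecay M J) (hd : IsConeDir d) (hη : 0 < η)
    (h : ∀ x, η ≤ ‖rayPoint d x - Q‖) :
    Integrable fun x ↦ J (rayPoint d x) * rayPoint d x / (rayPoint d x - Q) := by
  simpa only [pow_one] using (integrable_logisticDensity.const_mul (M / η ^ 1)).mono'
    (hJ.aestronglyMeasurable_div_pow hd Q 1) (.of_forall fun x ↦ hJ.norm_div_pow_le hd hη 1 (h x))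

theorem differentiableAt_rayCauchy (hJ : ConeDecay M J) (hd : IsConeDir d) (hη : 0 < η)
    (h : ∀ x, η ≤ ‖rayPoint d x - Q‖) : DifferentiableAt ℂ (rayCauchy d J) Q := by
  have hball : ∀ x, ∀ P ∈ ball Q (η / 2), η / 2 ≤ ‖rayPoint d x - P‖ := fun x P hP ↦ by
    rw [mem_ball_iff_norm] at hP
    linarith [h x, norm_sub_le_norm_sub_add_norm_sub (rayPoint d x) P Q]
  refine (hasDerivAt_integral_of_dominated_loc_of_deriv_le
    (F' := fun P x ↦ J (rayPoint d x) * rayPoint d x / (rayPoint d x - P) ^ 2)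
    (ball_mem_nhds Q (half_pos hη))
    (.of_forall fun P ↦ by simpa only [pow_one] using hJ.aestronglyMeasurable_div_pow hd P 1)
    (hJ.integrable_rayCauchy hd hη h) (hJ.aestronglyMeasurable_div_pow hd Q 2)
    (.of_forall fun x P hP ↦ hJ.norm_div_pow_le hd (half_pos hη) 2 (hball x P hP))
    (integrable_logisticDensity.const_mul _)
    (.of_forall fun x P hP ↦ ?_)).2.differentiableAt.const_mul _
  have hne : rayPoint d x - P ≠ 0 := norm_pos_iff.1 (by linarith [hball x P hP])
  exact ((hasDerivAt_const P (J (rayPoint d x) * rayPoint d x)).div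
    ((hasDerivAt_id P).const_sub (rayPoint d x)) hne).congr_deriv (by simp)

theorem rayCauchy_sub {M' : ℝ} {J' : ℂ → ℂ} (hJ : ConeDecay M J) (hJ' : ConeDecay M' J')
    (hd : IsConeDir d) (hη : 0 < η) (h : ∀ x, η ≤ ‖rayPoint d x - Q‖) :
    rayCauchy d (fun Q ↦ J Q - J' Q) Q = rayCauchy d J Q - rayCauchy d J' Q := by
  simp_rw [rayCauchy, ← mul_sub, sub_mul, sub_div]
  rw [integral_sub (hJ.integrable_rayCauchy hd hη h) (hJ'.integrable_rayCauchy hd hη h)]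

theorem norm_div_sub_mul_one_add_le (hJ : ConeDecay M J) (hd : IsConeDir d) {x : ℝ}
    (h : 3 / 5 * Real.exp x ≤ ‖rayPoint d x - Q‖) :
    ‖J (rayPoint d x) * rayPoint d x / (rayPoint d x - Q)‖ * (1 + ‖Q‖) ≤
      13 / 3 * M * logisticDensity x := by
  have hpos : 0 < ‖rayPoint d x - Q‖ := (by positivity : 0 < 3 / 5 * Real.exp x).trans_le h
  have hQ : ‖Q‖ ≤ 8 / 3 * ‖rayPoint d x - Q‖ := by
    have := norm_le_norm_add_norm_sub (rayPoint d x) Q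
    rw [hd.norm_rayPoint] at this
    linarith
  have hexp : Real.sigmoid x ≤ Real.exp x := by
    rw [sigmoid_eq_exp_div]
    exact div_le_self (Real.exp_pos x).le (by linarith [Real.exp_pos x])
  have hsigmoid : Real.sigmoid x * (1 + ‖Q‖) ≤ 13 / 3 * ‖rayPoint d x - Q‖ := by
    linarith [mul_le_of_le_one_left (norm_nonneg Q) (Real.sigmoid_le_one x)]
  have := mul_nonneg hJ.nonneg (logisticDensity_nonneg x)
  rw [norm_div, div_mul_eq_mul_div, div_le_iff₀ hpos]
  calc _ ≤ M * logisticDensity x * Real.sigmoid x * (1 + ‖Q‖) := by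
        gcongr
        exact hJ.norm_apply_mul_rayPoint_le hd x
    _ = M * logisticDensity x * (Real.sigmoid x * (1 + ‖Q‖)) := mul_assoc _ _ _
    _ ≤ M * logisticDensity x * (13 / 3 * ‖rayPoint d x - Q‖) := by gcongr
    _ = _ := by ring

theorem norm_rayCauchy_mul_le (hJ : ConeDecay M J) (hd : IsConeDir d)
    (h : ∀ x, 3 / 5 * Real.exp x ≤ ‖rayPoint d x - Q‖) :
    ‖rayCauchy d J Q‖ * (1 + ‖Q‖) ≤ M := by
  have hM := hJ.nonneg
  have hint : ‖∫ x, J (rayPoint d x) * rayPoint d x / (rayPoint d x - Q)‖ ≤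
      ∫ x, 13 / 3 * M / (1 + ‖Q‖) * logisticDensity x := by
    refine norm_integral_le_of_norm_le (integrable_logisticDensity.const_mul _)
      (.of_forall fun x ↦ ?_)
    rw [div_mul_eq_mul_div, le_div_iff₀ (by positivity)]
    exact hJ.norm_div_sub_mul_one_add_le hd (h x)
  rw [integral_const_mul, integral_logisticDensity, mul_one, le_div_iff₀ (by positivity)] at hint
  have hpi : ‖(2 * Real.pi * I : ℂ)⁻¹‖ ≤ 6⁻¹ := by
    rw [norm_inv, norm_mul, norm_I, mul_one, norm_mul, norm_real, Complex.norm_two,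
      Real.norm_of_nonneg Real.pi_pos.le]
    gcongr
    linarith [Real.pi_gt_three]
  rw [rayCauchy, norm_mul, mul_assoc]
  calc _ ≤ 6⁻¹ * (13 / 3 * M) := by gcongr
    _ ≤ M := by linarith

theorem norm_rayCauchy_rightDir_mul_le (hJ : ConeDecay M J) (hQ : Q.re ≤ 0) :
    ‖rayCauchy rightDir J Q‖ * (1 + ‖Q‖) ≤ M := by
  refine hJ.norm_rayCauchy_mul_le isConeDir_rightDir fun x ↦ ?_
  have := (le_abs_self _).trans (abs_re_le_norm (rayPoint rightDir x - Q))
  rw [sub_re, rayPoint_re, show rightDir.re = 3 / 5 from rfl] at this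
  linarith

theorem norm_rayCauchy_leftDir_mul_le (hJ : ConeDecay M J) (hQ : 0 ≤ Q.re) :
    ‖rayCauchy leftDir J Q‖ * (1 + ‖Q‖) ≤ M := by
  refine hJ.norm_rayCauchy_mul_le isConeDir_leftDir fun x ↦ ?_
  have := (neg_le_abs _).trans (abs_re_le_norm (rayPoint leftDir x - Q))
  rw [sub_re, rayPoint_re, show leftDir.re = -3 / 5 from rfl] at this
  linarith

theorem rayCauchy_rightDir_eq_leftDir (hJ : ConeDecay M J) (hQ : Q ∈ outerSector) :
    rayCauchy rightDir J Q = rayCauchy leftDir J Q := by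
  set η := 5 / 9 * (4 / 5 * ‖Q‖ - Q.im)
  have hη : 0 < η := mul_pos (by norm_num) (sub_pos.2 hQ)
  have hdist : ∀ s ∈ narrowCone, η ≤ ‖s - Q‖ := fun s hs ↦
    mul_sub_le_norm_sub_of_mem_narrowCone hs Q
  have := integral_rayPoint_rightDir_eq_leftDir (q := fun s ↦ J s / (s - Q)) (c := M / η)
    ((hJ.differentiableOn.mono narrowCone_subset_wideCone).div (by fun_prop)
      fun s hs ↦ norm_pos_iff.1 (hη.trans_le (hdist s hs))) fun s hs ↦ by
    have hM := hJ.nonneg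
    rw [norm_div, div_right_comm]
    gcongr
    · rw [le_div_iff₀ (by positivity)]
      exact hJ.norm_mul_one_add_sq_le (narrowCone_subset_wideCone hs)
    · exact hdist s hs
  simp_rw [rayCauchy, mul_comm (J _), mul_div_assoc, this]

end ConeDecay

end RayCauchy

section Plemelj

open Complex Metric Set Topology

theorem exists_norm_dslope_le {f : ℂ → ℂ} {U S : Set ℂ} {Q : ℂ} (hU : IsOpen U) (hQ : Q ∈ U)
    (hf : DifferentiableOn ℂ f U) (hfQ : f Q = 0) {C : ℝ}
    (hC : ∀ s ∈ S, ‖f s‖ * (1 + ‖s‖) ≤ C) :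
    ∃ c, ∀ s ∈ S, ‖dslope f Q s‖ ≤ c / (1 + ‖s‖) ^ 2 := by
  obtain ⟨r, hr, hball⟩ := nhds_basis_closedBall.mem_iff.1 (hU.mem_nhds hQ)
  have hdslope := ((differentiableOn_dslope (hU.mem_nhds hQ)).2 hf).continuousOn
  obtain ⟨c, hc⟩ := (isCompact_closedBall Q r).exists_bound_of_continuousOn (hdslope.mono hball)
  set A := (1 + ‖Q‖) / r + 1
  refine ⟨max (c * (1 + ‖Q‖ + r) ^ 2) (C * A), fun s hs ↦ ?_⟩
  rw [le_div_iff₀ (by positivity), le_max_iff]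
  rcases le_or_gt ‖s - Q‖ r with hsQ | hsQ
  · left
    have hle := hc s (mem_closedBall_iff_norm.2 hsQ)
    have := (norm_nonneg _).trans hle
    gcongr ?_ * ?_ ^ 2
    linarith [norm_le_norm_sub_add s Q]
  · right
    have hpos : 0 < ‖s - Q‖ := hr.trans hsQ
    have hC₀ : 0 ≤ C := le_trans (by positivity) (hC s hs)
    rw [dslope_of_ne _ (sub_ne_zero.1 (norm_pos_iff.1 hpos)), slope_def_field, hfQ, sub_zero,
      norm_div, div_mul_eq_mul_div, div_le_iff₀ hpos, sq, ← mul_assoc, mul_assoc C]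
    gcongr
    · exact hC s hs
    · exact one_add_norm_le_mul_norm_sub hr hsQ.le

/-- `J` minus a multiple of the rational function `s ↦ (s + Q)⁻¹`, chosen to vanish at `Q`. -/
noncomputable def vanishingPart (J : ℂ → ℂ) (Q s : ℂ) : ℂ := J s - J Q * (2 * Q / (s + Q))

theorem vanishingPart_self (J : ℂ → ℂ) {Q : ℂ} (hQ : Q ≠ 0) : vanishingPart J Q Q = 0 := by
  rw [vanishingPart, ← two_mul, div_self (mul_ne_zero two_ne_zero hQ), mul_one, sub_self]

theorem im_lt_norm_add {Q s : ℂ} (hs : s ∈ wideCone) : Q.im < ‖s + Q‖ := by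
  have := im_pos_of_mem_wideCone hs
  linarith [im_le_norm (s + Q), add_im s Q]

theorem add_ne_zero_of_mem_wideCone {Q s : ℂ} (hQ : Q ∈ wideCone) (hs : s ∈ wideCone) :
    s + Q ≠ 0 :=
  norm_pos_iff.1 ((im_pos_of_mem_wideCone hQ).trans (im_lt_norm_add hs))

theorem ne_zero_of_mem_wideCone {Q : ℂ} (hQ : Q ∈ wideCone) : Q ≠ 0 := fun h ↦
  (im_pos_of_mem_wideCone hQ).ne (by rw [h, zero_im])

namespace ConeDecay

variable {M : ℝ} {J : ℂ → ℂ} {d Q : ℂ}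

theorem differentiableOn_vanishingPart (hJ : ConeDecay M J) (hQ : Q ∈ wideCone) :
    DifferentiableOn ℂ (vanishingPart J Q) wideCone :=
  hJ.differentiableOn.sub <| .const_mul
    (.div (by fun_prop) (by fun_prop) fun _ ↦ add_ne_zero_of_mem_wideCone hQ) _

theorem exists_norm_vanishingPart_mul_le (hJ : ConeDecay M J) (hQ : Q ∈ wideCone) :
    ∃ C, ∀ s ∈ wideCone, ‖vanishingPart J Q s‖ * (1 + ‖s‖) ≤ C := by
  have him := im_pos_of_mem_wideCone hQ
  set B := (1 + ‖Q‖) / Q.im + 1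
  refine ⟨M + ‖J Q‖ * (2 * ‖Q‖) * B, fun s hs ↦ ?_⟩
  have hB : 1 + ‖s‖ ≤ B * ‖s + Q‖ := by
    have := one_add_norm_le_mul_norm_sub (s := s) (w := -Q) him
      (by simpa using (im_lt_norm_add hs).le)
    rwa [norm_neg, sub_neg_eq_add] at this
  have hpos := him.trans (im_lt_norm_add (Q := Q) hs)
  calc ‖vanishingPart J Q s‖ * (1 + ‖s‖)
      ≤ (‖J s‖ + ‖J Q‖ * (2 * ‖Q‖ / ‖s + Q‖)) * (1 + ‖s‖) := by
        gcongr
        refine (norm_sub_le _ _).trans_eq ?_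
        rw [norm_mul, norm_div, norm_mul, Complex.norm_two]
    _ = ‖J s‖ * (1 + ‖s‖) + ‖J Q‖ * (2 * ‖Q‖ / ‖s + Q‖) * (1 + ‖s‖) := add_mul _ _ _
    _ ≤ M + ‖J Q‖ * (2 * ‖Q‖ / ‖s + Q‖) * (B * ‖s + Q‖) := by
        gcongr
        exact hJ.norm_mul_one_add_le hs
    _ = M + ‖J Q‖ * (2 * ‖Q‖) * B := by field

theorem integral_rayPoint_mul_dslope (hJ : ConeDecay M J) (hd : IsConeDir d) (hQ : Q ∈ wideCone)
    (hQd : (Q / d).im ≠ 0) :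
    ∫ x, rayPoint d x * dslope (vanishingPart J Q) Q (rayPoint d x) =
      2 * Real.pi * I * rayCauchy d J Q - J Q * ∫ x, expKernel (Q / d) x := by
  have hdist := hd.abs_im_div_le_norm_rayPoint_sub Q
  rw [rayCauchy, mul_inv_cancel_left₀ two_pi_I_ne_zero, ← integral_const_mul,
    ← integral_sub (hJ.integrable_rayCauchy hd (abs_pos.2 hQd) hdist)
      ((integrable_expKernel hQd).const_mul _)]
  congr with x
  have hm : rayPoint d x - Q ≠ 0 := norm_pos_iff.1 ((abs_pos.2 hQd).trans_le (hdist x))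
  have hp := add_ne_zero_of_mem_wideCone hQ (narrowCone_subset_wideCone (hd.rayPoint_mem x))
  rw [dslope_of_ne _ (sub_ne_zero.1 hm), slope_def_field,
    vanishingPart_self J (ne_zero_of_mem_wideCone hQ), hd.expKernel_div, vanishingPart]
  field

-- The Plemelj jump formula, in the sector between the two rays.
theorem rayCauchy_rightDir_eq_leftDir_add (hJ : ConeDecay M J) (hQ : 4 * |Q.re| < 3 * Q.im) :
    rayCauchy rightDir J Q = rayCauchy leftDir J Q + J Q := by
  have hQc := mem_wideCone_of_abs_re_lt hQ
  have hright : 0 < (Q / rightDir).im := by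
    rw [div_rightDir_im]
    linarith [le_abs_self Q.re]
  have hleft : (Q / leftDir).im < 0 := by
    rw [div_leftDir_im]
    linarith [neg_le_abs Q.re]
  have hdiff := hJ.differentiableOn_vanishingPart hQc
  obtain ⟨C, hC⟩ := hJ.exists_norm_vanishingPart_mul_le hQc
  obtain ⟨c, hc⟩ := exists_norm_dslope_le isOpen_wideCone hQc hdiff
    (vanishingPart_self J (ne_zero_of_mem_wideCone hQc)) hC
  have hdslope := (differentiableOn_dslope (isOpen_wideCone.mem_nhds hQc)).2 hdiff
  have hrot := integral_rayPoint_rightDir_eq_leftDir (hdslope.mono narrowCone_subset_wideCone)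
    fun s hs ↦ hc s (narrowCone_subset_wideCone hs)
  rw [hJ.integral_rayPoint_mul_dslope isConeDir_rightDir hQc hright.ne',
    hJ.integral_rayPoint_mul_dslope isConeDir_leftDir hQc hleft.ne,
    integral_expKernel_of_im_pos hright, integral_expKernel_of_im_neg hleft] at hrot
  refine mul_left_cancel₀ two_pi_I_ne_zero ?_
  linear_combination hrot

end ConeDecay

end Plemelj

section Cousin

open Complex Set Topology

/-- The solution, on `wideCone`, of the additive Cousin problem whose jump on the right half of
`wideCone` is `J`. -/
noncomputable def cousinInner (J : ℂ → ℂ) (Q : ℂ) : ℂ :=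
  if Q.re ≤ 0 then rayCauchy rightDir J Q else rayCauchy leftDir J Q + J Q

/-- The solution, on `outerSector`, of the additive Cousin problem whose jump on the right half of
`wideCone` is `J`. -/
noncomputable def cousinOuter (J : ℂ → ℂ) (Q : ℂ) : ℂ :=
  if Q.re ≤ 0 then rayCauchy rightDir J Q else rayCauchy leftDir J Q

theorem cousinOuter_of_re_nonpos (J : ℂ → ℂ) {Q : ℂ} (hQ : Q.re ≤ 0) :
    cousinOuter J Q = cousinInner J Q := by
  rw [cousinOuter, cousinInner, if_pos hQ, if_pos hQ]

theorem cousinOuter_of_re_pos (J : ℂ → ℂ) {Q : ℂ} (hQ : 0 < Q.re) :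
    cousinOuter J Q = cousinInner J Q - J Q := by
  rw [cousinOuter, cousinInner, if_neg hQ.not_ge, if_neg hQ.not_ge, add_sub_cancel_right]

namespace ConeDecay

variable {M : ℝ} {J : ℂ → ℂ} {Q : ℂ}

theorem norm_cousinOuter_mul_le (hJ : ConeDecay M J) (Q : ℂ) :
    ‖cousinOuter J Q‖ * (1 + ‖Q‖) ≤ M := by
  unfold cousinOuter
  split_ifs with hQ
  · exact hJ.norm_rayCauchy_rightDir_mul_le hQ
  · exact hJ.norm_rayCauchy_leftDir_mul_le (not_le.1 hQ).le

theorem norm_cousinInner_mul_le (hJ : ConeDecay M J) (hQ : Q ∈ wideCone) :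
    ‖cousinInner J Q‖ * (1 + ‖Q‖) ≤ 2 * M := by
  unfold cousinInner
  split_ifs with hQ₀
  · linarith [hJ.norm_rayCauchy_rightDir_mul_le hQ₀, hJ.nonneg]
  · calc _ ≤ (‖rayCauchy leftDir J Q‖ + ‖J Q‖) * (1 + ‖Q‖) := by
          gcongr
          exact norm_add_le _ _
      _ ≤ 2 * M := by
          linarith [hJ.norm_rayCauchy_leftDir_mul_le (not_le.1 hQ₀).le, hJ.norm_mul_one_add_le hQ]

theorem norm_cousinInner_le (hJ : ConeDecay M J) (hQ : Q ∈ wideCone) :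
    ‖cousinInner J Q‖ ≤ 2 * M :=
  (le_mul_of_one_le_right (norm_nonneg _) (by linarith [norm_nonneg Q])).trans
    (hJ.norm_cousinInner_mul_le hQ)

theorem differentiableOn_cousinInner (hJ : ConeDecay M J) :
    DifferentiableOn ℂ (cousinInner J) wideCone := by
  intro Q hQ
  apply DifferentiableAt.differentiableWithinAt
  have him := im_pos_of_mem_wideCone hQ
  rcases le_or_gt Q.re 0 with hre | hre
  · have hleft : 0 < (Q / rightDir).im := by
      rw [div_rightDir_im]
      linarith
    refine (hJ.differentiableAt_rayCauchy isConeDir_rightDir (abs_pos.2 hleft.ne')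
      (isConeDir_rightDir.abs_im_div_le_norm_rayPoint_sub Q)).congr_of_eventuallyEq ?_
    have hopen : IsOpen {P : ℂ | 4 * P.re < 3 * P.im} := isOpen_lt (by fun_prop) (by fun_prop)
    filter_upwards [hopen.mem_nhds (show 4 * Q.re < 3 * Q.im by linarith)] with P hP
    unfold cousinInner
    split_ifs with hP₀
    · rfl
    · refine (hJ.rayCauchy_rightDir_eq_leftDir_add ?_).symm
      rwa [abs_of_pos (not_le.1 hP₀)]
  · have hright : (Q / leftDir).im < 0 := by
      rw [div_leftDir_im]
      linarith
    refine ((hJ.differentiableAt_rayCauchy isConeDir_leftDir (abs_pos.2 hright.ne)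
      (isConeDir_leftDir.abs_im_div_le_norm_rayPoint_sub Q)).add
      (hJ.differentiableOn.differentiableAt
        (isOpen_wideCone.mem_nhds hQ))).congr_of_eventuallyEq ?_
    filter_upwards [continuous_re.continuousAt.eventually_const_lt hre] with P hP
    rw [cousinInner, if_neg hP.not_ge, Pi.add_apply]

theorem differentiableOn_cousinOuter (hJ : ConeDecay M J) :
    DifferentiableOn ℂ (cousinOuter J) outerSector := by
  refine DifferentiableOn.congr (f := rayCauchy rightDir J) (fun Q hQ ↦ ?_) fun Q hQ ↦ ?_
  · exact (hJ.differentiableAt_rayCauchy isConeDir_rightDir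
      (mul_pos (by norm_num : (0 : ℝ) < 5 / 9) (sub_pos.2 hQ))
      fun x ↦ mul_sub_le_norm_sub_of_mem_narrowCone
        (isConeDir_rightDir.rayPoint_mem x) Q).differentiableWithinAt
  · unfold cousinOuter
    split_ifs
    · rfl
    · exact (hJ.rayCauchy_rightDir_eq_leftDir hQ).symm

theorem cousinInner_sub {M' : ℝ} {J' : ℂ → ℂ} (hJ : ConeDecay M J) (hJ' : ConeDecay M' J')
    (hQ : Q ∈ wideCone) :
    cousinInner (fun Q ↦ J Q - J' Q) Q = cousinInner J Q - cousinInner J' Q := by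
  have him := im_pos_of_mem_wideCone hQ
  unfold cousinInner
  split_ifs with hre
  · refine hJ.rayCauchy_sub hJ' isConeDir_rightDir (abs_pos.2 ?_)
      (isConeDir_rightDir.abs_im_div_le_norm_rayPoint_sub Q)
    rw [div_rightDir_im]
    linarith
  · rw [hJ.rayCauchy_sub hJ' isConeDir_leftDir (abs_pos.2 ?_)
      (isConeDir_leftDir.abs_im_div_le_norm_rayPoint_sub Q)]
    · ring
    · rw [div_leftDir_im]
      linarith

end ConeDecay

theorem exists_eqOn_cousinInner {Γ : ℂ → ℂ → ℂ} {M r : ℝ} (hM₀ : 0 ≤ M) (hM : 2 * M < 1)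
    (hr : 2 * M ≤ r) (hΓ : ∀ φ ∈ boundedHolomorphicOn ℂ wideCone r, ConeDecay M fun Q ↦ Γ Q (φ Q))
    (hΓ' : ∀ Q ∈ wideCone, ∀ u v : ℂ, ‖u‖ ≤ r → ‖v‖ ≤ r →
      ‖Γ Q u - Γ Q v‖ ≤ M * (‖Q‖ / (1 + ‖Q‖) ^ 3) * ‖u - v‖) :
    ∃ φ ∈ boundedHolomorphicOn ℂ wideCone r,
      EqOn (cousinInner fun Q ↦ Γ Q (φ Q)) φ wideCone := by
  refine exists_fixedPoint_boundedHolomorphicOn isOpen_wideCone (by linarith)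
    (mul_nonneg zero_le_two hM₀) hM (T := fun φ ↦ cousinInner fun Q ↦ Γ Q (φ Q))
    (fun φ hφ ↦ ⟨(hΓ φ hφ).differentiableOn_cousinInner,
      fun Q hQ ↦ ((hΓ φ hφ).norm_cousinInner_le hQ).trans hr⟩)
    fun φ hφ ψ hψ D hD hφψ Q hQ ↦ ?_
  have hdiff : ConeDecay (M * D) fun Q ↦ Γ Q (φ Q) - Γ Q (ψ Q) := by
    refine ⟨mul_nonneg hM₀ hD, (hΓ φ hφ).differentiableOn.sub (hΓ ψ hψ).differentiableOn,
      fun P hP ↦ ?_⟩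
    calc ‖Γ P (φ P) - Γ P (ψ P)‖ ≤ M * (‖P‖ / (1 + ‖P‖) ^ 3) * ‖φ P - ψ P‖ :=
          hΓ' P hP _ _ (hφ.2 P hP) (hψ.2 P hP)
      _ ≤ M * (‖P‖ / (1 + ‖P‖) ^ 3) * D := by
          gcongr
          exact hφψ P hP
      _ = M * D * (‖P‖ / (1 + ‖P‖) ^ 3) := by ring
  rw [← (hΓ φ hφ).cousinInner_sub (hΓ ψ hψ) hQ, mul_assoc]
  exact hdiff.norm_cousinInner_le hQ

end Cousin

section RotationFlow

open Complex Set

variable {β : ℝ} {Q s t W : ℂ}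

/-- The fixed point of the flow `rotFlow β`. -/
noncomputable def rotCenter (β : ℝ) : ℂ := β / (2 * Real.pi * I)

/-- The flow of rotations about `rotCenter β` that has period `β` and unit velocity at `0`: the
linear rotations `z ↦ e ^ (2πit/β) z`, read in a coordinate near `z = ∞` that puts the origin at
unit speed. -/
noncomputable def rotFlow (β : ℝ) (t Q : ℂ) : ℂ :=
  rotCenter β + (Q - rotCenter β) * exp (-(t / rotCenter β))

theorem div_rotCenter (β : ℝ) (t : ℂ) : t / rotCenter β = (2 * Real.pi / β : ℝ) * (I * t) := by
  rw [rotCenter, div_div_eq_mul_div]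
  push_cast
  ring

theorem div_rotCenter_re (β : ℝ) (t : ℂ) : (t / rotCenter β).re = -(2 * Real.pi / β * t.im) := by
  rw [div_rotCenter, re_ofReal_mul, I_mul_re, mul_neg]

theorem div_rotCenter_im (β : ℝ) (t : ℂ) : (t / rotCenter β).im = 2 * Real.pi / β * t.re := by
  rw [div_rotCenter, im_ofReal_mul, I_mul_im]

theorem norm_rotCenter (hβ : 0 < β) : ‖rotCenter β‖ = β / (2 * Real.pi) := by
  rw [rotCenter, norm_div, norm_mul, norm_mul, norm_I, norm_ofNat, norm_real, norm_real, mul_one,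
    Real.norm_of_nonneg hβ.le, Real.norm_of_nonneg Real.pi_pos.le]

theorem norm_div_rotCenter (hβ : 0 < β) (t : ℂ) : ‖t / rotCenter β‖ = 2 * Real.pi / β * ‖t‖ := by
  rw [norm_div, norm_rotCenter hβ]
  field

theorem rotCenter_ne_zero (hβ : 0 < β) : rotCenter β ≠ 0 := by
  have : 0 < Real.pi := Real.pi_pos
  exact norm_pos_iff.1 (by rw [norm_rotCenter hβ]; positivity)

theorem rotFlow_rotFlow (β : ℝ) (s t Q : ℂ) :
    rotFlow β s (rotFlow β t Q) = rotFlow β (t + s) Q := by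
  simp only [rotFlow, add_div, neg_add, exp_add]
  ring

theorem rotFlow_zero_left (β : ℝ) (Q : ℂ) : rotFlow β 0 Q = Q := by
  rw [rotFlow, zero_div, neg_zero, exp_zero, mul_one, add_sub_cancel]

theorem rotFlow_zero_right (β : ℝ) (t : ℂ) :
    rotFlow β t 0 = rotCenter β * (1 - exp (-(t / rotCenter β))) := by
  rw [rotFlow]
  ring

theorem two_pi_div_le (hβ : 10 ^ 6 ≤ β) : 2 * Real.pi / β ≤ 1 / 10 ^ 5 := by
  rw [div_le_div_iff₀ (by linarith) (by norm_num)]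
  linarith [Real.pi_lt_four]

theorem norm_sub_rotCenter_mul_le (hβ : 10 ^ 6 ≤ β) (hQ : 100 ≤ ‖Q‖) :
    ‖Q - rotCenter β‖ * (2 * Real.pi / β) ≤ ‖Q‖ / 98 := by
  have hβ₀ : 0 < β := by linarith
  have : 0 < Real.pi := Real.pi_pos
  calc _ ≤ (‖Q‖ + β / (2 * Real.pi)) * (2 * Real.pi / β) := by
        gcongr
        exact norm_rotCenter hβ₀ ▸ norm_sub_le Q (rotCenter β)
    _ = ‖Q‖ * (2 * Real.pi / β) + 1 := by field
    _ ≤ ‖Q‖ * (1 / 10 ^ 5) + 1 := by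
        gcongr ‖Q‖ * ?_ + 1
        exact two_pi_div_le hβ
    _ ≤ _ := by linarith

theorem norm_exp_sub_one_le_of_norm_le (hβ : 10 ^ 6 ≤ β) (ht : ‖t‖ ≤ 1000) :
    ‖exp (-(t / rotCenter β)) - 1‖ ≤ 2 * (2 * Real.pi / β * ‖t‖) := by
  have hβ₀ : 0 < β := by linarith
  have hnorm := norm_div_rotCenter hβ₀ t
  rw [← hnorm, ← norm_neg (t / rotCenter β)]
  refine norm_exp_sub_one_le ?_
  rw [norm_neg, hnorm]
  calc _ ≤ 1 / 10 ^ 5 * (1000 : ℝ) := by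
        gcongr ?_ * ?_
        exact two_pi_div_le hβ
    _ ≤ 1 := by norm_num

theorem norm_rotFlow_sub_rotFlow_le (hβ : 10 ^ 6 ≤ β) (hQ : 100 ≤ ‖Q‖) (hs : ‖s‖ ≤ 2)
    (ht : ‖t‖ ≤ 2) : ‖rotFlow β s Q - rotFlow β t Q‖ ≤ ‖Q‖ / 48 * ‖s - t‖ := by
  have hexp : ‖exp (-(t / rotCenter β))‖ ≤ 101 / 100 := by
    have h1 := norm_exp_sub_one_le_of_norm_le hβ (ht.trans (by norm_num))
    have h2 : 2 * Real.pi / β * ‖t‖ ≤ 1 / 10 ^ 5 * 2 := by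
      gcongr ?_ * ?_
      exact two_pi_div_le hβ
    have h3 := norm_le_norm_sub_add (exp (-(t / rotCenter β))) 1
    rw [norm_one] at h3
    linarith
  have hst : ‖s - t‖ ≤ 1000 := (norm_sub_le s t).trans (by linarith)
  calc ‖rotFlow β s Q - rotFlow β t Q‖
      = ‖Q - rotCenter β‖ *
          (‖exp (-(t / rotCenter β))‖ * ‖exp (-((s - t) / rotCenter β)) - 1‖) := by
        rw [← norm_mul, ← norm_mul, mul_sub, ← exp_add, rotFlow, rotFlow]
        ring_nf
    _ ≤ ‖Q - rotCenter β‖ * (101 / 100 * (2 * (2 * Real.pi / β * ‖s - t‖))) := by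
        gcongr
        exact norm_exp_sub_one_le_of_norm_le hβ hst
    _ = 101 / 50 * (‖Q - rotCenter β‖ * (2 * Real.pi / β)) * ‖s - t‖ := by ring
    _ ≤ 101 / 50 * (‖Q‖ / 98) * ‖s - t‖ := by
        gcongr ?_ * ‖s - t‖
        exact mul_le_mul_of_nonneg_left (norm_sub_rotCenter_mul_le hβ hQ) (by norm_num)
    _ ≤ ‖Q‖ / 48 * ‖s - t‖ := by
        gcongr ?_ * ‖s - t‖
        linarith

theorem norm_one_add_le_of_norm_le {d : ℂ} (hd : ‖d‖ ≤ 1 / 10) : ‖1 + d‖ ≤ 11 / 10 :=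
  (norm_add_le _ _).trans (by rw [norm_one]; linarith)

theorem norm_rotFlow_one_add_sub_le (hβ : 10 ^ 6 ≤ β) (hQ : 100 ≤ ‖Q‖) {d : ℂ}
    (hd : ‖d‖ ≤ 1 / 10) : ‖rotFlow β (1 + d) Q - Q‖ ≤ ‖Q‖ / 40 := by
  have hd₁ := norm_one_add_le_of_norm_le hd
  have := norm_rotFlow_sub_rotFlow_le hβ hQ (hd₁.trans (by norm_num)) (t := 0) (by norm_num)
  rw [rotFlow_zero_left, sub_zero] at this
  have := mul_le_mul_of_nonneg_left hd₁ (div_nonneg (norm_nonneg Q) (by norm_num : (0 : ℝ) ≤ 48))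
  linarith

theorem mul_norm_le_norm_rotFlow_one_add (hβ : 10 ^ 6 ≤ β) (hQ : 100 ≤ ‖Q‖) {d : ℂ}
    (hd : ‖d‖ ≤ 1 / 10) : 39 / 40 * ‖Q‖ ≤ ‖rotFlow β (1 + d) Q‖ := by
  have := norm_rotFlow_one_add_sub_le hβ hQ hd
  have := norm_sub_norm_le Q (rotFlow β (1 + d) Q)
  rw [norm_sub_rev] at this
  linarith

theorem rotFlow_zero_right_eq (β : ℝ) (t : ℂ) : rotFlow β t 0 =
    (-(β / (2 * Real.pi)) : ℝ) * (I * (1 - exp (-(t / rotCenter β)))) := by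
  rw [rotFlow_zero_right, ← mul_assoc, rotCenter, ← div_div, div_I]
  push_cast
  ring

theorem re_rotFlow_zero (β : ℝ) (t : ℂ) : (rotFlow β t 0).re = β / (2 * Real.pi) *
    (Real.exp (2 * Real.pi / β * t.im) * Real.sin (2 * Real.pi / β * t.re)) := by
  rw [rotFlow_zero_right_eq, re_ofReal_mul, I_mul_re, sub_im, one_im, exp_im,
    neg_re, neg_im, div_rotCenter_re, div_rotCenter_im, neg_neg, Real.sin_neg]
  ring

theorem im_rotFlow_zero (β : ℝ) (t : ℂ) : (rotFlow β t 0).im = β / (2 * Real.pi) *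
    (Real.exp (2 * Real.pi / β * t.im) * Real.cos (2 * Real.pi / β * t.re) - 1) := by
  rw [rotFlow_zero_right_eq, im_ofReal_mul, I_mul_im, sub_re, one_re, exp_re,
    neg_re, neg_im, div_rotCenter_re, div_rotCenter_im, neg_neg, Real.cos_neg]
  ring

theorem re_rotFlow_zero_pos (hβ : 0 < β) (h₀ : 0 < t.re) (h₁ : t.re < β / 2) :
    0 < (rotFlow β t 0).re := by
  rw [re_rotFlow_zero]
  have : 0 < Real.pi := Real.pi_pos
  have hsin : 0 < Real.sin (2 * Real.pi / β * t.re) := by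
    apply Real.sin_pos_of_pos_of_lt_pi (by positivity)
    rw [div_mul_eq_mul_div, div_lt_iff₀ hβ]
    nlinarith
  positivity

theorem re_rotFlow_zero_nonpos (hβ : 0 < β) (h₀ : t.re ≤ 0) (h₁ : -(β / 2) < t.re) :
    (rotFlow β t 0).re ≤ 0 := by
  rw [re_rotFlow_zero]
  have : 0 < Real.pi := Real.pi_pos
  have hsin : Real.sin (2 * Real.pi / β * t.re) ≤ 0 := by
    apply Real.sin_nonpos_of_nonpos_of_neg_pi_le
    · exact mul_nonpos_of_nonneg_of_nonpos (by positivity) h₀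
    · rw [div_mul_eq_mul_div, le_div_iff₀ hβ]
      nlinarith
  exact mul_nonpos_of_nonneg_of_nonpos (by positivity)
    (mul_nonpos_of_nonneg_of_nonpos (Real.exp_pos _).le hsin)

theorem norm_rotFlow_zero_le (hβ : 10 ^ 6 ≤ β) (ht : ‖t‖ ≤ 1000) : ‖rotFlow β t 0‖ ≤ 2 * ‖t‖ := by
  have hβ₀ : 0 < β := by linarith
  have : 0 < Real.pi := Real.pi_pos
  rw [rotFlow_zero_right, norm_mul, norm_sub_rev, norm_rotCenter hβ₀]
  calc _ ≤ β / (2 * Real.pi) * (2 * (2 * Real.pi / β * ‖t‖)) := by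
        gcongr
        exact norm_exp_sub_one_le_of_norm_le hβ ht
    _ = 2 * ‖t‖ := by field

theorem mul_exp_sub_one_le_norm_rotFlow_zero (hβ : 0 < β) (t : ℂ) :
    β / (2 * Real.pi) * (Real.exp (2 * Real.pi / β * t.im) - 1) ≤ ‖rotFlow β t 0‖ := by
  have : 0 < Real.pi := Real.pi_pos
  rw [rotFlow_zero_right, norm_mul, norm_sub_rev, norm_rotCenter hβ]
  gcongr
  have := norm_sub_norm_le (exp (-(t / rotCenter β))) 1
  rwa [norm_exp, neg_re, div_rotCenter_re, neg_neg, norm_one] at this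

theorem rotFlow_add_mul_intCast (hβ : 0 < β) (t : ℂ) (j : ℤ) (Q : ℂ) :
    rotFlow β (t + β * j) Q = rotFlow β t Q := by
  have hβ' : (β : ℂ) ≠ 0 := ofReal_ne_zero.2 hβ.ne'
  have : -((t + β * j) / rotCenter β) = -(t / rotCenter β) + (-j : ℤ) * (2 * Real.pi * I) := by
    rw [rotCenter]
    push_cast
    field
  rw [rotFlow, rotFlow, this, exp_add, exp_int_mul_two_pi_mul_I, mul_one]

theorem exists_int_of_rotFlow_zero_eq (hβ : 0 < β) (h : rotFlow β s 0 = rotFlow β t 0) :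
    ∃ j : ℤ, s = t + β * j := by
  have hβ' : (β : ℂ) ≠ 0 := ofReal_ne_zero.2 hβ.ne'
  have hπ : (Real.pi : ℂ) ≠ 0 := ofReal_ne_zero.2 Real.pi_ne_zero
  rw [rotFlow_zero_right, rotFlow_zero_right, mul_right_inj' (rotCenter_ne_zero hβ),
    sub_right_inj, exp_eq_exp_iff_exists_int] at h
  obtain ⟨n, hn⟩ := h
  refine ⟨-n, ?_⟩
  have hc : rotCenter β * (2 * Real.pi * I) = β := by
    rw [rotCenter, div_mul_cancel₀ _ (by simp [hπ])]
  have hc₀ := rotCenter_ne_zero hβ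
  field_simp at hn
  push_cast
  linear_combination -hn - n * hc

theorem abs_re_rotFlow_zero_le_im (hβ : 10 ^ 6 ≤ β) (hre : |t.re| ≤ 3) (him : 30 ≤ t.im) :
    |(rotFlow β t 0).re| ≤ (rotFlow β t 0).im := by
  have : 0 < β := by linarith
  have : 0 < Real.pi := Real.pi_pos
  rw [re_rotFlow_zero, im_rotFlow_zero, abs_mul, abs_of_pos (by positivity), abs_mul, Real.abs_exp]
  gcongr
  have hθ := two_pi_div_le hβ
  set θ := 2 * Real.pi / β
  have hθ₀ : 0 < θ := by positivity
  have hre' : |θ * t.re| ≤ 3 * θ := by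
    rw [abs_mul, abs_of_pos hθ₀]
    nlinarith
  have hcos : 1 - 3 * θ ≤ Real.cos (θ * t.re) := by
    have := Real.one_sub_sq_div_two_le_cos (x := θ * t.re)
    have : (θ * t.re) ^ 2 ≤ (3 * θ) ^ 2 := sq_le_sq' (abs_le.1 hre').1 (abs_le.1 hre').2
    nlinarith
  have hsin : |Real.sin (θ * t.re)| ≤ 3 * θ := Real.abs_sin_le_abs.trans hre'
  have hexp : 1 ≤ Real.exp (θ * t.im) * (1 - 6 * θ) := by
    calc 1 ≤ (1 + θ * t.im) * (1 - 6 * θ) := by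
          nlinarith [mul_nonneg hθ₀.le (show 0 ≤ t.im * (1 - 6 * θ) - 6 by nlinarith)]
      _ ≤ _ := by
          gcongr
          · linarith
          · linarith [Real.add_one_le_exp (θ * t.im)]
  nlinarith [Real.exp_pos (θ * t.im)]

theorem mul_norm_le_im_of_abs_re_le_im (h : |Q.re| ≤ Q.im) : 7 / 10 * ‖Q‖ ≤ Q.im := by
  have h₀ : 0 ≤ Q.im := (abs_nonneg _).trans h
  have hre : Q.re ^ 2 ≤ Q.im ^ 2 := sq_le_sq' (abs_le.1 h).1 (abs_le.1 h).2
  refine le_of_sq_le_sq ?_ h₀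
  rw [mul_pow, ← normSq_eq_norm_sq, normSq_apply]
  nlinarith

end RotationFlow

section RotationTime

open Complex Set

variable {β : ℝ} {Q W : ℂ}

/-- The flow time from `0` to `Q` under `rotFlow β`, for `Q` in the upper half plane. -/
noncomputable def rotTime (β : ℝ) (Q : ℂ) : ℂ :=
  -rotCenter β * log (1 - Q / rotCenter β)

theorem one_sub_div_rotCenter_re (β : ℝ) (Q : ℂ) :
    (1 - Q / rotCenter β).re = 1 + 2 * Real.pi / β * Q.im := by
  rw [sub_re, one_re, div_rotCenter_re, sub_neg_eq_add]

theorem one_sub_div_rotCenter_re_pos (hβ : 0 < β) (hQ : 0 < Q.im) :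
    0 < (1 - Q / rotCenter β).re := by
  have := Real.pi_pos
  rw [one_sub_div_rotCenter_re]
  positivity

theorem one_add_mul_im_le_norm (β : ℝ) (Q : ℂ) :
    1 + 2 * Real.pi / β * Q.im ≤ ‖1 - Q / rotCenter β‖ := by
  rw [← one_sub_div_rotCenter_re]
  exact re_le_norm _

theorem differentiableOn_rotTime (hβ : 0 < β) : DifferentiableOn ℂ (rotTime β) {Q | 0 < Q.im} := by
  refine .const_mul (.clog (by fun_prop) fun Q hQ ↦ ?_) _
  exact Or.inl (one_sub_div_rotCenter_re_pos hβ hQ)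

theorem rotFlow_rotTime (hβ : 0 < β) (hQ : 0 < Q.im) : rotFlow β (rotTime β Q) 0 = Q := by
  have hc := rotCenter_ne_zero hβ
  have h₀ : 1 - Q / rotCenter β ≠ 0 := fun h ↦ by
    simpa [h] using one_sub_div_rotCenter_re_pos hβ hQ
  rw [rotFlow_zero_right, rotTime, neg_mul, neg_div, neg_neg, mul_div_cancel_left₀ _ hc,
    exp_log h₀]
  field

theorem rotTime_rotFlow (hβ : 0 < β) (hW : |W.re| < β / 2) : rotTime β (rotFlow β W 0) = W := by
  have hc := rotCenter_ne_zero hβ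
  have hlt : |2 * Real.pi / β * W.re| < Real.pi := by
    have := Real.pi_pos
    rw [abs_mul, abs_of_pos (by positivity), div_mul_eq_mul_div, div_lt_iff₀ hβ]
    nlinarith
  have him : (-(W / rotCenter β)).im = -(2 * Real.pi / β * W.re) := by
    rw [neg_im, div_rotCenter_im]
  rw [abs_lt] at hlt
  rw [rotTime, rotFlow_zero_right, mul_div_cancel_left₀ _ hc, sub_sub_cancel,
    log_exp (by linarith) (by linarith)]
  field

theorem rotTime_eq_ofReal_mul (β : ℝ) (Q : ℂ) :
    rotTime β Q = (β / (2 * Real.pi) : ℝ) * (I * log (1 - Q / rotCenter β)) := by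
  rw [rotTime, ← mul_assoc]
  congr 1
  rw [rotCenter, ← div_div, div_I]
  push_cast
  ring

theorem rotTime_im (β : ℝ) (Q : ℂ) :
    (rotTime β Q).im = β / (2 * Real.pi) * Real.log ‖1 - Q / rotCenter β‖ := by
  rw [rotTime_eq_ofReal_mul, im_ofReal_mul, I_mul_im, log_re]

theorem abs_rotTime_re_lt (hβ : 0 < β) (hQ : 0 < Q.im) : |(rotTime β Q).re| < β / 4 := by
  have harg := abs_arg_lt_pi_div_two_iff.2 (Or.inl (one_sub_div_rotCenter_re_pos hβ hQ))
  have := Real.pi_pos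
  rw [rotTime_eq_ofReal_mul, re_ofReal_mul, I_mul_re, log_im, abs_mul, abs_neg,
    abs_of_pos (by positivity)]
  calc _ < β / (2 * Real.pi) * (Real.pi / 2) := by gcongr
    _ = β / 4 := by field

theorem rotTime_im_nonneg (hβ : 0 < β) (hQ : 0 < Q.im) : 0 ≤ (rotTime β Q).im := by
  have : 0 < Real.pi := Real.pi_pos
  have hone : 1 ≤ ‖1 - Q / rotCenter β‖ := by
    refine le_trans ?_ (one_add_mul_im_le_norm β Q)
    have : 0 < 2 * Real.pi / β * Q.im := by positivity
    linarith
  rw [rotTime_im]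
  exact mul_nonneg (by positivity) (Real.log_nonneg hone)

theorem three_mul_log_one_add_norm_le (hβ : 3 ≤ β) (hQ : Q ∈ wideCone) :
    3 * Real.log (1 + ‖Q‖) ≤ 2 * Real.pi * (rotTime β Q).im := by
  have hπ := Real.pi_gt_three
  have : 0 < β := by linarith
  have him := im_pos_of_mem_wideCone hQ
  have hQ' : ‖Q‖ < 2 * Q.im := hQ
  have hs : 0 < 2 * Real.pi / β * Q.im := by positivity
  have hbernoulli : 1 + ‖Q‖ ≤ (1 + 2 * Real.pi / β * Q.im) ^ (β / 3) :=
    calc 1 + ‖Q‖ ≤ 1 + 2 * Real.pi / 3 * Q.im := by nlinarith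
      _ = 1 + β / 3 * (2 * Real.pi / β * Q.im) := by field
      _ ≤ _ := one_add_mul_self_le_rpow_one_add (by linarith) (by linarith)
  have hlog := Real.log_le_log (by positivity) hbernoulli
  rw [Real.log_rpow (by linarith)] at hlog
  calc 3 * Real.log (1 + ‖Q‖) ≤ β * Real.log (1 + 2 * Real.pi / β * Q.im) := by linarith
    _ ≤ β * Real.log ‖1 - Q / rotCenter β‖ := by
        gcongr
        exact one_add_mul_im_le_norm β Q
    _ = 2 * Real.pi * (rotTime β Q).im := by
        rw [rotTime_im]
        field

theorem exp_neg_rotTime_im_le (hβ : 3 ≤ β) (hQ : Q ∈ wideCone) :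
    Real.exp (-(2 * Real.pi * (rotTime β Q).im)) ≤ 1 / (1 + ‖Q‖) ^ 3 := by
  have : 0 < 1 + ‖Q‖ := by positivity
  rw [Real.exp_neg, one_div]
  gcongr
  rw [← Real.log_le_iff_le_exp (by positivity), Real.log_pow]
  exact_mod_cast three_mul_log_one_add_norm_le hβ hQ

end RotationTime

section PeriodicPerturbation

open Complex Set Metric

variable {β : ℝ} {Q u v : ℂ} {γ : ℂ → ℂ}

/-- A small holomorphic function of period `1` on a half plane that decays towards `+i∞`: the
difference between a lifted near-rotation and a translation. -/
structure IsPeriodicPerturbation (γ : ℂ → ℂ) : Prop where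
  differentiableOn : DifferentiableOn ℂ γ {w | -1 < w.im}
  periodic : Function.Periodic γ 1
  norm_le (w : ℂ) : -1 < w.im → ‖γ w‖ ≤ 1 / 10 ^ 6 * Real.exp (-(2 * Real.pi * w.im))

/-- An approximate Fatou coordinate on the cone: the term `1 / Q` keeps its imaginary part large
near the vertex. -/
noncomputable def approxFatouCoord (β : ℝ) (Q : ℂ) : ℂ := rotTime β Q - 1 / Q

theorem differentiableOn_approxFatouCoord (hβ : 0 < β) :
    DifferentiableOn ℂ (approxFatouCoord β) wideCone :=
  ((differentiableOn_rotTime hβ).mono fun _ hQ ↦ im_pos_of_mem_wideCone hQ).sub <|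
    .fun_div (differentiableOn_const 1) differentiableOn_id fun _ hQ ↦ ne_zero_of_mem_wideCone hQ

theorem approxFatouCoord_im (β : ℝ) (Q : ℂ) :
    (approxFatouCoord β Q).im = (rotTime β Q).im + Q.im / ‖Q‖ ^ 2 := by
  rw [approxFatouCoord, sub_im, one_div, inv_im, normSq_eq_norm_sq]
  ring

theorem approxFatouCoord_im_pos (hβ : 0 < β) (hQ : Q ∈ wideCone) :
    0 < (approxFatouCoord β Q).im := by
  have him := im_pos_of_mem_wideCone hQ
  have hnorm := norm_pos_iff.2 (ne_zero_of_mem_wideCone hQ)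
  rw [approxFatouCoord_im]
  exact add_pos_of_nonneg_of_pos (rotTime_im_nonneg hβ him) (by positivity)

theorem inv_norm_le_two_pi_mul (hQ : Q ∈ wideCone) : ‖Q‖⁻¹ ≤ 2 * Real.pi * (Q.im / ‖Q‖ ^ 2) := by
  have hQ' : ‖Q‖ < 2 * Q.im := hQ
  have hnorm := norm_pos_iff.2 (ne_zero_of_mem_wideCone hQ)
  rw [← mul_div_assoc, inv_eq_one_div, div_le_div_iff₀ hnorm (by positivity)]
  have := Real.pi_gt_three
  have : ‖Q‖ ≤ 2 * Real.pi * Q.im := by nlinarith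
  nlinarith

theorem exp_neg_approxFatouCoord_im_le (hβ : 3 ≤ β) (hQ : Q ∈ wideCone) :
    Real.exp (-(2 * Real.pi * (approxFatouCoord β Q).im)) ≤ ‖Q‖ / (1 + ‖Q‖) ^ 3 := by
  have hnorm := norm_pos_iff.2 (ne_zero_of_mem_wideCone hQ)
  have hvertex : Real.exp (-(2 * Real.pi * (Q.im / ‖Q‖ ^ 2))) ≤ ‖Q‖ := by
    rw [Real.exp_neg, inv_le_comm₀ (Real.exp_pos _) hnorm]
    linarith [inv_norm_le_two_pi_mul hQ, Real.add_one_le_exp (2 * Real.pi * (Q.im / ‖Q‖ ^ 2))]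
  rw [approxFatouCoord_im, mul_add, neg_add, Real.exp_add]
  calc _ ≤ 1 / (1 + ‖Q‖) ^ 3 * ‖Q‖ := by
        gcongr
        exact exp_neg_rotTime_im_le hβ hQ
    _ = _ := by ring

theorem exp_two_pi_div_five_le : Real.exp (2 * Real.pi * (1 / 5)) ≤ 4 := by
  rw [← Real.le_log_iff_exp_le (by norm_num), show (4 : ℝ) = 2 ^ 2 by norm_num, Real.log_pow]
  push_cast
  linarith [Real.pi_lt_d2, Real.log_two_gt_d9]

/-- Corrections `ψ₁` and `ψ₀` of the flow time: the coordinate `rotTime β Q + ψ₁ Q` on the cone and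
the coordinate `W + ψ₀ (rotFlow β W 0)` outside it agree on the left of the imaginary axis and
differ by `γ` on its right, so that going once around the centre of rotation `rotCenter β` amounts
to applying `w ↦ w + γ w`. -/
structure FatouGluing (β : ℝ) (γ ψ₁ ψ₀ : ℂ → ℂ) : Prop where
  periodic : Function.Periodic γ 1
  differentiableOn_inner : DifferentiableOn ℂ ψ₁ wideCone
  differentiableOn_outer : DifferentiableOn ℂ ψ₀ outerSector
  norm_inner_mul_le : ∀ Q ∈ wideCone, ‖ψ₁ Q‖ * ‖Q‖ ≤ 2
  norm_outer_mul_le (Q : ℂ) : ‖ψ₀ Q‖ * ‖Q‖ ≤ 2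
  outer_of_re_nonpos : ∀ Q ∈ wideCone, Q.re ≤ 0 → ψ₀ Q = ψ₁ Q
  outer_of_re_pos : ∀ Q ∈ wideCone, 0 < Q.re → ψ₀ Q = ψ₁ Q + γ (rotTime β Q + ψ₁ Q)

theorem ne_zero_of_mem_outerSector (hQ : Q ∈ outerSector) : Q ≠ 0 := by
  rintro rfl
  simp [outerSector] at hQ

theorem norm_sub_one_div_mul_norm_le (h : ‖u‖ * (1 + ‖Q‖) ≤ 1 / 100) : ‖u - 1 / Q‖ * ‖Q‖ ≤ 2 := by
  have hinv : ‖1 / Q‖ * ‖Q‖ ≤ 1 := by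
    rw [one_div, norm_inv]
    exact inv_mul_le_one
  calc ‖u - 1 / Q‖ * ‖Q‖ ≤ (‖u‖ + ‖1 / Q‖) * ‖Q‖ := by
        gcongr
        exact norm_sub_le _ _
    _ ≤ 2 := by nlinarith [norm_nonneg u]

namespace IsPeriodicPerturbation

theorem neg_one_lt_im (hβ : 0 < β) (hQ : Q ∈ wideCone) (hu : ‖u‖ ≤ 1 / 5) :
    -1 < (approxFatouCoord β Q + u).im := by
  have := approxFatouCoord_im_pos hβ hQ
  have := (abs_le.1 ((abs_im_le_norm u).trans hu)).1
  rw [add_im]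
  linarith

theorem norm_approxFatouCoord_add_le (hγ : IsPeriodicPerturbation γ) (hβ : 3 ≤ β)
    (hQ : Q ∈ wideCone) (hu : ‖u‖ ≤ 1 / 5) :
    ‖γ (approxFatouCoord β Q + u)‖ ≤ 1 / 250000 * (‖Q‖ / (1 + ‖Q‖) ^ 3) := by
  have hu' := (abs_le.1 ((abs_im_le_norm u).trans hu)).1
  have hexp : Real.exp (-(2 * Real.pi * u.im)) ≤ 4 := by
    refine le_trans (Real.exp_le_exp.2 ?_) exp_two_pi_div_five_le
    nlinarith [Real.pi_pos]
  calc _ ≤ 1 / 10 ^ 6 * Real.exp (-(2 * Real.pi * (approxFatouCoord β Q + u).im)) :=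
        hγ.norm_le _ (neg_one_lt_im (by linarith) hQ hu)
    _ ≤ 1 / 10 ^ 6 * (‖Q‖ / (1 + ‖Q‖) ^ 3 * 4) := by
        rw [add_im, mul_add, neg_add, Real.exp_add]
        gcongr
        exact exp_neg_approxFatouCoord_im_le hβ hQ
    _ = _ := by ring

theorem differentiableOn_comp (hγ : IsPeriodicPerturbation γ) (hβ : 0 < β) {φ : ℂ → ℂ}
    (hφ : φ ∈ boundedHolomorphicOn ℂ wideCone (1 / 10)) :
    DifferentiableOn ℂ (fun Q ↦ γ (approxFatouCoord β Q + φ Q)) wideCone :=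
  hγ.differentiableOn.comp ((differentiableOn_approxFatouCoord hβ).add hφ.1) fun Q hQ ↦
    neg_one_lt_im hβ hQ ((hφ.2 Q hQ).trans (by norm_num))

theorem norm_sub_le (hγ : IsPeriodicPerturbation γ) (hβ : 3 ≤ β) (hQ : Q ∈ wideCone)
    (hu : ‖u‖ ≤ 1 / 10) (hv : ‖v‖ ≤ 1 / 10) :
    ‖γ (approxFatouCoord β Q + u) - γ (approxFatouCoord β Q + v)‖ ≤
      1 / 1000 * (‖Q‖ / (1 + ‖Q‖) ^ 3) * ‖u - v‖ := by
  have hmaps : MapsTo (approxFatouCoord β Q + ·) (closedBall 0 (1 / 10 + 1 / 10)) {w | -1 < w.im} :=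
    fun z hz ↦ neg_one_lt_im (by linarith) hQ (by rw [mem_closedBall_zero_iff] at hz; linarith)
  have hdiff : DiffContOnCl ℂ (fun z ↦ γ (approxFatouCoord β Q + z))
      (ball 0 (1 / 10 + 1 / 10)) := by
    refine DifferentiableOn.diffContOnCl ?_
    rw [closure_ball _ (by norm_num)]
    exact hγ.differentiableOn.comp (by fun_prop) hmaps
  refine (norm_image_sub_le_div_mul_of_norm_le (M := 1 / 250000 * (‖Q‖ / (1 + ‖Q‖) ^ 3))
    (by norm_num) hdiff (fun z hz ↦ ?_) (mem_closedBall_zero_iff.2 hu)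
    (mem_closedBall_zero_iff.2 hv)).trans ?_
  · refine hγ.norm_approxFatouCoord_add_le hβ hQ ?_
    rw [mem_closedBall_zero_iff] at hz
    linarith
  · gcongr
    rw [div_le_iff₀ (by norm_num)]
    have : 0 ≤ ‖Q‖ / (1 + ‖Q‖) ^ 3 := by positivity
    linarith

theorem coneDecay (hγ : IsPeriodicPerturbation γ) (hβ : 3 ≤ β) {φ : ℂ → ℂ}
    (hφ : φ ∈ boundedHolomorphicOn ℂ wideCone (1 / 10)) :
    ConeDecay (1 / 1000) fun Q ↦ -γ (approxFatouCoord β Q + φ Q) where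
  nonneg := by norm_num
  differentiableOn := (hγ.differentiableOn_comp (by linarith) hφ).neg
  norm_le Q hQ := by
    rw [norm_neg]
    refine (hγ.norm_approxFatouCoord_add_le hβ hQ ((hφ.2 Q hQ).trans (by norm_num))).trans ?_
    gcongr
    norm_num

theorem exists_correction (hγ : IsPeriodicPerturbation γ) (hβ : 3 ≤ β) :
    ∃ φ Θ : ℂ → ℂ, DifferentiableOn ℂ φ wideCone ∧ DifferentiableOn ℂ Θ outerSector ∧
      (∀ Q ∈ wideCone, ‖φ Q‖ * (1 + ‖Q‖) ≤ 1 / 100) ∧ (∀ Q, ‖Θ Q‖ * (1 + ‖Q‖) ≤ 1 / 100) ∧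
      (∀ Q ∈ wideCone, Q.re ≤ 0 → Θ Q = φ Q) ∧
      ∀ Q ∈ wideCone, 0 < Q.re → Θ Q = φ Q + γ (approxFatouCoord β Q + φ Q) := by
  obtain ⟨φ, hφ, hfix⟩ := exists_eqOn_cousinInner
    (Γ := fun Q u ↦ -γ (approxFatouCoord β Q + u)) (M := 1 / 1000) (r := 1 / 10)
    (by norm_num) (by norm_num) (by norm_num) (fun φ hφ ↦ hγ.coneDecay hβ hφ)
    (fun Q hQ u v hu hv ↦ by
      rw [neg_sub_neg, norm_sub_rev]
      exact hγ.norm_sub_le hβ hQ hu hv)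
  have hJ := hγ.coneDecay hβ hφ
  refine ⟨φ, cousinOuter fun Q ↦ -γ (approxFatouCoord β Q + φ Q), hφ.1,
    hJ.differentiableOn_cousinOuter, fun Q hQ ↦ ?_, fun Q ↦ ?_, fun Q hQ hre ↦ ?_,
    fun Q hQ hre ↦ ?_⟩
  · rw [← hfix hQ]
    exact (hJ.norm_cousinInner_mul_le hQ).trans (by norm_num)
  · exact (hJ.norm_cousinOuter_mul_le Q).trans (by norm_num)
  · rw [cousinOuter_of_re_nonpos _ hre, ← hfix hQ]
  · rw [cousinOuter_of_re_pos _ hre, hfix hQ, sub_neg_eq_add]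

theorem exists_fatouGluing (hγ : IsPeriodicPerturbation γ) (hβ : 3 ≤ β) :
    ∃ ψ₁ ψ₀, FatouGluing β γ ψ₁ ψ₀ := by
  obtain ⟨φ, Θ, hφ, hΘ, hφb, hΘb, hnonpos, hpos⟩ := hγ.exists_correction hβ
  refine ⟨fun Q ↦ φ Q - 1 / Q, fun Q ↦ Θ Q - 1 / Q, {
    periodic := hγ.periodic
    differentiableOn_inner := hφ.sub <| .fun_div (differentiableOn_const 1) differentiableOn_id
      fun _ ↦ ne_zero_of_mem_wideCone
    differentiableOn_outer := hΘ.sub <| .fun_div (differentiableOn_const 1) differentiableOn_id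
      fun _ ↦ ne_zero_of_mem_outerSector
    norm_inner_mul_le := fun Q hQ ↦ norm_sub_one_div_mul_norm_le (hφb Q hQ)
    norm_outer_mul_le := fun Q ↦ norm_sub_one_div_mul_norm_le (hΘb Q)
    outer_of_re_nonpos := fun Q hQ hre ↦ by rw [hnonpos Q hQ hre]
    outer_of_re_pos := fun Q hQ hre ↦ ?_ }⟩
  rw [hpos Q hQ hre, approxFatouCoord, add_sub_right_comm,
    show rotTime β Q + (φ Q - 1 / Q) = rotTime β Q - 1 / Q + φ Q by ring]

end IsPeriodicPerturbation

end PeriodicPerturbation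

section TimeCorrection

open Complex Set Metric

variable {β : ℝ} {Q d d' : ℂ} {ψ : ℂ → ℂ}

/-- `ψ` is a small holomorphic correction of the flow time on the disc about `Q` of radius
`‖Q‖ / 20`, which contains the points `rotFlow β (1 + d) Q` with `‖d‖ ≤ 1 / 10`. -/
structure IsTimeCorrectionAt (ψ : ℂ → ℂ) (Q : ℂ) : Prop where
  lt_norm : 100 < ‖Q‖
  differentiableOn : DifferentiableOn ℂ ψ (ball Q (‖Q‖ / 20))
  norm_mul_le : ∀ z ∈ ball Q (‖Q‖ / 20), ‖ψ z‖ * ‖z‖ ≤ 2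

theorem rotFlow_one_add_mem_closedBall (hβ : 10 ^ 6 ≤ β) (hQ : 100 ≤ ‖Q‖) (hd : ‖d‖ ≤ 1 / 10) :
    rotFlow β (1 + d) Q ∈ closedBall Q (‖Q‖ / 40) := by
  rw [mem_closedBall_iff_norm]
  exact norm_rotFlow_one_add_sub_le hβ hQ hd

theorem rotFlow_one_add_mem_ball (hβ : 10 ^ 6 ≤ β) (hQ : 100 ≤ ‖Q‖) (hd : ‖d‖ ≤ 1 / 10) :
    rotFlow β (1 + d) Q ∈ ball Q (‖Q‖ / 20) :=
  closedBall_subset_ball (by linarith) (rotFlow_one_add_mem_closedBall hβ hQ hd)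

theorem differentiableAt_rotFlow_one_add (β : ℝ) {y : ℂ → ℂ} (hy : DifferentiableAt ℂ y Q) :
    DifferentiableAt ℂ (fun z ↦ rotFlow β (1 + y z) z) Q := by
  unfold rotFlow
  fun_prop

namespace IsTimeCorrectionAt

theorem norm_pos (h : IsTimeCorrectionAt ψ Q) : 0 < ‖Q‖ :=
  (by norm_num : (0 : ℝ) < 100).trans h.lt_norm

theorem mem_ball (h : IsTimeCorrectionAt ψ Q) : Q ∈ ball Q (‖Q‖ / 20) :=
  mem_ball_self (div_pos h.norm_pos (by norm_num))

theorem norm_sub_le (h : IsTimeCorrectionAt ψ Q) {x y : ℂ} (hx : x ∈ closedBall Q (‖Q‖ / 40))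
    (hy : y ∈ closedBall Q (‖Q‖ / 40)) : ‖ψ x - ψ y‖ ≤ 176 / ‖Q‖ ^ 2 * ‖x - y‖ := by
  have hQ := h.norm_pos
  have hsub : closedBall Q (‖Q‖ / 40 + ‖Q‖ / 80) ⊆ ball Q (‖Q‖ / 20) :=
    closedBall_subset_ball (by linarith)
  have hdiff : DiffContOnCl ℂ ψ (ball Q (‖Q‖ / 40 + ‖Q‖ / 80)) := by
    refine (h.differentiableOn.mono ?_).diffContOnCl
    rwa [closure_ball _ (by positivity)]
  have hbound : ∀ z ∈ closedBall Q (‖Q‖ / 40 + ‖Q‖ / 80), ‖ψ z‖ ≤ 11 / 5 / ‖Q‖ := fun z hz ↦ by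
    have := h.norm_mul_le z (hsub hz)
    have := norm_sub_norm_le Q z
    rw [mem_closedBall_iff_norm'] at hz
    rw [le_div_iff₀ hQ]
    nlinarith [norm_nonneg (ψ z)]
  calc ‖ψ x - ψ y‖ ≤ 11 / 5 / ‖Q‖ / (‖Q‖ / 80) * ‖x - y‖ :=
        norm_image_sub_le_div_mul_of_norm_le (by positivity) hdiff hbound hx hy
    _ = 176 / ‖Q‖ ^ 2 * ‖x - y‖ := by ring

theorem norm_sub_rotFlow_le (h : IsTimeCorrectionAt ψ Q) (hβ : 10 ^ 6 ≤ β) (hd : ‖d‖ ≤ 1 / 10)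
    (hd' : ‖d'‖ ≤ 1 / 10) :
    ‖ψ (rotFlow β (1 + d) Q) - ψ (rotFlow β (1 + d') Q)‖ ≤ 1 / 2 * ‖d - d'‖ := by
  have hQ := h.norm_pos
  have hlt := h.lt_norm
  have hflow := norm_rotFlow_sub_rotFlow_le hβ hlt.le
    ((norm_one_add_le_of_norm_le hd).trans (by norm_num))
    ((norm_one_add_le_of_norm_le hd').trans (by norm_num))
  rw [add_sub_add_left_eq_sub] at hflow
  calc _ ≤ 176 / ‖Q‖ ^ 2 * (‖Q‖ / 48 * ‖d - d'‖) :=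
        (h.norm_sub_le (rotFlow_one_add_mem_closedBall hβ hlt.le hd)
          (rotFlow_one_add_mem_closedBall hβ hlt.le hd')).trans (by gcongr)
    _ = 11 / 3 / ‖Q‖ * ‖d - d'‖ := by field
    _ ≤ 1 / 2 * ‖d - d'‖ := by
        gcongr ?_ * _
        rw [div_le_iff₀ hQ]
        linarith

theorem eq_of_sub_rotFlow_eq (h : IsTimeCorrectionAt ψ Q) (hβ : 10 ^ 6 ≤ β) (hd : ‖d‖ ≤ 1 / 10)
    (hd' : ‖d'‖ ≤ 1 / 10) (he : ψ (rotFlow β (1 + d) Q) + d = ψ Q)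
    (he' : ψ (rotFlow β (1 + d') Q) + d' = ψ Q) : d = d' := by
  have hle := h.norm_sub_rotFlow_le hβ hd hd'
  rw [← eq_sub_iff_add_eq] at he he'
  rw [he, he', sub_sub_sub_cancel_left, norm_sub_rev] at hle
  exact sub_eq_zero.1 (norm_eq_zero.1 (by linarith [norm_nonneg (d - d')]))

theorem norm_sub_rotFlow_le_div (h : IsTimeCorrectionAt ψ Q) (hβ : 10 ^ 6 ≤ β)
    (hd : ‖d‖ ≤ 1 / 10) : ‖ψ Q - ψ (rotFlow β (1 + d) Q)‖ ≤ 5 / ‖Q‖ := by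
  have hlt := h.lt_norm
  have hQ := h.norm_mul_le Q h.mem_ball
  have hF := h.norm_mul_le _ (rotFlow_one_add_mem_ball hβ hlt.le hd)
  have hF' := mul_norm_le_norm_rotFlow_one_add hβ hlt.le hd
  rw [le_div_iff₀ h.norm_pos]
  calc _ ≤ (‖ψ Q‖ + ‖ψ (rotFlow β (1 + d) Q)‖) * ‖Q‖ := by
        gcongr
        exact _root_.norm_sub_le _ _
    _ ≤ 5 := by nlinarith [norm_nonneg (ψ (rotFlow β (1 + d) Q))]

theorem five_div_norm_le (h : IsTimeCorrectionAt ψ Q) : 5 / ‖Q‖ ≤ 1 / 10 := by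
  rw [div_le_iff₀ h.norm_pos]
  linarith [h.lt_norm]

theorem exists_rotFlow_add_eq_zero (h : IsTimeCorrectionAt ψ Q)
    (hβ : 10 ^ 6 ≤ β) : ∃ d, ‖d‖ ≤ 1 / 10 ∧ ψ (rotFlow β (1 + d) Q) + d = 0 := by
  let T : ℂ → ℂ := fun d ↦ -ψ (rotFlow β (1 + d) Q)
  have hmaps : MapsTo T (closedBall 0 (1 / 10)) (closedBall 0 (1 / 10)) := by
    intro d hd
    rw [mem_closedBall_zero_iff] at hd ⊢
    have hψ := h.norm_mul_le _ (rotFlow_one_add_mem_ball hβ h.lt_norm.le hd)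
    have hF := mul_norm_le_norm_rotFlow_one_add hβ h.lt_norm.le hd
    rw [norm_neg]
    nlinarith [h.lt_norm, norm_nonneg (ψ (rotFlow β (1 + d) Q))]
  have hlip : LipschitzWith (1 / 2) (hmaps.restrict T _ _) := by
    refine LipschitzWith.of_dist_le_mul fun d d' ↦ ?_
    rw [Subtype.dist_eq, Subtype.dist_eq, dist_eq_norm', dist_eq_norm]
    have := h.norm_sub_rotFlow_le hβ (mem_closedBall_zero_iff.1 d.2)
      (mem_closedBall_zero_iff.1 d'.2)
    simpa [T, MapsTo.val_restrict_apply, sub_eq_neg_add, add_comm] using this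
  obtain ⟨d, hd, hfix, -⟩ := ContractingWith.exists_fixedPoint' isClosed_closedBall.isComplete
    hmaps ⟨NNReal.half_lt_self one_ne_zero, hlip⟩ (mem_closedBall_self (by norm_num))
    (edist_ne_top _ _)
  refine ⟨d, mem_closedBall_zero_iff.1 hd, ?_⟩
  rw [add_comm, ← eq_neg_iff_add_eq_zero]
  exact hfix.symm

end IsTimeCorrectionAt

theorem exists_differentiableOn_rotFlow_add_eq (hβ : 10 ^ 6 ≤ β) {U : Set ℂ} (hU : IsOpen U)
    (h : ∀ Q ∈ U, IsTimeCorrectionAt ψ Q) :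
    ∃ δ, DifferentiableOn ℂ δ U ∧
      ∀ Q ∈ U, ‖δ Q‖ ≤ 5 / ‖Q‖ ∧ ψ (rotFlow β (1 + δ Q) Q) + δ Q = ψ Q := by
  have hmaps : ∀ Q ∈ U, MapsTo (fun d ↦ ψ Q - ψ (rotFlow β (1 + d) Q)) (closedBall 0 (1 / 10))
      (closedBall 0 (1 / 10)) := fun Q hQ d hd ↦ by
    rw [mem_closedBall_zero_iff] at hd ⊢
    exact ((h Q hQ).norm_sub_rotFlow_le_div hβ hd).trans (h Q hQ).five_div_norm_le
  have hlip : ∀ Q ∈ U, LipschitzOnWith (1 / 2) (fun d ↦ ψ Q - ψ (rotFlow β (1 + d) Q))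
      (closedBall 0 (1 / 10)) := fun Q hQ ↦ .of_dist_le_mul fun d hd d' hd' ↦ by
    rw [mem_closedBall_zero_iff] at hd hd'
    rw [dist_eq_norm, sub_sub_sub_cancel_left, dist_eq_norm, norm_sub_rev d]
    exact (h Q hQ).norm_sub_rotFlow_le hβ hd' hd
  obtain ⟨δ, hδ, hfix⟩ := exists_differentiableOn_fixedPoint hU (by norm_num)
    (NNReal.half_lt_self one_ne_zero) hmaps hlip fun y hy hyb Q hQ ↦ by
      have hball := (h Q hQ).differentiableOn
      have hF := rotFlow_one_add_mem_ball hβ (h Q hQ).lt_norm.le (hyb Q hQ)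
      refine DifferentiableAt.differentiableWithinAt (.fun_sub ?_ (.fun_comp' Q ?_ ?_))
      · exact hball.differentiableAt (isOpen_ball.mem_nhds (h Q hQ).mem_ball)
      · exact hball.differentiableAt (isOpen_ball.mem_nhds hF)
      · exact differentiableAt_rotFlow_one_add β (hy.differentiableAt (hU.mem_nhds hQ))
  refine ⟨δ, hδ, fun Q hQ ↦ ⟨?_, ?_⟩⟩
  · rw [← (hfix Q hQ).2]
    exact (h Q hQ).norm_sub_rotFlow_le_div hβ (hfix Q hQ).1
  · rw [← eq_sub_iff_add_eq']
    exact (hfix Q hQ).2.symm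

end TimeCorrection

section UnitStep

open Complex Set Metric

variable {β : ℝ} {Q d z : ℂ} {γ ψ₁ ψ₀ δ : ℂ → ℂ}

theorem ball_subset_wideCone (h : 69 / 100 * ‖Q‖ < Q.im) : ball Q (‖Q‖ / 20) ⊆ wideCone := by
  intro z hz
  rw [mem_ball_iff_norm] at hz
  have hnorm := (abs_lt.1 ((abs_norm_sub_norm_le z Q).trans_lt hz)).2
  have him := (abs_lt.1 ((abs_im_le_norm (z - Q)).trans_lt hz)).1
  rw [sub_im] at him
  change ‖z‖ < 2 * z.im
  linarith [norm_nonneg Q]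

theorem ball_subset_outerSector (h : Q.im < 71 / 100 * ‖Q‖) :
    ball Q (‖Q‖ / 20) ⊆ outerSector := by
  intro z hz
  rw [mem_ball_iff_norm] at hz
  have hnorm := (abs_lt.1 ((abs_norm_sub_norm_le z Q).trans_lt hz)).1
  have him := (abs_lt.1 ((abs_im_le_norm (z - Q)).trans_lt hz)).2
  rw [sub_im] at him
  change z.im < 4 / 5 * ‖z‖
  linarith

theorem norm_div_lt_abs_re (h₁ : 69 / 100 * ‖Q‖ < Q.im) (h₀ : Q.im < 71 / 100 * ‖Q‖) :
    ‖Q‖ / 20 < |Q.re| := by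
  have hnorm : ‖Q‖ ^ 2 = Q.re ^ 2 + Q.im ^ 2 := by
    rw [← normSq_eq_norm_sq, normSq_apply]
    ring
  refine lt_of_pow_lt_pow_left₀ 2 (abs_nonneg _) ?_
  rw [sq_abs]
  nlinarith

theorem re_nonpos_iff_of_norm_sub_lt {x y : ℂ} (h : ‖y - x‖ < |x.re|) : x.re ≤ 0 ↔ y.re ≤ 0 := by
  have hre := abs_lt.1 ((abs_re_le_norm (y - x)).trans_lt h)
  rw [sub_re] at hre
  rcases le_or_gt x.re 0 with hx | hx
  · rw [abs_of_nonpos hx] at hre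
    exact iff_of_true hx (by linarith)
  · rw [abs_of_pos hx] at hre
    exact iff_of_false (by linarith) (by linarith)

theorem rotTime_rotFlow_one_add (hβ : 10 ^ 6 ≤ β) (hQ : 0 < Q.im) (hd : ‖d‖ ≤ 1 / 10) :
    rotTime β (rotFlow β (1 + d) Q) = rotTime β Q + (1 + d) := by
  have hβ₀ : 0 < β := by linarith
  have htime := abs_lt.1 (abs_rotTime_re_lt hβ₀ hQ)
  have hstep := abs_le.1 ((abs_re_le_norm (1 + d)).trans (norm_one_add_le_of_norm_le hd))
  conv_lhs => rw [← rotFlow_rotTime hβ₀ hQ, rotFlow_rotFlow]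
  refine rotTime_rotFlow hβ₀ (abs_lt.2 ?_)
  rw [add_re]
  constructor <;> linarith

namespace FatouGluing

theorem isTimeCorrectionAt_inner (h : FatouGluing β γ ψ₁ ψ₀) (hQ : 100 < ‖Q‖)
    (him : 69 / 100 * ‖Q‖ < Q.im) : IsTimeCorrectionAt ψ₁ Q where
  lt_norm := hQ
  differentiableOn := h.differentiableOn_inner.mono (ball_subset_wideCone him)
  norm_mul_le z hz := h.norm_inner_mul_le z (ball_subset_wideCone him hz)

theorem isTimeCorrectionAt_outer (h : FatouGluing β γ ψ₁ ψ₀) (hQ : 100 < ‖Q‖)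
    (him : Q.im < 71 / 100 * ‖Q‖) : IsTimeCorrectionAt ψ₀ Q where
  lt_norm := hQ
  differentiableOn := h.differentiableOn_outer.mono (ball_subset_outerSector him)
  norm_mul_le z _ := h.norm_outer_mul_le z

-- The value of `γ` is the same at both ends of the step, by periodicity.
theorem outer_rotFlow_add_eq (h : FatouGluing β γ ψ₁ ψ₀) (hβ : 10 ^ 6 ≤ β) (hQ : Q ∈ wideCone)
    (hF : rotFlow β (1 + d) Q ∈ wideCone) (hside : Q.re ≤ 0 ↔ (rotFlow β (1 + d) Q).re ≤ 0)
    (hd : ‖d‖ ≤ 1 / 10) (hinner : ψ₁ (rotFlow β (1 + d) Q) + d = ψ₁ Q) :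
    ψ₀ (rotFlow β (1 + d) Q) + d = ψ₀ Q := by
  rcases le_or_gt Q.re 0 with hre | hre
  · rw [h.outer_of_re_nonpos _ hF (hside.1 hre), h.outer_of_re_nonpos _ hQ hre, hinner]
  · have harg : rotTime β (rotFlow β (1 + d) Q) + ψ₁ (rotFlow β (1 + d) Q) =
        rotTime β Q + ψ₁ Q + 1 := by
      rw [rotTime_rotFlow_one_add hβ (im_pos_of_mem_wideCone hQ) hd]
      linear_combination hinner
    rw [h.outer_of_re_pos _ hF (lt_of_not_ge (mt hside.2 hre.not_ge)), h.outer_of_re_pos _ hQ hre,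
      harg, h.periodic, add_right_comm, hinner]

theorem outer_add_eq_of_inner_add_eq (h : FatouGluing β γ ψ₁ ψ₀) (hβ : 10 ^ 6 ≤ β)
    (hQ : 100 < ‖Q‖) (h₁ : 69 / 100 * ‖Q‖ < Q.im) (h₀ : Q.im < 71 / 100 * ‖Q‖)
    (hd : ‖d‖ ≤ 1 / 10) (hinner : ψ₁ (rotFlow β (1 + d) Q) + d = ψ₁ Q) :
    ψ₀ (rotFlow β (1 + d) Q) + d = ψ₀ Q := by
  have hF := rotFlow_one_add_mem_ball hβ hQ.le hd
  refine h.outer_rotFlow_add_eq hβ (ball_subset_wideCone h₁ (mem_ball_self (by linarith)))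
    (ball_subset_wideCone h₁ hF) (re_nonpos_iff_of_norm_sub_lt ?_) hd hinner
  exact (mem_ball_iff_norm.1 hF).trans (norm_div_lt_abs_re h₁ h₀)

end FatouGluing

/-- A small holomorphic modification `1 + δ` of the unit time of the flow near infinity. -/
structure IsStepPerturbation (δ : ℂ → ℂ) : Prop where
  differentiableOn : DifferentiableOn ℂ δ {Q | 100 < ‖Q‖}
  norm_le (Q : ℂ) : 100 < ‖Q‖ → ‖δ Q‖ ≤ 5 / ‖Q‖

theorem IsStepPerturbation.norm_le_one_div (h : IsStepPerturbation δ) (hQ : 100 < ‖Q‖) :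
    ‖δ Q‖ ≤ 1 / 10 := by
  refine (h.norm_le Q hQ).trans ?_
  rw [div_le_iff₀ (by linarith)]
  linarith

/-- The flow of `Q` under `rotFlow β` for time `1 + δ Q`. -/
noncomputable def perturbedStep (β : ℝ) (δ : ℂ → ℂ) (Q : ℂ) : ℂ := rotFlow β (1 + δ Q) Q

/-- The perturbed step advances the corrected time coordinates `rotTime β + ψ₁` on the cone and
`rotTime β + ψ₀` outside it by exactly one unit. -/
structure IsUnitStep (β : ℝ) (ψ₁ ψ₀ δ : ℂ → ℂ) : Prop extends IsStepPerturbation δ where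
  inner_eq (Q : ℂ) : 100 < ‖Q‖ → 7 / 10 * ‖Q‖ ≤ Q.im → ψ₁ (perturbedStep β δ Q) + δ Q = ψ₁ Q
  outer_eq (Q : ℂ) : 100 < ‖Q‖ → Q.im < 7 / 10 * ‖Q‖ → ψ₀ (perturbedStep β δ Q) + δ Q = ψ₀ Q

theorem isOpen_setOf_lt_norm (r : ℝ) : IsOpen {Q : ℂ | r < ‖Q‖} :=
  isOpen_lt continuous_const continuous_norm

theorem differentiableOn_ite_of_eqOn {U V : Set ℂ} {f g : ℂ → ℂ} (p : ℂ → Prop) [DecidablePred p]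
    (hU : IsOpen U) (hV : IsOpen V) (hf : DifferentiableOn ℂ f U) (hg : DifferentiableOn ℂ g V)
    (hfg : EqOn f g (U ∩ V)) (hpU : ∀ z ∈ V, p z → z ∈ U) (hpV : ∀ z ∈ U, ¬p z → z ∈ V) :
    DifferentiableOn ℂ (fun z ↦ if p z then f z else g z) (U ∪ V) := by
  refine .union_of_isOpen (hf.congr fun z hz ↦ ?_) (hg.congr fun z hz ↦ ?_) hU hV
  · split_ifs with hp
    · rfl
    · exact (hfg ⟨hz, hpV z hz hp⟩).symm
  · split_ifs with hp
    · exact hfg ⟨hpU z hz hp, hz⟩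
    · rfl

theorem FatouGluing.exists_isUnitStep (h : FatouGluing β γ ψ₁ ψ₀) (hβ : 10 ^ 6 ≤ β) :
    ∃ δ, IsUnitStep β ψ₁ ψ₀ δ := by
  classical
  have hU₁ : IsOpen {Q : ℂ | 100 < ‖Q‖ ∧ 69 / 100 * ‖Q‖ < Q.im} :=
    (isOpen_setOf_lt_norm _).inter (isOpen_lt (by fun_prop) continuous_im)
  have hU₀ : IsOpen {Q : ℂ | 100 < ‖Q‖ ∧ Q.im < 71 / 100 * ‖Q‖} :=
    (isOpen_setOf_lt_norm _).inter (isOpen_lt continuous_im (by fun_prop))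
  obtain ⟨δ₁, hδ₁, h₁⟩ := exists_differentiableOn_rotFlow_add_eq hβ hU₁ fun Q hQ ↦
    h.isTimeCorrectionAt_inner hQ.1 hQ.2
  obtain ⟨δ₀, hδ₀, h₀⟩ := exists_differentiableOn_rotFlow_add_eq hβ hU₀ fun Q hQ ↦
    h.isTimeCorrectionAt_outer hQ.1 hQ.2
  have heq : EqOn δ₁ δ₀ ({Q : ℂ | 100 < ‖Q‖ ∧ 69 / 100 * ‖Q‖ < Q.im} ∩
      {Q : ℂ | 100 < ‖Q‖ ∧ Q.im < 71 / 100 * ‖Q‖}) := fun Q ⟨hQ₁, hQ₀⟩ ↦ by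
    have hψ := h.isTimeCorrectionAt_outer hQ₀.1 hQ₀.2
    have hle₁ := (h₁ Q hQ₁).1.trans hψ.five_div_norm_le
    exact hψ.eq_of_sub_rotFlow_eq hβ hle₁ ((h₀ Q hQ₀).1.trans hψ.five_div_norm_le)
      (h.outer_add_eq_of_inner_add_eq hβ hQ₁.1 hQ₁.2 hQ₀.2 hle₁ (h₁ Q hQ₁).2) (h₀ Q hQ₀).2
  have hmem₁ : ∀ Q : ℂ, 100 < ‖Q‖ → 7 / 10 * ‖Q‖ ≤ Q.im →
      Q ∈ {Q : ℂ | 100 < ‖Q‖ ∧ 69 / 100 * ‖Q‖ < Q.im} := fun Q hQ him ↦ ⟨hQ, by linarith⟩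
  have hmem₀ : ∀ Q : ℂ, 100 < ‖Q‖ → ¬7 / 10 * ‖Q‖ ≤ Q.im →
      Q ∈ {Q : ℂ | 100 < ‖Q‖ ∧ Q.im < 71 / 100 * ‖Q‖} := fun Q hQ him ↦ ⟨hQ, by linarith⟩
  refine ⟨fun Q ↦ if 7 / 10 * ‖Q‖ ≤ Q.im then δ₁ Q else δ₀ Q, ⟨?_, fun Q hQ ↦ ?_⟩,
    fun Q hQ him ↦ ?_, fun Q hQ him ↦ ?_⟩
  · refine (differentiableOn_ite_of_eqOn _ hU₁ hU₀ hδ₁ hδ₀ heq (fun Q hQ ↦ hmem₁ Q hQ.1)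
      fun Q hQ ↦ hmem₀ Q hQ.1).mono fun Q hQ ↦ ?_
    exact (em _).imp (hmem₁ Q hQ) (hmem₀ Q hQ)
  · split_ifs with him
    exacts [(h₁ Q (hmem₁ Q hQ him)).1, (h₀ Q (hmem₀ Q hQ him)).1]
  · rw [perturbedStep, if_pos him]
    exact (h₁ Q (hmem₁ Q hQ him)).2
  · rw [perturbedStep, if_neg him.not_ge]
    exact (h₀ Q (hmem₀ Q hQ him.not_ge)).2

end UnitStep

section StepNearZero

open Complex Set Metric

variable {β ρ : ℝ} {Q d : ℂ} {δ : ℂ → ℂ}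

/-- The perturbed step read in the coordinate `z = 100 / Q`. -/
noncomputable def stepNearZero (β : ℝ) (δ : ℂ → ℂ) (z : ℂ) : ℂ :=
  if z = 0 then 0 else 100 / perturbedStep β δ (100 / z)

theorem stepNearZero_div (hQ : Q ≠ 0) :
    stepNearZero β δ (100 / Q) = 100 / perturbedStep β δ Q := by
  rw [stepNearZero, if_neg (div_ne_zero (by norm_num) hQ), div_div_cancel₀ (by norm_num)]

theorem multiplier_mul_rotFlow_one_add (β : ℝ) (d Q : ℂ) :
    multiplier (1 / β) * rotFlow β (1 + d) Q = rotFlow β d Q - rotFlow β (-1) 0 := by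
  have hmul : multiplier (1 / β) = exp (1 / rotCenter β) := by
    rw [multiplier, rotCenter]
    push_cast
    field_simp
  have hexp : exp (1 / rotCenter β) * exp (-((1 + d) / rotCenter β)) =
      exp (-(d / rotCenter β)) := by
    rw [← exp_add]
    ring_nf
  rw [hmul, rotFlow, mul_add, mul_left_comm, hexp, rotFlow, rotFlow_zero_right, neg_div, neg_neg]
  ring

theorem lt_norm_hundred_div {z : ℂ} (hz : z ≠ 0) (hz₁ : ‖z‖ < 1) : 100 < ‖100 / z‖ := by
  rw [norm_div, norm_ofNat, lt_div_iff₀ (norm_pos_iff.2 hz)]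
  linarith

theorem hasDerivAt_zero_of_norm_sub_le {f : ℂ → ℂ} {c : ℂ} {C : ℝ}
    (h : ∀ z ∈ ball (0 : ℂ) 1, ‖f z - c * z‖ ≤ C * ‖z‖ ^ 2) : HasDerivAt f c 0 := by
  have h₀ : f 0 = 0 := by simpa using h 0 (mem_ball_self one_pos)
  have hO : (fun z ↦ f z - c * z) =O[nhds 0] fun z ↦ z ^ 2 := by
    refine .of_bound C ?_
    filter_upwards [ball_mem_nhds (0 : ℂ) one_pos] with z hz
    rw [norm_pow]
    exact h z hz
  rw [hasDerivAt_iff_isLittleO_nhds_zero]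
  simp only [zero_add, h₀, sub_zero, smul_eq_mul, mul_comm _ c]
  exact hO.trans_isLittleO (by simpa using Asymptotics.isLittleO_pow_id (𝕜 := ℂ) one_lt_two)

namespace IsStepPerturbation

theorem mul_norm_le (h : IsStepPerturbation δ) (hβ : 10 ^ 6 ≤ β) (hQ : 100 < ‖Q‖) :
    39 / 40 * ‖Q‖ ≤ ‖perturbedStep β δ Q‖ :=
  mul_norm_le_norm_rotFlow_one_add hβ hQ.le (h.norm_le_one_div hQ)

theorem perturbedStep_ne_zero (h : IsStepPerturbation δ) (hβ : 10 ^ 6 ≤ β) (hQ : 100 < ‖Q‖) :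
    perturbedStep β δ Q ≠ 0 :=
  norm_pos_iff.1 (by linarith [h.mul_norm_le hβ hQ])

theorem norm_sub_multiplier_mul_le (h : IsStepPerturbation δ) (hβ : 10 ^ 6 ≤ β)
    (hQ : 100 < ‖Q‖) : ‖Q - multiplier (1 / β) * perturbedStep β δ Q‖ ≤ 4 := by
  have hδ := h.norm_le_one_div hQ
  have hflow := norm_rotFlow_sub_rotFlow_le (s := 0) (t := δ Q) hβ hQ.le (by simp) (by linarith)
  have hone := norm_rotFlow_zero_le (t := -1) hβ (by simp)
  rw [rotFlow_zero_left, zero_sub, norm_neg] at hflow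
  rw [norm_neg, norm_one] at hone
  rw [perturbedStep, multiplier_mul_rotFlow_one_add, ← sub_add]
  calc _ ≤ ‖Q‖ / 48 * ‖δ Q‖ + 2 * 1 := norm_add_le_of_le hflow hone
    _ ≤ ‖Q‖ / 48 * (5 / ‖Q‖) + 2 * 1 := by
        gcongr
        exact h.norm_le Q hQ
    _ = 5 / 48 + 2 * 1 := by
        have : 0 < ‖Q‖ := by linarith
        field
    _ ≤ 4 := by norm_num

theorem norm_hundred_div_sub_le (h : IsStepPerturbation δ) (hβ : 10 ^ 6 ≤ β) (hQ : 100 < ‖Q‖) :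
    ‖100 / perturbedStep β δ Q - multiplier (1 / β) * (100 / Q)‖ ≤ 1 / 20 * ‖100 / Q‖ ^ 2 := by
  have hQ₀ : 0 < ‖Q‖ := by linarith
  have hQne := norm_pos_iff.1 hQ₀
  have hF := h.mul_norm_le hβ hQ
  have hFne := h.perturbedStep_ne_zero hβ hQ
  have heq : 100 / perturbedStep β δ Q - multiplier (1 / β) * (100 / Q) =
      100 * (Q - multiplier (1 / β) * perturbedStep β δ Q) / (perturbedStep β δ Q * Q) := by
    field
  rw [heq, norm_div, norm_mul, norm_mul, norm_div, norm_ofNat]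
  calc _ ≤ 100 * 4 / (39 / 40 * ‖Q‖ * ‖Q‖) := by
        gcongr
        exact h.norm_sub_multiplier_mul_le hβ hQ
    _ ≤ 1 / 20 * (100 / ‖Q‖) ^ 2 := by
        rw [div_pow, ← mul_div_assoc, div_le_div_iff₀ (by positivity) (by positivity)]
        nlinarith [sq_nonneg ‖Q‖]

theorem differentiableAt_stepNearZero (h : IsStepPerturbation δ) (hβ : 10 ^ 6 ≤ β) {z : ℂ}
    (hz : z ≠ 0) (hz₁ : ‖z‖ < 1) : DifferentiableAt ℂ (stepNearZero β δ) z := by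
  have hQ := lt_norm_hundred_div hz hz₁
  have hinv : DifferentiableAt ℂ (fun z : ℂ ↦ 100 / z) z := by fun_prop (disch := exact hz)
  have hδ : DifferentiableAt ℂ δ (100 / z) :=
    h.differentiableOn.differentiableAt ((isOpen_setOf_lt_norm _).mem_nhds hQ)
  have hstep : DifferentiableAt ℂ (fun z ↦ perturbedStep β δ (100 / z)) z :=
    .fun_comp' z (differentiableAt_rotFlow_one_add β hδ) hinv
  refine ((differentiableAt_const (100 : ℂ)).fun_div hstep
    (h.perturbedStep_ne_zero hβ hQ)).congr_of_eventuallyEq ?_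
  filter_upwards [isOpen_ne.mem_nhds hz] with x hx
  rw [stepNearZero, if_neg hx]

theorem isNearRotation_stepNearZero (h : IsStepPerturbation δ) (hβ : 10 ^ 6 ≤ β) :
    IsNearRotation (1 / β) (stepNearZero β δ) := by
  have hnorm : ∀ z ∈ ball (0 : ℂ) 1,
      ‖stepNearZero β δ z - multiplier (1 / β) * z‖ ≤ 1 / 20 * ‖z‖ ^ 2 := by
    intro z hz
    rcases eq_or_ne z 0 with rfl | hz₀
    · simp [stepNearZero]
    · have := h.norm_hundred_div_sub_le hβ (lt_norm_hundred_div hz₀ (mem_ball_zero_iff.1 hz))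
      rw [div_div_cancel₀ (by norm_num)] at this
      rwa [stepNearZero, if_neg hz₀]
  refine ⟨fun z hz ↦ DifferentiableAt.differentiableWithinAt ?_, hnorm⟩
  rcases eq_or_ne z 0 with rfl | hz₀
  · exact (hasDerivAt_zero_of_norm_sub_le hnorm).differentiableAt
  · exact h.differentiableAt_stepNearZero hβ hz₀ (mem_ball_zero_iff.1 hz)

end IsStepPerturbation

theorem iterate_stepNearZero {k : ℕ}
    (hk : ∀ j < k, 100 < ‖(perturbedStep β δ)^[j] Q‖) :
    (stepNearZero β δ)^[k] (100 / Q) = 100 / (perturbedStep β δ)^[k] Q := by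
  induction k with
  | zero => rfl
  | succ k ih =>
    have hpos : 0 < ‖(perturbedStep β δ)^[k] Q‖ := by linarith [hk k k.lt_succ_self]
    rw [Function.iterate_succ_apply', ih fun j hj ↦ hk j (hj.trans k.lt_succ_self),
      stepNearZero_div (norm_pos_iff.1 hpos), Function.iterate_succ_apply']

namespace UniformlyStable

theorem lt_norm_iterate_perturbedStep (hs : UniformlyStable (1 / β) ρ) (hβ : 10 ^ 6 ≤ β)
    (hρ : 0 < ρ) (h : IsStepPerturbation δ) (hQ : 100 / ρ < ‖Q‖) (k : ℕ) :
    100 < ‖(perturbedStep β δ)^[k] Q‖ := by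
  induction k using Nat.strong_induction_on with
  | _ k ih =>
    have hQ₀ : 0 < ‖Q‖ := lt_trans (by positivity) hQ
    have hz : ‖100 / Q‖ < ρ := by
      rwa [norm_div, norm_ofNat, div_lt_comm₀ hQ₀ hρ]
    have hmem := hs _ (h.isNearRotation_stepNearZero hβ) _ hz k
    have hne : (perturbedStep β δ)^[k] Q ≠ 0 := by
      rcases k with - | k
      · exact norm_pos_iff.1 hQ₀
      · rw [Function.iterate_succ_apply']
        exact h.perturbedStep_ne_zero hβ (ih k k.lt_succ_self)
    rwa [iterate_stepNearZero ih, mem_ball_zero_iff, norm_div, norm_ofNat,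
      div_lt_one (norm_pos_iff.2 hne)] at hmem

end UniformlyStable

theorem iterate_rotFlow_one (β : ℝ) (t Q : ℂ) (k : ℕ) :
    (rotFlow β 1)^[k] (rotFlow β t Q) = rotFlow β (t + k) Q := by
  induction k with
  | zero => simp
  | succ k ih =>
    rw [Function.iterate_succ_apply', ih, rotFlow_rotFlow]
    push_cast
    ring_nf

theorem norm_rotFlow_half_period (hβ : 0 < β) : ‖rotFlow β (β / 2) 0‖ = β / Real.pi := by
  have hβ' : (β : ℂ) ≠ 0 := ofReal_ne_zero.2 hβ.ne'
  have hangle : (β / 2 : ℂ) / rotCenter β = Real.pi * I := by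
    rw [rotCenter]
    field
  rw [rotFlow_zero_right, hangle, exp_neg, exp_pi_mul_I, norm_mul, norm_rotCenter hβ]
  norm_num
  field

-- The orbit of the antipode of `0` under the time-one map of the flow returns close to `0`.
theorem UniformlyStable.mul_le (hs : UniformlyStable (1 / β) ρ) (hβ : 10 ^ 6 ≤ β) (hρ : 0 < ρ) :
    ρ * β ≤ 100 * Real.pi := by
  have hβ₀ : 0 < β := by linarith
  by_contra! hlt
  have hδ : IsStepPerturbation 0 := ⟨differentiableOn_const 0, fun Q _ ↦ by
    rw [Pi.zero_apply, norm_zero]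
    positivity⟩
  have hfar := hs.lt_norm_iterate_perturbedStep (Q := rotFlow β (β / 2) 0) hβ hρ hδ (by
    rw [norm_rotFlow_half_period hβ₀, div_lt_div_iff₀ hρ Real.pi_pos]
    linarith) ⌊β / 2⌋₊
  have hstep : perturbedStep β 0 = rotFlow β 1 := by
    ext Q
    rw [perturbedStep, Pi.zero_apply, add_zero]
  have htime : (β / 2 + ⌊β / 2⌋₊ : ℂ) = ((⌊β / 2⌋₊ - β / 2 : ℝ) : ℂ) + β * (1 : ℤ) := by
    push_cast
    ring
  rw [hstep, iterate_rotFlow_one, htime, rotFlow_add_mul_intCast hβ₀] at hfar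
  have hsmall : ‖((⌊β / 2⌋₊ - β / 2 : ℝ) : ℂ)‖ ≤ 1 := by
    rw [norm_real, Real.norm_eq_abs, abs_le]
    constructor <;> linarith [Nat.floor_le (half_pos hβ₀).le, Nat.lt_floor_add_one (β / 2)]
  linarith [norm_rotFlow_zero_le hβ (hsmall.trans (by norm_num))]

end StepNearZero

section Lift

open Complex Set Metric

variable {α : ℝ} {g γ : ℂ → ℂ}

/-- The universal covering of the punctured unit disc by the half-plane `{w | -3 < w.im}`. -/
noncomputable def punctureCover (w : ℂ) : ℂ := exp (2 * Real.pi * I * (w + 3 * I))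

theorem norm_punctureCover (w : ℂ) :
    ‖punctureCover w‖ = Real.exp (-(2 * Real.pi * (w.im + 3))) := by
  rw [punctureCover, norm_exp]
  simp

theorem norm_punctureCover_lt_one {w : ℂ} (hw : -3 < w.im) : ‖punctureCover w‖ < 1 := by
  rw [norm_punctureCover, Real.exp_lt_one_iff, neg_lt_zero]
  have : 0 < w.im + 3 := by linarith
  positivity

theorem periodic_punctureCover : Function.Periodic punctureCover 1 := by
  intro w
  rw [punctureCover, punctureCover, ← exp_periodic (2 * Real.pi * I * (w + 3 * I))]
  ring_nf

theorem exp_neg_six_pi_le : Real.exp (-(6 * Real.pi)) ≤ 1 / 10 ^ 6 := by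
  have hexp : (10 : ℝ) ^ 6 ≤ Real.exp (6 * Real.pi) := by
    calc (10 : ℝ) ^ 6 ≤ (5 / 2) ^ 18 := by norm_num
      _ ≤ Real.exp 1 ^ 18 := by
          gcongr
          linarith [Real.exp_one_gt_d9]
      _ = Real.exp 18 := by rw [← Real.exp_nat_mul]; norm_num
      _ ≤ Real.exp (6 * Real.pi) := by
          gcongr
          linarith [Real.pi_gt_three]
  rw [Real.exp_neg, ← one_div]
  gcongr

theorem norm_one_div_two_pi_I_le : ‖1 / (2 * Real.pi * I)‖ ≤ 1 := by
  rw [norm_div, norm_one, norm_mul, norm_I, mul_one, norm_mul, norm_real, Complex.norm_ofNat,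
    Real.norm_of_nonneg Real.pi_nonneg]
  exact (div_le_one (by positivity)).2 (by linarith [Real.pi_gt_three])

/-- The periodic part of the lift `w ↦ w + α + liftCorrection α g w` of a near-rotation `g` under
`punctureCover`. -/
noncomputable def liftCorrection (α : ℝ) (g : ℂ → ℂ) (w : ℂ) : ℂ :=
  1 / (2 * Real.pi * I) * log (g (punctureCover w) / (multiplier α * punctureCover w))

theorem multiplier_mul_punctureCover_ne_zero (α : ℝ) (w : ℂ) :
    multiplier α * punctureCover w ≠ 0 :=
  mul_ne_zero (multiplier_ne_zero α) (exp_ne_zero _)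

theorem periodic_liftCorrection (α : ℝ) (g : ℂ → ℂ) :
    Function.Periodic (liftCorrection α g) 1 := by
  intro w
  simp only [liftCorrection, periodic_punctureCover w]

namespace IsNearRotation

theorem norm_div_sub_one_le (hg : IsNearRotation α g) {z : ℂ} (hz : z ≠ 0) (hz₁ : ‖z‖ < 1) :
    ‖g z / (multiplier α * z) - 1‖ ≤ ‖z‖ / 20 := by
  have hz₀ := norm_pos_iff.2 hz
  rw [div_sub_one (mul_ne_zero (multiplier_ne_zero α) hz), norm_div, norm_mul, norm_multiplier,
    one_mul, div_le_iff₀ hz₀]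
  exact (hg.norm_sub_le z (mem_ball_zero_iff.2 hz₁)).trans_eq (by ring)

theorem norm_punctureCover_div_sub_one_le (hg : IsNearRotation α g) {w : ℂ} (hw : -3 < w.im) :
    ‖g (punctureCover w) / (multiplier α * punctureCover w) - 1‖ ≤ ‖punctureCover w‖ / 20 :=
  hg.norm_div_sub_one_le (exp_ne_zero _) (norm_punctureCover_lt_one hw)

theorem div_mem_slitPlane (hg : IsNearRotation α g) {w : ℂ} (hw : -3 < w.im) :
    g (punctureCover w) / (multiplier α * punctureCover w) ∈ slitPlane := by
  rw [← add_sub_cancel 1 (g _ / _)]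
  apply mem_slitPlane_of_norm_lt_one
  linarith [hg.norm_punctureCover_div_sub_one_le hw, norm_punctureCover_lt_one hw]

theorem differentiableAt_liftCorrection (hg : IsNearRotation α g) {w : ℂ} (hw : -3 < w.im) :
    DifferentiableAt ℂ (liftCorrection α g) w := by
  have hcover : DifferentiableAt ℂ punctureCover w := by
    unfold punctureCover
    fun_prop
  have hcomp : DifferentiableAt ℂ (fun w ↦ g (punctureCover w)) w :=
    .fun_comp' w (hg.differentiableOn.differentiableAt
      (isOpen_ball.mem_nhds (mem_ball_zero_iff.2 (norm_punctureCover_lt_one hw)))) hcover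
  exact ((hcomp.fun_div (hcover.const_mul _) (multiplier_mul_punctureCover_ne_zero α w)).clog
    (hg.div_mem_slitPlane hw)).const_mul _

theorem norm_liftCorrection_le (hg : IsNearRotation α g) {w : ℂ} (hw : -3 < w.im) :
    ‖liftCorrection α g w‖ ≤ ‖punctureCover w‖ := by
  have hsub := hg.norm_punctureCover_div_sub_one_le hw
  have hlt := norm_punctureCover_lt_one hw
  have hlog := norm_log_one_add_half_le_self (hsub.trans (by linarith))
  rw [add_sub_cancel] at hlog
  rw [liftCorrection, norm_mul]
  calc _ ≤ 1 * (3 / 2 * (‖punctureCover w‖ / 20)) := by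
        gcongr
        · exact norm_one_div_two_pi_I_le
        · exact hlog.trans (by gcongr)
    _ ≤ ‖punctureCover w‖ := by linarith [norm_nonneg (punctureCover w)]

theorem isPeriodicPerturbation_liftCorrection (hg : IsNearRotation α g) :
    IsPeriodicPerturbation (liftCorrection α g) where
  differentiableOn w hw :=
    (hg.differentiableAt_liftCorrection (lt_trans (by norm_num) hw)).differentiableWithinAt
  periodic := periodic_liftCorrection α g
  norm_le w hw := by
    refine (hg.norm_liftCorrection_le (by linarith)).trans ?_
    have hsplit : -(2 * Real.pi * (w.im + 3)) = -(6 * Real.pi) + -(2 * Real.pi * w.im) := by ring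
    rw [norm_punctureCover, hsplit, Real.exp_add]
    gcongr
    exact exp_neg_six_pi_le

theorem punctureCover_add_liftCorrection (hg : IsNearRotation α g) {w : ℂ} (hw : -3 < w.im) :
    punctureCover (w + α + liftCorrection α g w) = g (punctureCover w) := by
  have hpi : (Real.pi : ℂ) ≠ 0 := ofReal_ne_zero.2 Real.pi_ne_zero
  have hexponent : 2 * Real.pi * I * (w + α + liftCorrection α g w + 3 * I) =
      2 * Real.pi * I * α + 2 * Real.pi * I * (w + 3 * I) +
        log (g (punctureCover w) / (multiplier α * punctureCover w)) := by
    rw [liftCorrection]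
    field
  rw [punctureCover, hexponent, exp_add, exp_add, exp_log (slitPlane_ne_zero
    (hg.div_mem_slitPlane hw)), ← multiplier, ← punctureCover,
    mul_div_cancel₀ _ (multiplier_mul_punctureCover_ne_zero α w)]

end IsNearRotation

theorem IsPeriodicPerturbation.comp_add_ofReal (hγ : IsPeriodicPerturbation γ) (x : ℝ) :
    IsPeriodicPerturbation fun w ↦ γ (w + x) where
  differentiableOn := hγ.differentiableOn.comp (by fun_prop) fun w hw ↦ by simpa using hw
  periodic := hγ.periodic.add_const x
  norm_le w hw := by simpa using hγ.norm_le (w + x) (by simpa using hw)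

end Lift

section Tracking

open Complex Set Metric

variable {β α : ℝ} {Q V w d t : ℂ} {γ ψ₁ ψ₀ δ : ℂ → ℂ} {a : ℤ}

/-- The lift with periodic part `γ` of a near-rotation of angle `-α`, based at `w - α` because the
crossing of the seam between two turns evaluates `γ` there. -/
noncomputable def renormLift (α : ℝ) (γ : ℂ → ℂ) (w : ℂ) : ℂ := w - α + γ (w - α)

/-- `V` is a flow time of `Q` within one turn, at which the corrected time `V + ψ₀ Q` represents `w`
modulo `1`. -/
structure IsTurnCoord (β : ℝ) (ψ₀ : ℂ → ℂ) (w Q V : ℂ) : Prop where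
  rotFlow_eq : rotFlow β V 0 = Q
  re_pos : 0 < V.re
  re_le : V.re ≤ β
  exists_int : ∃ m : ℤ, V + ψ₀ Q = w + m

theorem rotFlow_sub_period (hβ : 0 < β) (t Q : ℂ) : rotFlow β (t - β) Q = rotFlow β t Q := by
  simpa [sub_eq_add_neg] using rotFlow_add_mul_intCast hβ t (-1) Q

theorem lt_im_of_lt_norm_rotFlow_zero (hβ : 10 ^ 6 ≤ β) (hre : |t.re| ≤ 3) (him : 0 ≤ t.im)
    (h : 100 < ‖rotFlow β t 0‖) : 47 < t.im := by
  by_contra! hle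
  have ht : ‖t‖ ≤ 50 := by
    linarith [norm_le_abs_re_add_abs_im t, abs_of_nonneg him]
  linarith [norm_rotFlow_zero_le hβ (ht.trans (by norm_num))]

theorem mul_norm_le_im_rotFlow_zero (hβ : 10 ^ 6 ≤ β) (hre : |t.re| ≤ 3) (him : 30 ≤ t.im) :
    7 / 10 * ‖rotFlow β t 0‖ ≤ (rotFlow β t 0).im :=
  mul_norm_le_im_of_abs_re_le_im (abs_re_rotFlow_zero_le_im hβ hre him)

theorem re_nonpos_iff_re_rotTime_nonpos (hβ : 0 < β) (hQ : 0 < Q.im) :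
    Q.re ≤ 0 ↔ (rotTime β Q).re ≤ 0 := by
  have htime := abs_lt.1 (abs_rotTime_re_lt hβ hQ)
  constructor <;> intro h
  · by_contra! hpos
    have := re_rotFlow_zero_pos hβ hpos (by linarith)
    rw [rotFlow_rotTime hβ hQ] at this
    linarith
  · rw [← rotFlow_rotTime hβ hQ]
    exact re_rotFlow_zero_nonpos hβ h (by linarith)

theorem re_nonpos_iff_re_rotFlow_one_add_nonpos (hβ : 10 ^ 6 ≤ β) (hV : 0 < V.re)
    (hre : (V + (1 + d)).re ≤ β) (hd : ‖d‖ ≤ 1 / 10) (hQ : 0 < (rotFlow β V 0).im)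
    (hF : 0 < (rotFlow β (1 + d) (rotFlow β V 0)).im) :
    (rotFlow β V 0).re ≤ 0 ↔ (rotFlow β (1 + d) (rotFlow β V 0)).re ≤ 0 := by
  have hβ₀ : 0 < β := by linarith
  have hd' := abs_le.1 ((abs_re_le_norm d).trans hd)
  obtain ⟨j, hj⟩ := exists_int_of_rotFlow_zero_eq hβ₀ (rotFlow_rotTime hβ₀ hQ).symm
  have hjre := congrArg re hj
  rw [re_nonpos_iff_re_rotTime_nonpos hβ₀ hQ, re_nonpos_iff_re_rotTime_nonpos hβ₀ hF,
    rotTime_rotFlow_one_add hβ hQ hd]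
  simp only [add_re, one_re, re_ofReal_mul, intCast_re] at hre hjre ⊢
  refine ⟨fun h ↦ ?_, fun h ↦ by linarith⟩
  have hj₁ : (1 : ℝ) ≤ j := by
    have : (0 : ℝ) < j := pos_of_mul_pos_right (a := β) (by linarith) hβ₀.le
    exact_mod_cast Int.cast_pos.1 this
  nlinarith

theorem FatouGluing.norm_outer_le_one (h : FatouGluing β γ ψ₁ ψ₀) (hQ : 2 ≤ ‖Q‖) :
    ‖ψ₀ Q‖ ≤ 1 := by
  have := h.norm_outer_mul_le Q
  nlinarith [norm_nonneg (ψ₀ Q)]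

namespace IsTurnCoord

theorem abs_im_sub_im_le (h : IsTurnCoord β ψ₀ w Q V) (hg : FatouGluing β γ ψ₁ ψ₀)
    (hQ : 2 ≤ ‖Q‖) : |V.im - w.im| ≤ 1 := by
  obtain ⟨m, hm⟩ := h.exists_int
  have him := congrArg im hm
  rw [add_im, add_im, intCast_im, add_zero] at him
  rw [← him, sub_add_cancel_left, abs_neg]
  exact (abs_im_le_norm _).trans (hg.norm_outer_le_one hQ)

theorem rotFlow_one_add (h : IsTurnCoord β ψ₀ w Q V) (hd : ‖d‖ ≤ 1 / 10)
    (hre : (V + (1 + d)).re ≤ β) (heq : ψ₀ (rotFlow β (1 + d) Q) + d = ψ₀ Q) :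
    IsTurnCoord β ψ₀ w (rotFlow β (1 + d) Q) (V + (1 + d)) where
  rotFlow_eq := by rw [← h.rotFlow_eq, rotFlow_rotFlow]
  re_pos := by
    have := abs_le.1 ((abs_re_le_norm d).trans hd)
    rw [add_re, add_re, one_re]
    linarith [h.re_pos]
  re_le := hre
  exists_int := by
    obtain ⟨m, hm⟩ := h.exists_int
    refine ⟨m + 1, ?_⟩
    push_cast
    linear_combination hm + heq

theorem mul_norm_le_im (h : IsTurnCoord β ψ₀ w Q V) (hβ : 10 ^ 6 ≤ β) (hre : β - 3 ≤ V.re)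
    (him : 30 ≤ V.im) : 7 / 10 * ‖Q‖ ≤ Q.im := by
  rw [← h.rotFlow_eq, ← rotFlow_sub_period (by linarith)]
  refine mul_norm_le_im_rotFlow_zero hβ (abs_le.2 ⟨?_, ?_⟩) (by simpa using him)
  all_goals
    rw [sub_re, ofReal_re]
    linarith [h.re_le]

theorem rotTime_eq (h : IsTurnCoord β ψ₀ w Q V) (hβ : 10 ^ 6 ≤ β) (hre : β - 3 ≤ V.re) :
    rotTime β Q = V - β := by
  rw [← h.rotFlow_eq, ← rotFlow_sub_period (by linarith)]
  refine rotTime_rotFlow (by linarith) (abs_lt.2 ⟨?_, ?_⟩)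
  all_goals
    rw [sub_re, ofReal_re]
    linarith [h.re_le]

end IsTurnCoord

theorem ball_subset_wideCone_of_mul_norm_le (hQ : 0 < ‖Q‖) (him : 7 / 10 * ‖Q‖ ≤ Q.im) :
    ball Q (‖Q‖ / 20) ⊆ wideCone :=
  ball_subset_wideCone (by linarith)

namespace IsUnitStep

theorem outer_add_eq_of_re_le (hu : IsUnitStep β ψ₁ ψ₀ δ) (hg : FatouGluing β γ ψ₁ ψ₀)
    (hβ : 10 ^ 6 ≤ β) (h : IsTurnCoord β ψ₀ w Q V) (hQ : 100 < ‖Q‖)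
    (hre : (V + (1 + δ Q)).re ≤ β) : ψ₀ (perturbedStep β δ Q) + δ Q = ψ₀ Q := by
  rcases lt_or_ge Q.im (7 / 10 * ‖Q‖) with him | him
  · exact hu.outer_eq Q hQ him
  have hδ := hu.norm_le_one_div hQ
  have hcone := ball_subset_wideCone_of_mul_norm_le (by linarith) him
  have hQcone : Q ∈ wideCone := hcone (mem_ball_self (by linarith))
  have hFcone := hcone (rotFlow_one_add_mem_ball hβ hQ.le hδ)
  have hside := re_nonpos_iff_re_rotFlow_one_add_nonpos hβ h.re_pos hre hδ
  rw [h.rotFlow_eq] at hside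
  exact hg.outer_rotFlow_add_eq hβ hQcone hFcone
    (hside (im_pos_of_mem_wideCone hQcone) (im_pos_of_mem_wideCone hFcone)) hδ
    (hu.inner_eq Q hQ him)

theorem outer_perturbedStep_eq_of_lt_re (hu : IsUnitStep β ψ₁ ψ₀ δ) (hg : FatouGluing β γ ψ₁ ψ₀)
    (hβ : 10 ^ 6 ≤ β) (h : IsTurnCoord β ψ₀ w Q V) (hQ : 100 < ‖Q‖)
    (him : 7 / 10 * ‖Q‖ ≤ Q.im) (hre : β < (V + (1 + δ Q)).re) :
    ψ₀ (perturbedStep β δ Q) = ψ₀ Q - δ Q + γ (V - β + 1 + ψ₀ Q) := by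
  have hβ₀ : 0 < β := by linarith
  have hδ := hu.norm_le_one_div hQ
  have hδre := abs_le.1 ((abs_re_le_norm (δ Q)).trans hδ)
  have hcone := ball_subset_wideCone_of_mul_norm_le (by linarith) him
  have hQcone : Q ∈ wideCone := hcone (mem_ball_self (by linarith))
  have hFcone : perturbedStep β δ Q ∈ wideCone := hcone (rotFlow_one_add_mem_ball hβ hQ.le hδ)
  have hQim := im_pos_of_mem_wideCone hQcone
  rw [add_re, add_re, one_re] at hre
  have htime := h.rotTime_eq hβ (by linarith)
  have htimeF : rotTime β (perturbedStep β δ Q) = V - β + (1 + δ Q) := by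
    rw [perturbedStep, rotTime_rotFlow_one_add hβ hQim hδ, htime]
  have hQre : Q.re ≤ 0 := by
    rw [re_nonpos_iff_re_rotTime_nonpos hβ₀ hQim, htime, sub_re, ofReal_re]
    linarith [h.re_le]
  have hFre : 0 < (perturbedStep β δ Q).re := by
    rw [← not_le, re_nonpos_iff_re_rotTime_nonpos hβ₀ (im_pos_of_mem_wideCone hFcone), htimeF,
      add_re, sub_re, ofReal_re, add_re, one_re]
    linarith
  have hinner := eq_sub_of_add_eq (hu.inner_eq Q hQ him)
  rw [hg.outer_of_re_pos _ hFcone hFre, htimeF, hinner, hg.outer_of_re_nonpos _ hQcone hQre]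
  ring_nf

theorem isTurnCoord_renormLift (hu : IsUnitStep β ψ₁ ψ₀ δ) (hg : FatouGluing β γ ψ₁ ψ₀)
    (hβ : 10 ^ 6 ≤ β) (ha : β = a + α) (h : IsTurnCoord β ψ₀ w Q V) (hQ : 100 < ‖Q‖)
    (him : 7 / 10 * ‖Q‖ ≤ Q.im) (hre : β < (V + (1 + δ Q)).re) :
    IsTurnCoord β ψ₀ (renormLift α γ w) (perturbedStep β δ Q) (V + (1 + δ Q) - β) where
  rotFlow_eq := by
    rw [rotFlow_sub_period (by linarith), ← rotFlow_rotFlow, h.rotFlow_eq, perturbedStep]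
  re_pos := by
    rw [sub_re, ofReal_re]
    linarith
  re_le := by
    have := abs_le.1 ((abs_re_le_norm (δ Q)).trans (hu.norm_le_one_div hQ))
    rw [sub_re, ofReal_re, add_re, add_re, one_re]
    linarith [h.re_le]
  exists_int := by
    obtain ⟨m, hm⟩ := h.exists_int
    have hβa : (β : ℂ) = a + α := by exact_mod_cast ha
    have harg : V - β + 1 + ψ₀ Q = w - α + (m + 1 - a : ℤ) := by
      push_cast
      linear_combination hm - hβa
    have hper : γ (w - α + (m + 1 - a : ℤ)) = γ (w - α) := by
      simpa using hg.periodic.int_mul (m + 1 - a) (w - α)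
    refine ⟨m + 1 - a, ?_⟩
    rw [hu.outer_perturbedStep_eq_of_lt_re hg hβ h hQ him hre, harg, hper, renormLift]
    push_cast
    linear_combination hm - hβa

theorem lt_im_renormLift (hu : IsUnitStep β ψ₁ ψ₀ δ) (hg : FatouGluing β γ ψ₁ ψ₀)
    (hβ : 10 ^ 6 ≤ β) (h : IsTurnCoord β ψ₀ w Q V) (hQ : 100 < ‖Q‖) (hV : 30 ≤ V.im)
    (hre : β < (V + (1 + δ Q)).re) {w' : ℂ}
    (h' : IsTurnCoord β ψ₀ w' (perturbedStep β δ Q) (V + (1 + δ Q) - β)) : 40 < w'.im := by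
  have hδ := hu.norm_le_one_div hQ
  have hδre := abs_le.1 ((abs_re_le_norm (δ Q)).trans hδ)
  have hδim := abs_le.1 ((abs_im_le_norm (δ Q)).trans hδ)
  rw [add_re, add_re, one_re] at hre
  have hbig : 47 < (V - β).im := by
    refine lt_im_of_lt_norm_rotFlow_zero hβ (abs_le.2 ⟨?_, ?_⟩) ?_ ?_
    · rw [sub_re, ofReal_re]
      linarith
    · rw [sub_re, ofReal_re]
      linarith [h.re_le]
    · rw [sub_im, ofReal_im]
      linarith
    · rwa [rotFlow_sub_period (by linarith), h.rotFlow_eq]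
  have hsub := abs_le.1 (h'.abs_im_sub_im_le hg (by linarith [hu.mul_norm_le hβ hQ]))
  simp only [sub_im, add_im, one_im, ofReal_im] at hsub hbig
  linarith

theorem isTurnCoord_perturbedStep_or (hu : IsUnitStep β ψ₁ ψ₀ δ) (hg : FatouGluing β γ ψ₁ ψ₀)
    (hβ : 10 ^ 6 ≤ β) (ha : β = a + α) (h : IsTurnCoord β ψ₀ w Q V) (hQ : 100 < ‖Q‖)
    (hw : 40 < w.im) :
    IsTurnCoord β ψ₀ w (perturbedStep β δ Q) (V + (1 + δ Q)) ∨
      IsTurnCoord β ψ₀ (renormLift α γ w) (perturbedStep β δ Q) (V + (1 + δ Q) - β) ∧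
        40 < (renormLift α γ w).im := by
  have hδ := hu.norm_le_one_div hQ
  have hδre := abs_le.1 ((abs_re_le_norm (δ Q)).trans hδ)
  have hV := abs_le.1 (h.abs_im_sub_im_le hg (by linarith))
  rcases le_or_gt (V + (1 + δ Q)).re β with hre | hre
  · exact Or.inl (h.rotFlow_one_add hδ hre (hu.outer_add_eq_of_re_le hg hβ h hQ hre))
  have hnear : β - 3 ≤ V.re := by
    rw [add_re, add_re, one_re] at hre
    linarith
  have hturn := hu.isTurnCoord_renormLift hg hβ ha h hQ
    (h.mul_norm_le_im hβ hnear (by linarith)) hre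
  exact Or.inr ⟨hturn, hu.lt_im_renormLift hg hβ h hQ (by linarith) hre hturn⟩

theorem exists_iterate_isTurnCoord (hu : IsUnitStep β ψ₁ ψ₀ δ) (hg : FatouGluing β γ ψ₁ ψ₀)
    (hβ : 10 ^ 6 ≤ β) (ha : β = a + α) (hfar : ∀ k, 100 < ‖(perturbedStep β δ)^[k] Q‖)
    (h : IsTurnCoord β ψ₀ w Q V) (hw : 40 < w.im) :
    ∃ k V', IsTurnCoord β ψ₀ (renormLift α γ w) ((perturbedStep β δ)^[k] Q) V' ∧
      40 < (renormLift α γ w).im := by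
  by_contra! hnever
  have hstay : ∀ k : ℕ, ∃ V', IsTurnCoord β ψ₀ w ((perturbedStep β δ)^[k] Q) V' ∧
      9 / 10 * k ≤ V'.re := by
    intro k
    induction k with
    | zero => exact ⟨V, h, by simpa using h.re_pos.le⟩
    | succ k ih =>
      obtain ⟨V', hV', hre⟩ := ih
      have hδ := abs_le.1 ((abs_re_le_norm _).trans (hu.norm_le_one_div (hfar k)))
      rcases hu.isTurnCoord_perturbedStep_or hg hβ ha hV' (hfar k) hw with hsame | ⟨hnext, him⟩
      · rw [← Function.iterate_succ_apply' (perturbedStep β δ)] at hsame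
        refine ⟨_, hsame, ?_⟩
        rw [add_re, add_re, one_re]
        push_cast
        linarith
      · rw [← Function.iterate_succ_apply' (perturbedStep β δ)] at hnext
        exact absurd (hnever _ _ hnext) him.not_ge
  obtain ⟨k, hk⟩ := exists_nat_gt (10 / 9 * β)
  obtain ⟨V', hV', hre⟩ := hstay k
  linarith [hV'.re_le]

theorem lt_im_iterate_renormLift (hu : IsUnitStep β ψ₁ ψ₀ δ) (hg : FatouGluing β γ ψ₁ ψ₀)
    (hβ : 10 ^ 6 ≤ β) (ha : β = a + α) (hfar : ∀ k, 100 < ‖(perturbedStep β δ)^[k] Q‖)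
    (h : IsTurnCoord β ψ₀ w Q V) (hw : 40 < w.im) (n : ℕ) :
    40 < ((renormLift α γ)^[n] w).im := by
  suffices ∃ l V', IsTurnCoord β ψ₀ ((renormLift α γ)^[n] w) ((perturbedStep β δ)^[l] Q) V' ∧
      40 < ((renormLift α γ)^[n] w).im from this.choose_spec.choose_spec.2
  induction n with
  | zero => exact ⟨0, V, h, hw⟩
  | succ n ih =>
    obtain ⟨l, V', hV', him⟩ := ih
    have hfar' : ∀ k, 100 < ‖(perturbedStep β δ)^[k] ((perturbedStep β δ)^[l] Q)‖ := fun k ↦ by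
      rw [← Function.iterate_add_apply]
      exact hfar _
    obtain ⟨k, hnext⟩ := hu.exists_iterate_isTurnCoord hg hβ ha hfar' hV' him
    rw [Function.iterate_succ_apply']
    refine ⟨k + l, ?_⟩
    rwa [Function.iterate_add_apply]

end IsUnitStep

end Tracking

section Renormalization

open Complex Set Metric

variable {β α ρ R a t : ℝ} {Q w z ω : ℂ} {γ ψ₁ ψ₀ g : ℂ → ℂ}

theorem exists_intCast_add_sub_re_mem (β : ℝ) (w : ℂ) :
    ∃ m : ℤ, (w + m - β).re ∈ Ioc (-(6 / 5)) (-(1 / 5)) := by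
  refine ⟨⌊β - w.re - 1 / 5⌋, ?_⟩
  rw [sub_re, add_re, intCast_re, ofReal_re, mem_Ioc]
  have hle := Int.floor_le (β - w.re - 1 / 5)
  have hlt := Int.lt_floor_add_one (β - w.re - 1 / 5)
  constructor <;> linarith

theorem lt_norm_rotFlow_zero_of_lt_exp (hβ : 0 < β)
    (h : 1 + 2 * Real.pi / β * R < Real.exp (2 * Real.pi / β * ω.im)) :
    R < ‖rotFlow β ω 0‖ := by
  have : 0 < Real.pi := Real.pi_pos
  calc R = β / (2 * Real.pi) * (2 * Real.pi / β * R) := by field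
    _ < β / (2 * Real.pi) * (Real.exp (2 * Real.pi / β * ω.im) - 1) := by
        gcongr
        linarith
    _ ≤ ‖rotFlow β ω 0‖ := mul_exp_sub_one_le_norm_rotFlow_zero hβ ω

theorem FatouGluing.exists_isTurnCoord_add (hg : FatouGluing β γ ψ₁ ψ₀) (hβ : 10 ^ 6 ≤ β)
    (hre : ω.re ∈ Ioc (-(6 / 5)) (-(1 / 5))) (him : 30 ≤ ω.im)
    (hω : 100 < ‖rotFlow β (ω - 1) 0‖) :
    ∃ d, ‖d‖ ≤ 1 / 10 ∧ IsTurnCoord β ψ₀ (ω + β) (rotFlow β (ω + d) 0) (ω + d + β) := by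
  have hβ₀ : 0 < β := by linarith
  obtain ⟨hre₁, hre₂⟩ := hre
  have hre' : |(ω - 1).re| ≤ 3 := by
    rw [sub_re, one_re, abs_le]
    constructor <;> linarith
  have hcone := mul_norm_le_im_rotFlow_zero hβ hre' (by simpa using him)
  obtain ⟨d, hd, hzero⟩ := (hg.isTimeCorrectionAt_inner hω (by linarith)).exists_rotFlow_add_eq_zero
    hβ
  have hF := ball_subset_wideCone_of_mul_norm_le (by linarith) hcone
    (rotFlow_one_add_mem_ball hβ hω.le hd)
  rw [rotFlow_rotFlow, ← add_assoc, sub_add_cancel] at hzero hF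
  have hdre := abs_le.1 ((abs_re_le_norm d).trans hd)
  refine ⟨d, hd, ?_, ?_, ?_, 0, ?_⟩
  · rw [← rotFlow_sub_period hβ₀, add_sub_cancel_right]
  · rw [add_re, add_re, ofReal_re]
    linarith
  · rw [add_re, add_re, ofReal_re]
    linarith
  · have hnonpos : (rotFlow β (ω + d) 0).re ≤ 0 := by
      apply re_rotFlow_zero_nonpos hβ₀ <;> rw [add_re] <;> linarith
    rw [hg.outer_of_re_nonpos _ hF hnonpos]
    push_cast
    linear_combination hzero

theorem IsTurnCoord.of_add_intCast {V : ℂ} {m : ℤ} (h : IsTurnCoord β ψ₀ (w + m) Q V) :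
    IsTurnCoord β ψ₀ w Q V where
  rotFlow_eq := h.rotFlow_eq
  re_pos := h.re_pos
  re_le := h.re_le
  exists_int := by
    obtain ⟨n, hn⟩ := h.exists_int
    refine ⟨m + n, ?_⟩
    push_cast
    rw [hn, add_assoc]

theorem FatouGluing.exists_isTurnCoord (hg : FatouGluing β γ ψ₁ ψ₀) (hβ : 10 ^ 6 ≤ β)
    (hR : 100 ≤ R) (hw : 1 + 2 * Real.pi / β * (2 * R) < Real.exp (2 * Real.pi / β * w.im)) :
    40 < w.im ∧ ∃ Q V, R < ‖Q‖ ∧ IsTurnCoord β ψ₀ w Q V := by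
  have hβ₀ : 0 < β := by linarith
  have := Real.pi_pos
  obtain ⟨m, hm⟩ := exists_intCast_add_sub_re_mem β w
  obtain ⟨ω, hω⟩ : ∃ ω, ω = w + m - β := ⟨_, rfl⟩
  rw [← hω] at hm
  have him : (ω - 1).im = w.im := by simp [hω]
  have hpos : 0 < w.im := by
    have hone : 1 < Real.exp (2 * Real.pi / β * w.im) :=
      (lt_add_of_pos_right 1 (by positivity)).trans hw
    exact pos_of_mul_pos_right (Real.one_lt_exp_iff.1 hone) (by positivity)
  have hfar : 2 * R < ‖rotFlow β (ω - 1) 0‖ := lt_norm_rotFlow_zero_of_lt_exp hβ₀ (him ▸ hw)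
  have hre : |(ω - 1).re| ≤ 3 := by
    rw [sub_re, one_re, abs_le]
    constructor <;> linarith [hm.1, hm.2]
  have hlarge := lt_im_of_lt_norm_rotFlow_zero hβ hre (him ▸ hpos.le) (by linarith)
  rw [him] at hlarge
  have hωim : 30 ≤ ω.im := by
    rw [sub_im, one_im, sub_zero] at him
    linarith
  obtain ⟨d, hd, hturn⟩ := hg.exists_isTurnCoord_add hβ hm hωim (by linarith)
  have hnorm := mul_norm_le_norm_rotFlow_one_add (Q := rotFlow β (ω - 1) 0) hβ (by linarith) hd
  rw [rotFlow_rotFlow, ← add_assoc, sub_add_cancel] at hnorm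
  rw [hω, sub_add_cancel] at hturn
  exact ⟨by linarith, _, _, by linarith, hω ▸ hturn.of_add_intCast⟩

theorem IsNearRotation.iterate_punctureCover (hg : IsNearRotation (-α) g)
    (him : ∀ n, -3 < ((renormLift α fun x ↦ liftCorrection (-α) g (x + α))^[n] w).im) (n : ℕ) :
    g^[n] (punctureCover w) =
      punctureCover ((renormLift α fun x ↦ liftCorrection (-α) g (x + α))^[n] w) := by
  induction n with
  | zero => rfl
  | succ n ih =>
    rw [Function.iterate_succ_apply', Function.iterate_succ_apply', ih,
      ← hg.punctureCover_add_liftCorrection (him n), renormLift, sub_add_cancel, ofReal_neg,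
      ← sub_eq_add_neg]

theorem exists_punctureCover_eq (hz : z ≠ 0) : ∃ w, punctureCover w = z := by
  refine ⟨log z / (2 * Real.pi * I) - 3 * I, ?_⟩
  rw [punctureCover, sub_add_cancel, mul_div_cancel₀ _ two_pi_I_ne_zero, exp_log hz]

theorem exp_two_pi_div_mul_three_le (hβ : 10 ^ 6 ≤ β) :
    Real.exp (2 * Real.pi / β * 3) ≤ 2 := by
  rw [← Real.le_log_iff_exp_le two_pos]
  linarith [two_pi_div_le hβ, Real.log_two_gt_d9]

theorem div_lt_exp_of_exp_neg_lt_rpow (hβ : 10 ^ 6 ≤ β) (ht : 0 < t) {y : ℝ}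
    (hy : Real.exp (-(2 * Real.pi * (y + 3))) < t ^ β) :
    1 / (2 * t) < Real.exp (2 * Real.pi / β * y) := by
  have hβ₀ : 0 < β := by linarith
  have hroot : Real.exp (-(2 * Real.pi / β * (y + 3))) < t := by
    have := Real.rpow_lt_rpow (Real.exp_nonneg _) hy (inv_pos.2 hβ₀)
    rw [Real.rpow_rpow_inv ht.le hβ₀.ne', ← Real.exp_mul] at this
    convert this using 2
    ring
  have hinv : t⁻¹ < Real.exp (2 * Real.pi / β * y) * Real.exp (2 * Real.pi / β * 3) := by
    rwa [Real.exp_neg, inv_lt_comm₀ (Real.exp_pos _) ht, mul_add, Real.exp_add] at hroot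
  rw [one_div, mul_inv_rev, ← div_eq_mul_inv, div_lt_iff₀ two_pos]
  refine hinv.trans_le ?_
  gcongr
  exact exp_two_pi_div_mul_three_le hβ

theorem one_add_mul_lt_one_div (hβ : 0 < β) (hρ : 0 < ρ) (hρβ : ρ * β ≤ 100 * Real.pi) :
    1 + 2 * Real.pi / β * (2 * (100 / ρ)) < 1 / (2 * (ρ * β / 4000)) := by
  calc 1 + 2 * Real.pi / β * (2 * (100 / ρ)) = (ρ * β + 400 * Real.pi) / (ρ * β) := by
        field
    _ < 2000 / (ρ * β) := by
        gcongr
        linarith [Real.pi_lt_d2]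
    _ = 1 / (2 * (ρ * β / 4000)) := by
        field

namespace UniformlyStable

-- Every near-rotation `g` of angle `-Int.fract β` is a return map: its lift glues one turn of the
-- flow of period `β` to the next, and the glued flow is a near-rotation of angle `1 / β`.
theorem neg_fract (hs : UniformlyStable (1 / β) ρ) (hβ : 10 ^ 6 ≤ β) (hρ : 0 < ρ) :
    UniformlyStable (-Int.fract β) ((ρ * β / 4000) ^ β) := by
  intro g hg z hz n
  rcases eq_or_ne z 0 with rfl | hz₀
  · rw [Function.iterate_fixed hg.map_zero]
    exact mem_ball_self one_pos
  have hβ₀ : 0 < β := by linarith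
  obtain ⟨w, rfl⟩ := exists_punctureCover_eq hz₀
  rw [norm_punctureCover] at hz
  have hw := (one_add_mul_lt_one_div hβ₀ hρ (hs.mul_le hβ hρ)).trans
    (div_lt_exp_of_exp_neg_lt_rpow hβ (by positivity) hz)
  have hR : 100 ≤ 100 / ρ := by
    rw [le_div_iff₀ hρ]
    linarith [hs.le_one]
  obtain ⟨ψ₁, ψ₀, hglue⟩ := (hg.isPeriodicPerturbation_liftCorrection.comp_add_ofReal
    (Int.fract β)).exists_fatouGluing (β := β) (by linarith)
  obtain ⟨δ, hstep⟩ := hglue.exists_isUnitStep hβ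
  obtain ⟨hw₀, Q, V, hQ, hturn⟩ := hglue.exists_isTurnCoord hβ hR hw
  have him := hstep.lt_im_iterate_renormLift hglue hβ (Int.floor_add_fract β).symm
    (hs.lt_norm_iterate_perturbedStep hβ hρ hstep.toIsStepPerturbation hQ) hturn hw₀
  rw [hg.iterate_punctureCover fun k ↦ by linarith [him k], mem_ball_zero_iff]
  exact norm_punctureCover_lt_one (by linarith [him n])

theorem fract_one_div (hs : UniformlyStable a ρ) (ha : 10 ^ 6 ≤ 1 / a) (hρ : 0 < ρ) :
    UniformlyStable (Int.fract (1 / a)) ((ρ / (4000 * a)) ^ (1 / a)) := by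
  have h : UniformlyStable (1 / (1 / a)) ρ := by rwa [one_div_one_div]
  have hrad : ρ * (1 / a) / 4000 = ρ / (4000 * a) := by
    rw [mul_one_div, div_div, mul_comm a]
  exact hrad ▸ (h.neg_fract ha hρ).of_neg

end UniformlyStable

theorem irrN_antitone : Antitone IrrN := fun _ _ h _ ⟨hα, hα₁, hcf⟩ ↦
  ⟨hα, hα₁, fun n ↦ (Nat.cast_le.2 h).trans (hcf n)⟩

theorem UniformlyStable.isBrjuno (h : α ∈ IrrN (10 ^ 6)) (hρ : 0 < ρ) (hs : UniformlyStable α ρ) :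
    IsBrjuno α := by
  let r : ℕ → ℝ := fun n ↦
    n.rec ρ fun n r ↦ (r / (4000 * gaussIter α n)) ^ (1 / gaussIter α n)
  have hr : ∀ n, 0 < r n ∧ UniformlyStable (gaussIter α n) (r n) := by
    intro n
    induction n with
    | zero => exact ⟨hρ, hs⟩
    | succ n ih =>
      have hx := gaussIter_pos h n
      have hrn := ih.1
      have ha := (by norm_num : (10 : ℝ) ^ 6 ≤ (10 ^ 6 : ℕ)).trans (le_one_div_gaussIter h n)
      exact ⟨by positivity, ih.2.fract_one_div ha hrn⟩
  exact isBrjuno_of_radius_recursion (irrN_antitone (by norm_num) h) (by norm_num : (1 : ℝ) ≤ 4000)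
    (fun n ↦ (hr n).1) (fun n ↦ (hr n).2.le_one) fun _ ↦ rfl

end Renormalization

/-- For some `N`, for every non-Brjuno `α ∈ Irr_N` the forward orbit of the critical
point of `P_α` accumulates at the fixed point `0`. -/
theorem critical_orbit_accumulates_at_zero :
    ∃ N : ℕ, 0 < N ∧ ∀ α : ℝ, α ∈ IrrN N → ¬ IsBrjuno α →
      MapClusterPt (0 : ℂ) atTop (fun n : ℕ => (Pa α)^[n + 1] (cpa α)) := by
  refine ⟨10 ^ 6, by norm_num, fun α hα hBrjuno ↦ ?_⟩
  by_contra hcluster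
  obtain ⟨ρ, hρ, hstable⟩ := exists_uniformlyStable_of_not_mapClusterPt hcluster
  exact hBrjuno (hstable.isBrjuno hα hρ)
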